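/- Let X be a geodesic metric space which admits a disc-thickening with a quadratic isoperimetric inequality. Suppose that H²(φ(K)) = 0 whenever φ: K → (Z,d_Z) is a Lipschitz map with K ⊂ ℝ² compact and (Z,d_Z) an asymptotic subset of X. Then X is Gromov hyperbolic. -/

import Mathlib

open scoped NNReal ENNReal
open MeasureTheory Filter

universe u v

namespace SharpIsop

/-- The closed unit disc `D² ⊂ ℝ²`. -/
def D2 : Set (ℝ × ℝ) := {p | p.1 ^ 2 + p.2 ^ 2 ≤ 1}

/-- The length (total variation over `[0,1]`) of a curve `γ : [0,1] → X`. -/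
noncomputable def loopLength {X : Type u} [PseudoEMetricSpace X] (γ : ℝ → X) : ℝ :=
  (eVariationOn γ (Set.Icc 0 1)).toReal

/-- A Lipschitz loop in `X`: a Lipschitz map `γ : [0,1] → X` with `γ 0 = γ 1`. -/
def IsLipLoop {X : Type u} [PseudoEMetricSpace X] (γ : ℝ → X) : Prop :=
  (∃ K : ℝ≥0, LipschitzOnWith K γ (Set.Icc 0 1)) ∧ γ 0 = γ 1

/-- The metric (directional) derivative of `φ : ℝ² → X` at `x` in direction `v`,
defined via a `limsup` so that it is everywhere defined (and agrees a.e. with the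
limit when the latter exists). -/
noncomputable def mder {X : Type u} [PseudoMetricSpace X] (φ : ℝ × ℝ → X)
    (x v : ℝ × ℝ) : ℝ :=
  Filter.limsup (fun r : ℝ => dist (φ (x + r • v)) (φ x) / r) (nhdsWithin 0 (Set.Ioi 0))

/-- The Jacobian of a (semi)norm `s` on `ℝ²`:  `π / Leb²({v : s v ≤ 1})` if this set
has finite measure, `0` otherwise. -/
noncomputable def jac2 (s : ℝ × ℝ → ℝ) : ℝ :=
  if volume {v : ℝ × ℝ | s v ≤ 1} < ⊤ then
    Real.pi / (volume {v : ℝ × ℝ | s v ≤ 1}).toReal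
  else 0

/-- The parametrized (Hausdorff) area of a map `φ : D² → X`. -/
noncomputable def lipArea {X : Type u} [PseudoMetricSpace X] (φ : ℝ × ℝ → X) : ℝ :=
  ∫ x in D2, jac2 (mder φ x)

/-- `φ : D² → X` is a singular Lipschitz disc bounding the loop `γ : [0,1] → X`. -/
def BoundsLoop {X : Type u} [PseudoMetricSpace X] (φ : ℝ × ℝ → X) (γ : ℝ → X) : Prop :=
  (∃ K : ℝ≥0, LipschitzOnWith K φ D2) ∧
    ∀ s ∈ Set.Icc (0:ℝ) 1, φ (Real.cos (2 * Real.pi * s), Real.sin (2 * Real.pi * s)) = γ s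

/-- `g : [0, d x y] → X` is a geodesic from `x` to `y`. -/
def IsGeodesicSeg {X : Type u} [MetricSpace X] (x y : X) (g : ℝ → X) : Prop :=
  g 0 = x ∧ g (dist x y) = y ∧
    ∀ s ∈ Set.Icc (0:ℝ) (dist x y), ∀ t ∈ Set.Icc (0:ℝ) (dist x y),
      dist (g s) (g t) = |s - t|

/-- A geodesic metric space: any two points are joined by a geodesic. -/
def GeodesicSpace (X : Type u) [MetricSpace X] : Prop :=
  ∀ x y : X, ∃ g : ℝ → X, IsGeodesicSeg x y g

/-- Gromov hyperbolicity via δ-slim geodesic triangles. -/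
def GromovHyperbolic (X : Type u) [MetricSpace X] : Prop :=
  ∃ δ : ℝ, 0 ≤ δ ∧
    ∀ x y z : X, ∀ gxy gyz gzx : ℝ → X,
      IsGeodesicSeg x y gxy → IsGeodesicSeg y z gyz → IsGeodesicSeg z x gzx →
      ∀ s ∈ Set.Icc (0:ℝ) (dist x y),
        ∃ p ∈ gyz '' Set.Icc (0:ℝ) (dist y z) ∪ gzx '' Set.Icc (0:ℝ) (dist z x),
          dist (gxy s) p ≤ δ

/-- `L^∞(X)`: the Banach space of bounded real functions on `X` with sup norm. -/
abbrev Linfty (X : Type u) : Type u := lp (fun _ : X => ℝ) ⊤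

/-- The Kuratowski embedding `x ↦ d(x,·) − d(x₀,·)` of `X` into `L^∞(X)`. -/
noncomputable def kuratowski (X : Type u) [MetricSpace X] (x₀ : X) (x : X) : Linfty X :=
  ⟨fun y => dist x y - dist x₀ y, memℓp_infty ⟨dist x x₀, by
    rintro t ⟨y, rfl⟩
    simpa [Real.norm_eq_abs] using abs_dist_sub_le x x₀ y⟩⟩

/-- `Y` admits a quadratic isoperimetric inequality for curves (with singular
Lipschitz discs as fillings). -/
def QuadIsopSpace (Y : Type u) [MetricSpace Y] : Prop :=
  ∃ C > (0:ℝ), ∀ c : ℝ → Y, IsLipLoop c →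
    ∃ φ : ℝ × ℝ → Y, BoundsLoop φ c ∧ lipArea φ ≤ C * (loopLength c) ^ 2

/-- `X` admits a disc-thickening with a quadratic isoperimetric inequality. -/
def HasDiscThickeningQII (X : Type u) [MetricSpace X] : Prop :=
  ∃ (X' : Type u) (m : MetricSpace X') (ι : X → X'),
    letI := m
    CompleteSpace X' ∧ Isometry ι ∧
      EMetric.hausdorffEdist (Set.range ι) (Set.univ : Set X') ≠ ⊤ ∧
      QuadIsopSpace X'

/-- A compact metric space `Z` is an asymptotic subset of `X`: there are nonempty
compact subsets `Zₙ ⊂ X` and scales `rₙ → ∞` such that the rescaled spaces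
`(Zₙ, rₙ⁻¹ d_X)` converge to `Z` in the Gromov–Hausdorff sense (expressed here via
`ε`-isometries). -/
def IsAsymptoticSubset (X : Type u) [MetricSpace X] (Z : Type v) [MetricSpace Z] :
    Prop :=
  CompactSpace Z ∧
    ∃ (Zn : ℕ → Set X) (r : ℕ → ℝ),
      (∀ n, (Zn n).Nonempty ∧ IsCompact (Zn n)) ∧
      Filter.Tendsto r Filter.atTop Filter.atTop ∧
      ∀ ε > (0:ℝ), ∀ᶠ n in Filter.atTop,
        ∃ f : Zn n → Z,
          (∀ p q : Zn n, |dist (f p) (f q) - (r n)⁻¹ * dist (p : X) (q : X)| ≤ ε) ∧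
          ∀ z : Z, ∃ p : Zn n, dist z (f p) ≤ ε

open scoped Topology

/-!
A geodesic space which is not hyperbolic contains arbitrarily large fat bigons: a geodesic on
`[-r, r]` and a curve of length at most `68 * r` joining its endpoints outside of the ball of radius
`r` about its midpoint. Fill the resulting loop in the thickening by a disc of area at most a
constant times `r ^ 2`, and map it to the plane by the distance to an endpoint and the distance to
the geodesic, both rescaled by `r⁻¹`. This map has degree one over a fixed square, so that over most
points `y` of the square the fibre of the disc is a bounded number of signed points of total sign
one. As a function of `y` the signed fibre is of bounded variation, tested against Lipschitz
functions; by a maximal function estimate it is therefore Lipschitz on a subset of definite measure,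
with constants independent of `r`. This regularity survives in an ultralimit as `r → ∞`, where a
cluster of fibre points of nonzero total charge can be followed from `y` to `y'`, which singles out
a bi-Lipschitz section over a set of positive measure. The completion of its image is an
asymptotic subset onto which a compact planar set maps with positive `μH[2]`-measure.
-/

section Geodesics

variable {X : Type*} {K : ℝ≥0}

lemma lipschitzOnWith_congr {α : Type*} [PseudoEMetricSpace α] [PseudoEMetricSpace X] {f g : α → X}
    {s : Set α} (h : Set.EqOn g f s) (hf : LipschitzOnWith K f s) : LipschitzOnWith K g s :=
  fun a ha b hb => by simpa only [h ha, h hb] using hf ha hb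

lemma lipschitzOnWith_Icc_union [PseudoMetricSpace X] {f : ℝ → X} {a b c : ℝ}
    (hab : LipschitzOnWith K f (Set.Icc a b)) (hbc : LipschitzOnWith K f (Set.Icc b c)) :
    LipschitzOnWith K f (Set.Icc a c) := by
  have key : ∀ s ∈ Set.Icc a c, ∀ t ∈ Set.Icc a c, s ≤ t → dist (f s) (f t) ≤ K * dist s t := by
    intro s hs t ht hst
    rcases le_total t b with htb | htb
    · exact hab.dist_le_mul s ⟨hs.1, hst.trans htb⟩ t ⟨ht.1, htb⟩
    rcases le_total b s with hsb | hsb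
    · exact hbc.dist_le_mul s ⟨hsb, hs.2⟩ t ⟨htb, ht.2⟩
    calc dist (f s) (f t) ≤ dist (f s) (f b) + dist (f b) (f t) := dist_triangle _ _ _
      _ ≤ K * dist s b + K * dist b t :=
        add_le_add (hab.dist_le_mul s ⟨hs.1, hsb⟩ b ⟨hs.1.trans hsb, le_rfl⟩)
          (hbc.dist_le_mul b ⟨le_rfl, htb.trans ht.2⟩ t ⟨htb, ht.2⟩)
      _ = K * dist s t := by
        simp only [Real.dist_eq, abs_of_nonpos (sub_nonpos.2 hsb), abs_of_nonpos (sub_nonpos.2 htb),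
          abs_of_nonpos (sub_nonpos.2 hst)]
        ring
  refine LipschitzOnWith.of_dist_le_mul fun s hs t ht => ?_
  rcases le_total s t with hst | hst
  · exact key s hs t ht hst
  · rw [dist_comm (f s), dist_comm s]
    exact key t ht s hs hst

/-- `a` and `b` are the endpoints of a curve in `S` which is 1-Lipschitz on `[0, L]`, hence of
length at most `L`. -/
def JoinedInLength [PseudoMetricSpace X] (S : Set X) (L : ℝ) (a b : X) : Prop :=
  0 ≤ L ∧ ∃ c : ℝ → X, LipschitzOnWith 1 c (Set.Icc 0 L) ∧ Set.MapsTo c (Set.Icc 0 L) S ∧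
    c 0 = a ∧ c L = b

namespace JoinedInLength

variable [PseudoMetricSpace X] {S : Set X} {L L' : ℝ} {a b d : X}

lemma mono (h : JoinedInLength S L a b) (hL : L ≤ L') : JoinedInLength S L' a b := by
  obtain ⟨hL0, c, hc, hS, ha, hb⟩ := h
  have hmaps : Set.MapsTo (min · L) (Set.Icc 0 L') (Set.Icc 0 L) := fun t ht =>
    ⟨le_min ht.1 hL0, min_le_right _ _⟩
  refine ⟨hL0.trans hL, fun t => c (min t L), ?_, hS.comp hmaps, by simp [hL0, ha],
    by simp [hL, hb]⟩
  simpa [Function.comp_def] using hc.comp (LipschitzWith.id.min_const L).lipschitzOnWith hmaps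

lemma symm (h : JoinedInLength S L a b) : JoinedInLength S L b a := by
  obtain ⟨hL, c, hc, hS, ha, hb⟩ := h
  have hmaps : Set.MapsTo (L - ·) (Set.Icc 0 L) (Set.Icc 0 L) := fun t ht =>
    ⟨sub_nonneg.2 ht.2, sub_le_self _ ht.1⟩
  refine ⟨hL, fun t => c (L - t), ?_, hS.comp hmaps, by simpa using hb, by simpa using ha⟩
  simpa [Function.comp_def] using
    hc.comp (IsometryEquiv.subLeft L).isometry.lipschitz.lipschitzOnWith hmaps

lemma trans (h : JoinedInLength S L a b) (h' : JoinedInLength S L' b d) :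
    JoinedInLength S (L + L') a d := by
  obtain ⟨hL, c, hc, hS, ha, hb⟩ := h
  obtain ⟨hL', c', hc', hS', hb', hd⟩ := h'
  set e : ℝ → X := fun t => if t ≤ L then c t else c' (t - L)
  have he : Set.EqOn e c (Set.Icc 0 L) := fun t ht => if_pos ht.2
  have he' : Set.EqOn e (fun t => c' (t - L)) (Set.Icc L (L + L')) := by
    intro t ht
    rcases ht.1.eq_or_lt with rfl | htL
    · simp [e, hb, hb']
    · exact if_neg htL.not_ge
  have hmaps : Set.MapsTo (· - L) (Set.Icc L (L + L')) (Set.Icc 0 L') := fun t ht =>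
    ⟨sub_nonneg.2 ht.1, by linarith [ht.2]⟩
  have hlip : LipschitzOnWith 1 (fun t => c' (t - L)) (Set.Icc L (L + L')) := by
    simpa [Function.comp_def] using
      hc'.comp (IsometryEquiv.subRight L).isometry.lipschitz.lipschitzOnWith hmaps
  refine ⟨add_nonneg hL hL', e, lipschitzOnWith_Icc_union (b := L) (lipschitzOnWith_congr he hc)
    (lipschitzOnWith_congr he' hlip), fun t ht => ?_, by rw [he ⟨le_rfl, hL⟩, ha], ?_⟩
  · rcases le_total t L with htL | htL
    · rw [he ⟨ht.1, htL⟩]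
      exact hS ⟨ht.1, htL⟩
    · rw [he' ⟨htL, ht.2⟩]
      exact hS' (hmaps ⟨htL, ht.2⟩)
  · rw [he' ⟨by linarith, le_rfl⟩]
    simpa using hd

end JoinedInLength

/-- `g` is a geodesic, i.e. an isometric embedding, on the set `I` of parameters. -/
def IsGeodesicOn [PseudoMetricSpace X] (g : ℝ → X) (I : Set ℝ) : Prop :=
  ∀ s ∈ I, ∀ t ∈ I, dist (g s) (g t) = |s - t|

lemma IsGeodesicOn.lipschitzOnWith [PseudoMetricSpace X] {g : ℝ → X} {I : Set ℝ}
    (hg : IsGeodesicOn g I) : LipschitzOnWith 1 g I :=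
  LipschitzOnWith.of_dist_le_mul fun s hs t ht => by
    rw [hg s hs t ht, NNReal.coe_one, one_mul, Real.dist_eq]

lemma IsGeodesicOn.joinedInLength [PseudoMetricSpace X] {g : ℝ → X} {I : Set ℝ} [I.OrdConnected]
    {S : Set X} {s t : ℝ} (hg : IsGeodesicOn g I) (hs : s ∈ I) (ht : t ∈ I)
    (hS : ∀ v ∈ Set.uIcc s t, g v ∈ S) : JoinedInLength S |s - t| (g s) (g t) := by
  wlog hst : s ≤ t generalizing s t
  · rw [abs_sub_comm]
    exact (this ht hs (Set.uIcc_comm s t ▸ hS) (le_of_not_ge hst)).symm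
  rw [Set.uIcc_of_le hst] at hS
  rw [abs_sub_comm, abs_of_nonneg (sub_nonneg.2 hst)]
  have hmaps : Set.MapsTo (s + ·) (Set.Icc 0 (t - s)) (Set.Icc s t) := fun v hv =>
    ⟨le_add_of_nonneg_right hv.1, by linarith [hv.2]⟩
  refine ⟨sub_nonneg.2 hst, fun v => g (s + v), ?_, fun v hv => hS _ (hmaps hv), by simp, by simp⟩
  simpa [Function.comp_def] using (hg.lipschitzOnWith.mono (Set.Icc_subset I hs ht)).comp
    (IsometryEquiv.addLeft s).isometry.lipschitz.lipschitzOnWith hmaps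

end Geodesics

section FatTriangles

lemma image_const_sub_Icc_zero {X : Type*} (g : ℝ → X) (ℓ : ℝ) :
    (fun t => g (ℓ - t)) '' Set.Icc 0 ℓ = g '' Set.Icc 0 ℓ := by
  rw [← Function.comp_def g, Set.image_comp, Set.image_const_sub_Icc, sub_self, sub_zero]

variable {X : Type u} [MetricSpace X]

namespace IsGeodesicSeg

variable {x y : X} {g : ℝ → X}

lemma isGeodesicOn (h : IsGeodesicSeg x y g) : IsGeodesicOn g (Set.Icc 0 (dist x y)) := h.2.2

lemma reverse (h : IsGeodesicSeg x y g) : IsGeodesicSeg y x (fun t => g (dist x y - t)) := by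
  obtain ⟨h0, h1, hg⟩ := h
  refine ⟨by simpa using h1, by simp [dist_comm y x, h0], fun s hs t ht => ?_⟩
  rw [dist_comm y x] at hs ht
  rw [hg _ ⟨by linarith [hs.2], by linarith [hs.1]⟩ _ ⟨by linarith [ht.2], by linarith [ht.1]⟩,
    abs_sub_comm, sub_sub_sub_cancel_left]

lemma dist_left {s : ℝ} (h : IsGeodesicSeg x y g) (hs : s ∈ Set.Icc 0 (dist x y)) :
    dist x (g s) = s := by
  rw [← h.1, h.isGeodesicOn 0 ⟨le_rfl, dist_nonneg⟩ s hs, zero_sub, abs_neg, abs_of_nonneg hs.1]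

lemma subsegment {s : ℝ} (h : IsGeodesicSeg x y g) (hs : s ∈ Set.Icc 0 (dist x y)) :
    IsGeodesicSeg x (g s) g := by
  refine ⟨h.1, by rw [h.dist_left hs], ?_⟩
  rw [h.dist_left hs]
  exact fun a ha b hb => h.isGeodesicOn a ⟨ha.1, ha.2.trans hs.2⟩ b ⟨hb.1, hb.2.trans hs.2⟩

lemma right_mem_image (h : IsGeodesicSeg x y g) : y ∈ g '' Set.Icc 0 (dist x y) :=
  ⟨_, ⟨dist_nonneg, le_rfl⟩, h.2.1⟩

end IsGeodesicSeg

lemma GeodesicSpace.joinedInLength_compl_ball (hX : GeodesicSpace X) {p a b : X} {δ : ℝ}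
    (h : δ + dist a b ≤ dist a p) : JoinedInLength (Metric.ball p δ)ᶜ (dist a b) a b := by
  obtain ⟨g, hg⟩ := hX a b
  have hgS : ∀ v ∈ Set.uIcc 0 (dist a b), g v ∈ (Metric.ball p δ)ᶜ := by
    intro v hv
    rw [Set.uIcc_of_le dist_nonneg] at hv
    have hav := hg.dist_left hv
    have htri := dist_triangle a (g v) p
    rw [Set.mem_compl_iff, Metric.mem_ball, not_lt]
    linarith [hv.2]
  simpa [hg.1, hg.2.1] using
    hg.isGeodesicOn.joinedInLength ⟨le_rfl, dist_nonneg⟩ ⟨dist_nonneg, le_rfl⟩ hgS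

/-- Geodesic triangles with sides of length at most `R` are `δ`-slim. The sides `α` and `β` both
issue from the vertex `z`, so that the thin tripod picture needs no reversal of parameters. -/
def SlimUpTo (X : Type u) [MetricSpace X] (δ R : ℝ) : Prop :=
  ∀ ⦃x y z : X⦄ ⦃γ α β : ℝ → X⦄, IsGeodesicSeg x y γ → IsGeodesicSeg z x α → IsGeodesicSeg z y β →
    dist x y ≤ R → dist z x ≤ R → dist z y ≤ R → ∀ s ∈ Set.Icc 0 (dist x y),
      ∃ q ∈ α '' Set.Icc 0 (dist z x) ∪ β '' Set.Icc 0 (dist z y), dist (γ s) q ≤ δ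

lemma gromovHyperbolic_of_forall_slimUpTo {δ : ℝ} (hδ : 0 ≤ δ) (h : ∀ R, SlimUpTo X δ R) :
    GromovHyperbolic X := by
  refine ⟨δ, hδ, fun x y z γ β α hγ hβ hα s hs => ?_⟩
  obtain ⟨q, hq, hsq⟩ := h (max (dist x y) (max (dist z x) (dist z y))) hγ hα hβ.reverse
    (by simp) (by simp) (by simp) s hs
  rw [dist_comm z y, image_const_sub_Icc_zero, Set.union_comm] at hq
  exact ⟨q, hq, hsq⟩

lemma lt_of_not_slimUpTo {δ R : ℝ} (h : ¬ SlimUpTo X δ R) : δ < R := by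
  unfold SlimUpTo at h
  push Not at h
  obtain ⟨x, y, z, γ, α, β, hγ, hα, -, hxy, -, -, s, hs, hfar⟩ := h
  have hx := hfar x (Or.inl hα.right_mem_image)
  rw [dist_comm, hγ.dist_left hs] at hx
  linarith [hs.2]

/-- If every failure of slimness at scale `R` persisted with tripled defect at scale `2R`, the
defect `3ᵏδ` would eventually exceed the size `2ᵏR` of the triangles. -/
lemma exists_not_slimUpTo_and_slimUpTo (hX : ¬ GromovHyperbolic X) (R₀ : ℝ) :
    ∃ δ R : ℝ, R₀ ≤ δ ∧ 0 < δ ∧ ¬ SlimUpTo X δ R ∧ SlimUpTo X (3 * δ) (2 * R) := by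
  by_contra! hcon
  set δ := max R₀ 1
  have hδ : 1 ≤ δ := le_max_right _ _
  obtain ⟨R, hR⟩ : ∃ R, ¬ SlimUpTo X δ R := by
    by_contra! h
    exact hX (gromovHyperbolic_of_forall_slimUpTo (by linarith) h)
  have hfat : ∀ k : ℕ, ¬ SlimUpTo X (3 ^ k * δ) (2 ^ k * R) := by
    intro k
    induction k with
    | zero => simpa using hR
    | succ k ih =>
      have h3 : (1 : ℝ) ≤ 3 ^ k := one_le_pow₀ (by norm_num)
      rw [pow_succ', pow_succ', mul_assoc, mul_assoc]
      exact hcon _ _ (by nlinarith [le_max_left R₀ 1]) (by positivity) ih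
  obtain ⟨k, hk⟩ := ((tendsto_pow_atTop_atTop_of_one_lt (r := (3 / 2 : ℝ)) (by norm_num)).eventually
    (eventually_ge_atTop R)).exists
  rw [div_pow, le_div_iff₀ (by positivity)] at hk
  have hlt := lt_of_not_slimUpTo (hfat k)
  have h3 : (0 : ℝ) < 3 ^ k := by positivity
  nlinarith

lemma exists_dist_le_of_slimUpTo (hX : GeodesicSpace X) {z x y : X} {α β : ℝ → X}
    {R a m s₁ s₂ : ℝ} (hsl : SlimUpTo X a R) (hα : IsGeodesicSeg z x α)
    (hβ : IsGeodesicSeg z y β) (hRx : dist z x ≤ R) (hRy : dist z y ≤ R)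
    (h₁ : s₁ ∈ Set.Icc 0 (dist z x)) (h₂ : s₂ ∈ Set.Icc 0 (dist z y))
    (hR : dist (α s₁) (β s₂) ≤ R) (hm : m ∈ Set.Icc 0 s₁)
    (hfar : a + dist (α s₁) (β s₂) < dist (α m) (α s₁)) :
    ∃ t ∈ Set.Icc 0 (dist z y), dist (α m) (β t) ≤ a := by
  obtain ⟨σ, hσ⟩ := hX (α s₁) (β s₂)
  have hz₁ : dist z (α s₁) = s₁ := hα.dist_left h₁
  have hz₂ : dist z (β s₂) = s₂ := hβ.dist_left h₂
  obtain ⟨q, hq, hqa⟩ := hsl (hα.subsegment h₁) (hβ.subsegment h₂).reverse hσ.reverse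
    (hz₁.le.trans (h₁.2.trans hRx)) (by rw [dist_comm, hz₂]; exact h₂.2.trans hRy)
    ((dist_comm _ _).trans_le hR) m (by rwa [hz₁])
  rw [dist_comm (β s₂) (α s₁), dist_comm (β s₂) z, image_const_sub_Icc_zero,
    image_const_sub_Icc_zero] at hq
  rcases hq with ⟨t, ht, rfl⟩ | ⟨t, ht, rfl⟩
  · exact ⟨t, ⟨ht.1, ht.2.trans (hz₂.le.trans h₂.2)⟩, hqa⟩
  · have hσt := hσ.dist_left ht
    have htri := dist_triangle_right (α m) (α s₁) (σ t)
    linarith [ht.2]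

lemma joinedInLength_of_slimUpTo (hX : GeodesicSpace X) {z x y p : X} {α β : ℝ → X}
    {R a δ D T s₁ s₂ : ℝ} (hsl : SlimUpTo X a R)
    (hα : IsGeodesicSeg z x α) (hβ : IsGeodesicSeg z y β)
    (hαp : ∀ t ∈ Set.Icc 0 (dist z x), α t ∈ (Metric.ball p δ)ᶜ)
    (hβp : ∀ t ∈ Set.Icc 0 (dist z y), β t ∈ (Metric.ball p δ)ᶜ)
    (hRx : dist z x ≤ R) (hRy : dist z y ≤ R)
    (h₁ : s₁ ∈ Set.Icc 0 (dist z x)) (h₂ : s₂ ∈ Set.Icc 0 (dist z y))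
    (hDR : dist (α s₁) (β s₂) ≤ R) (hD : dist (α s₁) (β s₂) ≤ D) (ha : 0 ≤ a) (hT : a + D < T)
    (hTp : dist (α s₁) p + a + δ ≤ T) :
    JoinedInLength (Metric.ball p δ)ᶜ (2 * T + D + 2 * a) (α s₁) (β s₂) := by
  have hD0 : 0 ≤ D := dist_nonneg.trans hD
  have joinα : ∀ t ∈ Set.Icc 0 (dist z x),
      JoinedInLength (Metric.ball p δ)ᶜ |s₁ - t| (α s₁) (α t) := fun t ht =>
    hα.isGeodesicOn.joinedInLength h₁ ht fun v hv => hαp v (Set.uIcc_subset_Icc h₁ ht hv)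
  have joinβ : ∀ t ∈ Set.Icc 0 (dist z y),
      JoinedInLength (Metric.ball p δ)ᶜ |t - s₂| (β t) (β s₂) := fun t ht =>
    hβ.isGeodesicOn.joinedInLength ht h₂ fun v hv => hβp v (Set.uIcc_subset_Icc ht h₂ hv)
  rcases lt_or_ge s₁ T with hs | hs
  · have hα0 := joinα 0 ⟨le_rfl, dist_nonneg⟩
    have hβ0 := joinβ 0 ⟨le_rfl, dist_nonneg⟩
    rw [hα.1, sub_zero, abs_of_nonneg h₁.1] at hα0
    rw [hβ.1, zero_sub, abs_neg, abs_of_nonneg h₂.1] at hβ0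
    have := dist_triangle z (α s₁) (β s₂)
    rw [hα.dist_left h₁, hβ.dist_left h₂] at this
    exact (hα0.trans hβ0).mono (by linarith)
  · -- Far from `z`, slimness of the triangle `z, α s₁, β s₂` gives a bridge at `α (s₁ - T)`.
    have hm : s₁ - T ∈ Set.Icc 0 (dist z x) := ⟨by linarith, by linarith [h₁.2]⟩
    have hdT : dist (α (s₁ - T)) (α s₁) = T := by
      rw [hα.isGeodesicOn _ hm _ h₁, sub_sub_cancel_left, abs_neg, abs_of_nonneg (by linarith)]
    obtain ⟨t, ht, hta⟩ := exists_dist_le_of_slimUpTo hX hsl hα hβ hRx hRy h₁ h₂ hDR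
      (m := s₁ - T) ⟨hm.1, by linarith⟩ (by linarith)
    have hbridge := hX.joinedInLength_compl_ball (p := p) (δ := δ) (a := α (s₁ - T)) (b := β t)
      (by linarith [dist_triangle_right (α (s₁ - T)) (α s₁) p])
    have hα₁ := joinα _ hm
    have hβ₂ := joinβ t ht
    rw [sub_sub_cancel, abs_of_nonneg (by linarith)] at hα₁
    rw [← hβ.isGeodesicOn t ht s₂ h₂] at hβ₂
    have htri := dist_triangle4 (β t) (α (s₁ - T)) (α s₁) (β s₂)
    rw [dist_comm (β t) (α (s₁ - T))] at htri
    exact ((hα₁.trans hbridge).trans hβ₂).mono (by linarith)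

lemma joinedInLength_sides_of_slimUpTo (hX : GeodesicSpace X) {z x y p q₁ q₂ : X} {α β : ℝ → X}
    {R δ : ℝ} (hsl : SlimUpTo X (3 * δ) R) (hδ : 0 < δ) (hα : IsGeodesicSeg z x α)
    (hβ : IsGeodesicSeg z y β)
    (hp : ∀ q ∈ α '' Set.Icc 0 (dist z x) ∪ β '' Set.Icc 0 (dist z y), q ∈ (Metric.ball p δ)ᶜ)
    (hRx : 2 * dist z x ≤ R) (hRy : 2 * dist z y ≤ R)
    (hq₁ : q₁ ∈ α '' Set.Icc 0 (dist z x) ∪ β '' Set.Icc 0 (dist z y))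
    (hq₂ : q₂ ∈ α '' Set.Icc 0 (dist z x) ∪ β '' Set.Icc 0 (dist z y))
    (hd₁ : dist q₁ p ≤ 7 * δ) (hd₂ : dist q₂ p ≤ 7 * δ) :
    JoinedInLength (Metric.ball p δ)ᶜ (56 * δ) q₁ q₂ := by
  have hαp := fun t ht => hp (α t) (Or.inl ⟨t, ht, rfl⟩)
  have hβp := fun t ht => hp (β t) (Or.inr ⟨t, ht, rfl⟩)
  have hD : dist q₁ q₂ ≤ 14 * δ := by linarith [dist_triangle_right q₁ q₂ p]
  have mixed : ∀ a ∈ Set.Icc 0 (dist z x), ∀ b ∈ Set.Icc 0 (dist z y), dist (α a) p ≤ 7 * δ →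
      dist (α a) (β b) ≤ 14 * δ → JoinedInLength (Metric.ball p δ)ᶜ (56 * δ) (α a) (β b) := by
    intro a ha b hb hpa hab
    have hDR : dist (α a) (β b) ≤ R := by
      linarith [dist_triangle_left (α a) (β b) z, hα.dist_left ha, hβ.dist_left hb, ha.2, hb.2]
    exact (joinedInLength_of_slimUpTo hX (T := 18 * δ) hsl hα hβ hαp hβp
      (by linarith [dist_nonneg (x := z) (y := x)]) (by linarith [dist_nonneg (x := z) (y := y)])
      ha hb hDR hab (by linarith) (by linarith) (by linarith)).mono (by linarith)
  rcases hq₁ with ⟨a, ha, rfl⟩ | ⟨a, ha, rfl⟩ <;> rcases hq₂ with ⟨b, hb, rfl⟩ | ⟨b, hb, rfl⟩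
  · refine (hα.isGeodesicOn.joinedInLength ha hb
      fun t ht => hαp t (Set.uIcc_subset_Icc ha hb ht)).mono ?_
    rw [← hα.isGeodesicOn a ha b hb]
    linarith
  · exact mixed a ha b hb hd₁ hD
  · exact (mixed b hb a ha hd₂ (dist_comm (β a) (α b) ▸ hD)).symm
  · refine (hβ.isGeodesicOn.joinedInLength ha hb
      fun t ht => hβp t (Set.uIcc_subset_Icc ha hb ht)).mono ?_
    rw [← hβ.isGeodesicOn a ha b hb]
    linarith

lemma IsGeodesicOn.exists_joinedInLength_of_near_right (hX : GeodesicSpace X) {g : ℝ → X}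
    {ℓ s δ : ℝ} {A : Set X} (hg : IsGeodesicOn g (Set.Icc 0 ℓ)) (hℓ : g ℓ ∈ A)
    (hnear : ∀ t ∈ Set.Icc 0 ℓ, ∃ q ∈ A, dist (g t) q ≤ 3 * δ)
    (hδ : 0 < δ) (hs : 0 ≤ s) (hsℓ : s + δ ≤ ℓ) :
    ∃ q ∈ A, dist q (g s) ≤ 7 * δ ∧
      JoinedInLength (Metric.ball (g s) δ)ᶜ (6 * δ) (g (s + δ)) q := by
  have hs' : s ∈ Set.Icc 0 ℓ := ⟨hs, by linarith⟩
  have along : ∀ t ∈ Set.Icc (s + δ) ℓ,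
      JoinedInLength (Metric.ball (g s) δ)ᶜ (t - (s + δ)) (g (s + δ)) (g t) := by
    intro t ht
    rw [← abs_of_nonneg (sub_nonneg.2 ht.1), abs_sub_comm]
    refine hg.joinedInLength ⟨by linarith, hsℓ⟩ ⟨by linarith [ht.1], ht.2⟩ fun v hv => ?_
    rw [Set.uIcc_of_le ht.1] at hv
    rw [Set.mem_compl_iff, Metric.mem_ball, not_lt,
      hg v ⟨by linarith [hv.1], hv.2.trans ht.2⟩ s hs', abs_of_nonneg (by linarith [hv.1])]
    linarith [hv.1]
  rcases le_total (s + 4 * δ) ℓ with h4 | h4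
  · have h4' : s + 4 * δ ∈ Set.Icc 0 ℓ := ⟨by linarith, h4⟩
    obtain ⟨q, hq, hqd⟩ := hnear _ h4'
    have hd : dist (g (s + 4 * δ)) (g s) = 4 * δ := by
      rw [hg _ h4' s hs', add_sub_cancel_left, abs_of_nonneg (by linarith)]
    refine ⟨q, hq, by linarith [dist_triangle_left q (g s) (g (s + 4 * δ))], ?_⟩
    exact ((along _ ⟨by linarith, h4⟩).trans
      (hX.joinedInLength_compl_ball (p := g s) (by linarith))).mono (by linarith)
  · refine ⟨g ℓ, hℓ, ?_, (along ℓ ⟨hsℓ, le_rfl⟩).mono (by linarith)⟩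
    rw [hg ℓ ⟨by linarith, le_rfl⟩ s hs', abs_of_nonneg (by linarith)]
    linarith

lemma IsGeodesicOn.exists_joinedInLength_of_near_left (hX : GeodesicSpace X) {g : ℝ → X}
    {ℓ s δ : ℝ} {A : Set X} (hg : IsGeodesicOn g (Set.Icc 0 ℓ)) (h0 : g 0 ∈ A)
    (hnear : ∀ t ∈ Set.Icc 0 ℓ, ∃ q ∈ A, dist (g t) q ≤ 3 * δ)
    (hδ : 0 < δ) (hsδ : δ ≤ s) (hs : s ≤ ℓ) :
    ∃ q ∈ A, dist q (g s) ≤ 7 * δ ∧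
      JoinedInLength (Metric.ball (g s) δ)ᶜ (6 * δ) (g (s - δ)) q := by
  have maps : ∀ t ∈ Set.Icc 0 ℓ, ℓ - t ∈ Set.Icc 0 ℓ := fun t ht =>
    ⟨by linarith [ht.2], by linarith [ht.1]⟩
  have reversed : IsGeodesicOn (fun t => g (ℓ - t)) (Set.Icc 0 ℓ) := fun a ha b hb => by
    rw [hg _ (maps a ha) _ (maps b hb), sub_sub_sub_cancel_left, abs_sub_comm]
  have := reversed.exists_joinedInLength_of_near_right hX (A := A) (s := ℓ - s) (δ := δ)
    (by rwa [sub_self]) (fun t ht => hnear _ (maps t ht)) hδ (by linarith) (by linarith)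
  rwa [sub_sub_cancel, ← sub_sub, sub_sub_cancel] at this

lemma exists_geodesic_joinedInLength (hX : GeodesicSpace X) (hn : ¬ GromovHyperbolic X) (R₀ : ℝ) :
    ∃ r : ℝ, R₀ ≤ r ∧ 0 < r ∧ ∃ g : ℝ → X, IsGeodesicOn g (Set.Icc (-r) r) ∧
      JoinedInLength (Metric.ball (g 0) r)ᶜ (68 * r) (g r) (g (-r)) := by
  obtain ⟨δ, R, hR₀, hδ, hfat, hsl⟩ := exists_not_slimUpTo_and_slimUpTo hn R₀
  unfold SlimUpTo at hfat
  push Not at hfat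
  obtain ⟨x, y, z, γ, α, β, hγ, hα, hβ, hxy, hzx, hzy, s, hs, hfar⟩ := hfat
  set A := α '' Set.Icc 0 (dist z x) ∪ β '' Set.Icc 0 (dist z y)
  have hxA : x ∈ A := Or.inl hα.right_mem_image
  have hyA : y ∈ A := Or.inr hβ.right_mem_image
  have hA : A ⊆ (Metric.ball (γ s) δ)ᶜ := fun q hq => by
    rw [Set.mem_compl_iff, Metric.mem_ball']
    exact (hfar q hq).not_gt
  have hnear : ∀ t ∈ Set.Icc 0 (dist x y), ∃ q ∈ A, dist (γ t) q ≤ 3 * δ := by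
    have hR : 0 ≤ R := dist_nonneg.trans hxy
    exact hsl hγ hα hβ (by linarith) (by linarith) (by linarith)
  have hsx : δ < s := by
    rw [← hγ.dist_left hs, dist_comm]
    exact hfar x hxA
  have hsy : s + δ < dist x y := by
    have hy := hfar y hyA
    rw [← hγ.2.1, hγ.isGeodesicOn s hs _ ⟨dist_nonneg, le_rfl⟩,
      abs_of_nonpos (sub_nonpos.2 hs.2)] at hy
    linarith
  obtain ⟨q₂, hq₂, hd₂, hc₂⟩ := hγ.isGeodesicOn.exists_joinedInLength_of_near_right hX
    (hγ.2.1.symm ▸ hyA) hnear hδ hs.1 hsy.le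
  obtain ⟨q₁, hq₁, hd₁, hc₁⟩ := hγ.isGeodesicOn.exists_joinedInLength_of_near_left hX
    (hγ.1.symm ▸ hxA) hnear hδ hsx.le hs.2
  have hq := joinedInLength_sides_of_slimUpTo hX hsl hδ hα hβ hA (by linarith) (by linarith)
    hq₂ hq₁ hd₂ hd₁
  refine ⟨δ, hR₀, hδ, fun t => γ (s + t), fun a ha b hb => ?_, ?_⟩
  · rw [hγ.isGeodesicOn _ ⟨by linarith [ha.1], by linarith [ha.2]⟩ _
      ⟨by linarith [hb.1], by linarith [hb.2]⟩, add_sub_add_left_eq_sub]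
  · simp only [add_zero, ← sub_eq_add_neg]
    exact ((hc₂.trans hq).trans hc₁.symm).mono (by linarith)

end FatTriangles

section LineDerivSwap

variable {E : Type*} [NormedAddCommGroup E] [NormedSpace ℝ E]

lemma lineDeriv_eq_zero_of_notMem_tsupport {a : E → ℝ} {x : E} (hx : x ∉ tsupport a) (v : E) :
    lineDeriv ℝ a x v = 0 := by
  rw [(notMem_tsupport_iff_eventuallyEq.1 hx).lineDeriv_eq, Pi.zero_def, lineDeriv, deriv_const]

variable [FiniteDimensional ℝ E] [MeasurableSpace E] [BorelSpace E]
  {μ : Measure E} [μ.IsAddHaarMeasure] {a b : E → ℝ} {K L : ℝ≥0}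

lemma integrable_lineDeriv_of_hasCompactSupport (ha : LipschitzWith K a)
    (hs : HasCompactSupport a) (v : E) : Integrable (fun x => lineDeriv ℝ a x v) μ := by
  refine (integrableOn_iff_integrable_of_support_subset fun x hx => ?_).1
    ((ha.locallyIntegrable_lineDeriv (μ := μ) v).integrableOn_isCompact hs)
  exact not_not.1 fun h => hx (lineDeriv_eq_zero_of_notMem_tsupport h v)

lemma integrable_lipschitz_mul_lineDeriv (ha : LipschitzWith K a) (hb : LipschitzWith L b)
    (hs : HasCompactSupport a) (v : E) :
    Integrable (fun x => b x * lineDeriv ℝ a x v) μ := by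
  refine (integrableOn_iff_integrable_of_support_subset (s := tsupport a) fun x hx => ?_).1 ?_
  · exact not_not.1 fun h => hx (by simp only [lineDeriv_eq_zero_of_notMem_tsupport h v, mul_zero])
  · exact ((integrable_lineDeriv_of_hasCompactSupport ha hs v).integrableOn).continuousOn_mul
      hb.continuous.continuousOn hs

lemma integral_diffQuotient_mul_lineDeriv (ha : LipschitzWith K a) (hb : LipschitzWith L b)
    (hs : HasCompactSupport a) (v w : E) (t : ℝ) :
    ∫ x, (t⁻¹ • (b (x + t • w) - b x)) * lineDeriv ℝ a x v ∂μ =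
      -∫ x, (t⁻¹ • (a (x + t • -w) - a x)) * lineDeriv ℝ b x v ∂μ := by
  have by_parts {a' : E → ℝ} (ha' : LipschitzWith K a') (hs' : HasCompactSupport a') :
      ∫ x, b x * lineDeriv ℝ a' x v ∂μ = -∫ x, a' x * lineDeriv ℝ b x v ∂μ := by
    have := hb.integral_lineDeriv_mul_eq (μ := μ) ha' hs' v
    simp only [lineDeriv_neg, neg_mul, integral_neg] at this
    simp only [mul_comm _ (lineDeriv ℝ _ _ _), this, neg_neg]
  set a' : E → ℝ := fun x => a (x + t • -w) with ha'_def
  have ha' : LipschitzWith K a' :=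
    LipschitzWith.of_dist_le_mul fun x y => by
      simpa only [dist_add_right] using ha.dist_le_mul (x + t • -w) (y + t • -w)
  have hs' : HasCompactSupport a' := hs.comp_homeomorph (Homeomorph.addRight (t • -w))
  have hb' : LipschitzWith L fun x => b (x + t • w) :=
    LipschitzWith.of_dist_le_mul fun x y => by
      simpa only [dist_add_right] using hb.dist_le_mul (x + t • w) (y + t • w)
  have translate : ∫ x, b (x + t • w) * lineDeriv ℝ a x v ∂μ =
      ∫ x, b x * lineDeriv ℝ a' x v ∂μ := by
    rw [← integral_add_right_eq_self (fun x => b x * lineDeriv ℝ a' x v) (t • w)]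
    refine integral_congr_ae (.of_forall fun x => ?_)
    simp only [ha'_def, lineDeriv, smul_neg, add_assoc, add_left_comm (t • w), add_neg_cancel,
      add_zero]
  have hint {a' : E → ℝ} (ha' : LipschitzWith K a') (hs' : HasCompactSupport a') :
      Integrable (fun x => a' x * lineDeriv ℝ b x v) μ :=
    (ha'.continuous.integrable_of_hasCompactSupport hs').mul_bdd (c := L * ‖v‖)
      (aestronglyMeasurable_lineDeriv hb.continuous _)
      (.of_forall fun _ ↦ norm_lineDeriv_le_of_lipschitz ℝ hb)
  simp only [smul_eq_mul, mul_assoc, sub_mul]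
  rw [integral_const_mul, integral_const_mul,
    integral_sub (integrable_lipschitz_mul_lineDeriv ha hb' hs v)
      (integrable_lipschitz_mul_lineDeriv ha hb hs v),
    integral_sub (hint ha' hs') (hint ha hs), translate, by_parts ha' hs', by_parts ha hs]
  ring

lemma integral_lineDeriv_mul_lineDeriv_comm (ha : LipschitzWith K a) (hb : LipschitzWith L b)
    (hs : HasCompactSupport a) (v w : E) :
    ∫ x, lineDeriv ℝ b x w * lineDeriv ℝ a x v ∂μ =
      ∫ x, lineDeriv ℝ a x w * lineDeriv ℝ b x v ∂μ := by
  set S := Metric.cthickening ‖w‖ (tsupport a)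
  have hS : IsCompact S := IsCompact.cthickening hs
  have hsub : tsupport a ⊆ S := Metric.self_subset_cthickening _
  set bv := S.indicator fun x => lineDeriv ℝ b x v with bv_def
  have hbv : Integrable bv μ :=
    ((hb.locallyIntegrable_lineDeriv v).integrableOn_isCompact hS).integrable_indicator
      hS.measurableSet
  have mul_bv {f : E → ℝ} (hf : ∀ x ∉ S, f x = 0) (x : E) :
      f x * bv x = f x * lineDeriv ℝ b x v := by
    by_cases hx : x ∈ S
    · rw [bv_def, Set.indicator_of_mem hx]
    · rw [hf x hx, zero_mul, zero_mul]
  have limit_b := hb.integral_inv_smul_sub_mul_tendsto_integral_lineDeriv_mul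
    (integrable_lineDeriv_of_hasCompactSupport ha hs v (μ := μ)) w
  have limit_a := (ha.integral_inv_smul_sub_mul_tendsto_integral_lineDeriv_mul hbv (-w)).neg
  have limit_eq : -∫ x, lineDeriv ℝ a x (-w) * bv x ∂μ =
      ∫ x, lineDeriv ℝ a x w * lineDeriv ℝ b x v ∂μ := by
    simp only [mul_bv fun x hx => lineDeriv_eq_zero_of_notMem_tsupport (mt (@hsub x) hx) (-w)]
    simp only [lineDeriv_neg, neg_mul, integral_neg, neg_neg]
  have eventually_eq : (fun t : ℝ => -∫ x, (t⁻¹ • (a (x + t • -w) - a x)) * bv x ∂μ) =ᶠ[𝓝[>] 0]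
      fun t => ∫ x, (t⁻¹ • (b (x + t • w) - b x)) * lineDeriv ℝ a x v ∂μ := by
    filter_upwards [Ioc_mem_nhdsGT one_pos] with t ht
    rw [integral_diffQuotient_mul_lineDeriv ha hb hs]
    refine congrArg Neg.neg (integral_congr_ae (.of_forall (mul_bv fun x hx => ?_)))
    have hx_add : x + t • -w ∉ tsupport a := fun h => hx <| by
      refine Metric.mem_cthickening_of_dist_le x _ _ _ h ?_
      rw [dist_self_add_right, norm_smul, norm_neg, Real.norm_of_nonneg ht.1.le]
      exact mul_le_of_le_one_left (norm_nonneg w) ht.2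
    rw [image_eq_zero_of_notMem_tsupport hx_add,
      image_eq_zero_of_notMem_tsupport (mt (@hsub x) hx), sub_zero, smul_zero]
  exact tendsto_nhds_unique limit_b (limit_eq ▸ limit_a.congr' eventually_eq)

end LineDerivSwap

section Jacobian

/-- The Jacobian determinant `∂₁a ∂₂b - ∂₂a ∂₁b` of the plane map `(a, b)`, that is, the density
of the form `da ∧ db`. -/
noncomputable def jacobian (a b : ℝ × ℝ → ℝ) (x : ℝ × ℝ) : ℝ :=
  fderiv ℝ a x (1, 0) * fderiv ℝ b x (0, 1) - fderiv ℝ a x (0, 1) * fderiv ℝ b x (1, 0)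

lemma det_prod_eq (A B : ℝ × ℝ →L[ℝ] ℝ) :
    (A.prod B).det = A (1, 0) * B (0, 1) - A (0, 1) * B (1, 0) := by
  rw [ContinuousLinearMap.det, ← LinearMap.det_toMatrix (Module.Basis.finTwoProd ℝ),
    Matrix.det_fin_two]
  simp [LinearMap.toMatrix_apply]

variable {a b c : ℝ × ℝ → ℝ} {x : ℝ × ℝ}

lemma jacobian_self (a : ℝ × ℝ → ℝ) (x : ℝ × ℝ) : jacobian a a x = 0 := by
  rw [jacobian, mul_comm, sub_self]

lemma jacobian_swap (a b : ℝ × ℝ → ℝ) (x : ℝ × ℝ) : jacobian a b x = -jacobian b a x := by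
  unfold jacobian; ring

lemma jacobian_mul_left (ha : DifferentiableAt ℝ a x) (hc : DifferentiableAt ℝ c x) :
    jacobian (fun x => a x * c x) b x = a x * jacobian c b x + c x * jacobian a b x := by
  rw [jacobian, fderiv_fun_mul ha hc]
  simp only [add_apply, smul_apply, smul_eq_mul, jacobian]
  ring

lemma jacobian_sub_left (ha : DifferentiableAt ℝ a x) (hc : DifferentiableAt ℝ c x) :
    jacobian (fun x => a x - c x) b x = jacobian a b x - jacobian c b x := by
  rw [jacobian, fderiv_fun_sub ha hc]
  simp only [sub_apply, jacobian]
  ring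

lemma jacobian_comp_left {k : ℝ → ℝ} (ha : DifferentiableAt ℝ a x)
    (hk : DifferentiableAt ℝ k (a x)) :
    jacobian (fun x => k (a x)) b x = deriv k (a x) * jacobian a b x := by
  have h : fderiv ℝ (fun x => k (a x)) x = deriv k (a x) • fderiv ℝ a x :=
    (hk.hasDerivAt.comp_hasFDerivAt x ha.hasFDerivAt).fderiv
  rw [jacobian, h]
  simp only [smul_apply, smul_eq_mul, jacobian]
  ring

lemma jacobian_mul_comp_self {k : ℝ → ℝ} (dc : DifferentiableAt ℝ c x)
    (da : DifferentiableAt ℝ a x) (dk : Differentiable ℝ k) :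
    jacobian (fun x => c x * k (a x)) a x = k (a x) * jacobian c a x := by
  have dka : DifferentiableAt ℝ (fun x => k (a x)) x := (dk _).comp x da
  rw [jacobian_mul_left dc dka, jacobian_comp_left da (dk _), jacobian_self]
  ring

lemma jacobian_congr {a' b' : ℝ × ℝ → ℝ} (ha : a =ᶠ[𝓝 x] a') (hb : b =ᶠ[𝓝 x] b') :
    jacobian a b x = jacobian a' b' x := by
  rw [jacobian, ha.fderiv_eq, hb.fderiv_eq, jacobian]

lemma measurable_jacobian : Measurable (jacobian a b) :=
  ((measurable_fderiv_apply_const ℝ a _).mul (measurable_fderiv_apply_const ℝ b _)).sub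
    ((measurable_fderiv_apply_const ℝ a _).mul (measurable_fderiv_apply_const ℝ b _))

lemma abs_jacobian_le {A B : ℝ≥0} (ha : LipschitzWith A a) (hb : LipschitzWith B b)
    (x : ℝ × ℝ) : |jacobian a b x| ≤ 2 * A * B := by
  have fderiv_le {f : ℝ × ℝ → ℝ} {C : ℝ≥0} (hf : LipschitzWith C f) {v : ℝ × ℝ} (hv : ‖v‖ ≤ 1) :
      |fderiv ℝ f x v| ≤ C :=
    (ContinuousLinearMap.le_of_opNorm_le_of_le _ (norm_fderiv_le_of_lipschitz ℝ hf) hv).trans_eq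
      (mul_one _)
  have norm_e₁ : ‖((1 : ℝ), (0 : ℝ))‖ ≤ 1 := by simp [Prod.norm_def]
  have norm_e₂ : ‖((0 : ℝ), (1 : ℝ))‖ ≤ 1 := by simp [Prod.norm_def]
  calc |jacobian a b x|
      ≤ |fderiv ℝ a x (1, 0)| * |fderiv ℝ b x (0, 1)|
        + |fderiv ℝ a x (0, 1)| * |fderiv ℝ b x (1, 0)| := by
        rw [← abs_mul, ← abs_mul]; exact abs_sub _ _
    _ ≤ A * B + A * B := by gcongr <;> apply fderiv_le <;> assumption
    _ = 2 * A * B := by ring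

lemma jacobian_ae_eq_lineDeriv {A B : ℝ≥0} (ha : LipschitzWith A a) (hb : LipschitzWith B b) :
    jacobian a b =ᵐ[volume] fun x => lineDeriv ℝ a x (1, 0) * lineDeriv ℝ b x (0, 1) -
      lineDeriv ℝ a x (0, 1) * lineDeriv ℝ b x (1, 0) := by
  filter_upwards [ha.ae_differentiableAt (μ := volume), hb.ae_differentiableAt (μ := volume)]
    with x dax dbx
  simp only [dax.lineDeriv_eq_fderiv, dbx.lineDeriv_eq_fderiv, jacobian]

lemma integrable_lineDeriv_mul_lineDeriv {A B : ℝ≥0} (ha : LipschitzWith A a)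
    (hb : LipschitzWith B b) (hs : HasCompactSupport a) (v w : ℝ × ℝ) :
    Integrable fun x => lineDeriv ℝ a x v * lineDeriv ℝ b x w :=
  (integrable_lineDeriv_of_hasCompactSupport ha hs v).mul_bdd (c := B * ‖w‖)
    (aestronglyMeasurable_lineDeriv hb.continuous _)
    (.of_forall fun _ ↦ norm_lineDeriv_le_of_lipschitz ℝ hb)

lemma integral_jacobian_eq_zero {A B : ℝ≥0} (ha : LipschitzWith A a) (hb : LipschitzWith B b)
    (hs : HasCompactSupport a) : ∫ x, jacobian a b x = 0 := by
  rw [integral_congr_ae (jacobian_ae_eq_lineDeriv ha hb),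
    integral_sub (integrable_lineDeriv_mul_lineDeriv ha hb hs _ _)
      (integrable_lineDeriv_mul_lineDeriv ha hb hs _ _), sub_eq_zero,
    ← integral_lineDeriv_mul_lineDeriv_comm ha hb hs]
  simp only [mul_comm]

end Jacobian

section BddLipschitz

/-- Bounded Lipschitz functions, the coefficients of metric currents. -/
def BddLipschitz {α : Type*} [PseudoMetricSpace α] (f : α → ℝ) : Prop :=
  (∃ C : ℝ≥0, LipschitzWith C f) ∧ ∃ M : ℝ, ∀ x, |f x| ≤ M

variable {α : Type*} [PseudoMetricSpace α] {f g : α → ℝ}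

lemma bddLipschitz_const (c : ℝ) : BddLipschitz fun _ : α => c :=
  ⟨⟨0, LipschitzWith.const c⟩, |c|, fun _ => le_rfl⟩

lemma BddLipschitz.continuous (hf : BddLipschitz f) : Continuous f :=
  hf.1.choose_spec.continuous

lemma BddLipschitz.ae_differentiableAt {f : ℝ × ℝ → ℝ} (hf : BddLipschitz f) :
    ∀ᵐ x, DifferentiableAt ℝ f x :=
  hf.1.choose_spec.ae_differentiableAt

lemma BddLipschitz.comp {β : Type*} [PseudoMetricSpace β] {h : β → α} (hf : BddLipschitz f)
    (hh : ∃ C : ℝ≥0, LipschitzWith C h) : BddLipschitz fun x => f (h x) := by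
  obtain ⟨⟨C, hC⟩, M, hM⟩ := hf
  obtain ⟨C', hC'⟩ := hh
  exact ⟨⟨_, hC.comp hC'⟩, M, fun x => hM _⟩

lemma BddLipschitz.sub (hf : BddLipschitz f) (hg : BddLipschitz g) :
    BddLipschitz fun x => f x - g x := by
  obtain ⟨⟨C, hC⟩, M, hM⟩ := hf
  obtain ⟨⟨C', hC'⟩, M', hM'⟩ := hg
  exact ⟨⟨_, hC.sub hC'⟩, M + M', fun x => (abs_sub _ _).trans (add_le_add (hM x) (hM' x))⟩

lemma BddLipschitz.mul (hf : BddLipschitz f) (hg : BddLipschitz g) :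
    BddLipschitz fun x => f x * g x := by
  obtain ⟨⟨C, hC⟩, M, hM⟩ := hf
  obtain ⟨⟨C', hC'⟩, M', hM'⟩ := hg
  replace hM (x : α) : |f x| ≤ |M| := (hM x).trans (le_abs_self _)
  replace hM' (x : α) : |g x| ≤ |M'| := (hM' x).trans (le_abs_self _)
  refine ⟨⟨(|M| * C' + |M'| * C).toNNReal, LipschitzWith.of_dist_le_mul fun x y => ?_⟩,
    |M| * |M'|, fun x => ?_⟩
  · have dist_f := hC.dist_le_mul x y
    have dist_g := hC'.dist_le_mul x y
    rw [Real.coe_toNNReal _ (by positivity)]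
    rw [Real.dist_eq] at *
    calc |f x * g x - f y * g y|
        = |f x * (g x - g y) + g y * (f x - f y)| := by ring_nf
      _ ≤ |f x| * |g x - g y| + |g y| * |f x - f y| := by
          rw [← abs_mul, ← abs_mul]; exact abs_add_le _ _
      _ ≤ |M| * (C' * dist x y) + |M'| * (C * dist x y) := add_le_add
          (mul_le_mul (hM x) dist_g (abs_nonneg _) (abs_nonneg _))
          (mul_le_mul (hM' y) dist_f (abs_nonneg _) (abs_nonneg _))
      _ = (|M| * C' + |M'| * C) * dist x y := by ring
  · rw [abs_mul]
    exact mul_le_mul (hM x) (hM' x) (abs_nonneg _) (abs_nonneg _)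

lemma bddLipschitz_of_contDiff {f : ℝ → ℝ} (hf : ContDiff ℝ 1 f)
    (hs : HasCompactSupport f) : BddLipschitz f :=
  ⟨ContDiff.lipschitzWith_of_hasCompactSupport hs hf one_ne_zero,
    hs.exists_bound_of_continuous hf.continuous⟩

end BddLipschitz

section RadialRetraction

variable {E : Type*} [NormedAddCommGroup E] [NormedSpace ℝ E]

/-- The radial retraction of a normed space onto its closed unit ball. -/
noncomputable def radialRetraction (x : E) : E := (max 1 ‖x‖)⁻¹ • x

lemma norm_radialRetraction_le (x : E) : ‖radialRetraction x‖ ≤ 1 := by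
  rw [radialRetraction, norm_smul, norm_inv, Real.norm_of_nonneg (by positivity),
    inv_mul_le_one₀ (by positivity)]
  exact le_max_right _ _

lemma norm_radialRetraction {x : E} (hx : 1 ≤ ‖x‖) : ‖radialRetraction x‖ = 1 := by
  rw [radialRetraction, max_eq_right hx, norm_smul, norm_inv, norm_norm,
    inv_mul_cancel₀ (by positivity)]

lemma radialRetraction_of_norm_le {x : E} (hx : ‖x‖ ≤ 1) : radialRetraction x = x := by
  rw [radialRetraction, max_eq_left hx, inv_one, one_smul]

lemma lipschitzWith_radialRetraction : LipschitzWith 2 (radialRetraction : E → E) := by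
  refine LipschitzWith.of_dist_le_mul fun x y => ?_
  set p := max 1 ‖x‖ with hp
  set q := max 1 ‖y‖ with hq
  have hp_one : 1 ≤ p := le_max_left _ _
  have hq_pos : 0 < q := one_pos.trans_le (le_max_left _ _)
  have hpq : |q - p| ≤ dist x y := by
    refine (abs_max_sub_max_le_max _ _ _ _).trans (max_le (by simp) ?_)
    rw [dist_comm, dist_eq_norm]
    exact abs_norm_sub_norm_le _ _
  have sub_eq : p⁻¹ • x - q⁻¹ • y = p⁻¹ • (x - y + (q - p) • q⁻¹ • y) := by
    rw [sub_smul, smul_inv_smul₀ hq_pos.ne', sub_add_sub_cancel, smul_sub,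
      inv_smul_smul₀ (by positivity)]
  rw [dist_eq_norm, radialRetraction, radialRetraction, ← hp, ← hq, sub_eq, norm_smul, norm_inv,
    Real.norm_of_nonneg (by positivity), inv_mul_le_iff₀ (by positivity)]
  calc ‖x - y + (q - p) • q⁻¹ • y‖
      ≤ ‖x - y‖ + |q - p| * ‖radialRetraction y‖ :=
        (norm_add_le _ _).trans_eq (by rw [norm_smul, Real.norm_eq_abs]; rfl)
    _ ≤ dist x y + dist x y * 1 := by
        rw [dist_eq_norm] at *
        gcongr
        exact norm_radialRetraction_le y
    _ ≤ p * (2 * dist x y) := by nlinarith [dist_nonneg (x := x) (y := y)]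

end RadialRetraction

section UnitDisc

/-- The open unit disc of the Euclidean plane. -/
def unitDisc : Set (ℝ × ℝ) := {p | p.1 ^ 2 + p.2 ^ 2 < 1}

/-- The unit circle of the Euclidean plane. -/
def unitCircle : Set (ℝ × ℝ) := {p | p.1 ^ 2 + p.2 ^ 2 = 1}

/-- The radial retraction of the plane onto `D2`. The product norm of `ℝ × ℝ` is not Euclidean,
hence the detour through `ℂ`. -/
noncomputable def discRetraction (x : ℝ × ℝ) : ℝ × ℝ :=
  Complex.equivRealProdCLM (radialRetraction (Complex.equivRealProdCLM.symm x))

lemma isOpen_unitDisc : IsOpen unitDisc := isOpen_lt (by fun_prop) (by fun_prop)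

lemma measurableSet_unitDisc : MeasurableSet unitDisc := isOpen_unitDisc.measurableSet

lemma isClosed_D2 : IsClosed D2 := isClosed_le (by fun_prop) (by fun_prop)

lemma unitDisc_subset_D2 : unitDisc ⊆ D2 :=
  fun x (hx : x.1 ^ 2 + x.2 ^ 2 < 1) => hx.le

lemma D2_diff_unitDisc : D2 \ unitDisc = unitCircle := by
  ext x
  exact ⟨fun h => le_antisymm h.1 (not_lt.1 h.2), fun h => ⟨le_of_eq h, not_lt.2 (ge_of_eq h)⟩⟩

lemma D2_subset_closedBall : D2 ⊆ Metric.closedBall 0 1 := by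
  intro p hp
  have hp : p.1 ^ 2 + p.2 ^ 2 ≤ 1 := hp
  rw [mem_closedBall_zero_iff, Prod.norm_def, sup_le_iff]
  constructor <;> apply abs_le_of_sq_le_sq _ zero_le_one <;>
    nlinarith [sq_nonneg p.1, sq_nonneg p.2]

lemma volume_unitDisc_lt_top : volume unitDisc < ⊤ :=
  (measure_mono (unitDisc_subset_D2.trans D2_subset_closedBall)).trans_lt
    (isCompact_closedBall _ _).measure_lt_top

lemma volume_unitCircle : volume unitCircle = 0 := by
  have hm : MeasurableSet unitCircle := (isClosed_eq (by fun_prop) (by fun_prop)).measurableSet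
  rw [Measure.volume_eq_prod, Measure.measure_prod_null hm]
  refine .of_forall fun x => (Set.Finite.subset
    (Set.toFinite {√(1 - x ^ 2), -√(1 - x ^ 2)}) fun y hy => ?_).measure_zero _
  have hy : x ^ 2 + y ^ 2 = 1 := hy
  rw [show 1 - x ^ 2 = y ^ 2 by linarith, Real.sqrt_sq_eq_abs]
  exact (abs_choice y).imp (fun h => h.symm) fun h => by rw [Set.mem_singleton_iff, h, neg_neg]

lemma D2_ae_eq_unitDisc : D2 =ᵐ[volume] unitDisc :=
  (ae_le_set.2 (D2_diff_unitDisc ▸ volume_unitCircle)).antisymm unitDisc_subset_D2.eventuallyLE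

lemma norm_equivRealProdCLM_symm_sq (x : ℝ × ℝ) :
    ‖Complex.equivRealProdCLM.symm x‖ ^ 2 = x.1 ^ 2 + x.2 ^ 2 := by
  rw [← Complex.normSq_eq_norm_sq, Complex.normSq_apply]
  simp only [Complex.equivRealProdCLM_symm_apply_re, Complex.equivRealProdCLM_symm_apply_im]
  ring

lemma norm_equivRealProdCLM_symm_le_one {x : ℝ × ℝ} :
    ‖Complex.equivRealProdCLM.symm x‖ ≤ 1 ↔ x ∈ D2 := by
  rw [← sq_le_one_iff₀ (norm_nonneg _), norm_equivRealProdCLM_symm_sq]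
  rfl

lemma discRetraction_of_mem {x : ℝ × ℝ} (hx : x ∈ D2) : discRetraction x = x := by
  rw [discRetraction, radialRetraction_of_norm_le (norm_equivRealProdCLM_symm_le_one.2 hx),
    ContinuousLinearEquiv.apply_symm_apply]

lemma discRetraction_mem (x : ℝ × ℝ) : discRetraction x ∈ D2 := by
  rw [← norm_equivRealProdCLM_symm_le_one, discRetraction, ContinuousLinearEquiv.symm_apply_apply]
  exact norm_radialRetraction_le _

lemma discRetraction_mem_unitCircle {x : ℝ × ℝ} (hx : x ∉ unitDisc) :
    discRetraction x ∈ unitCircle := by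
  have one_le : 1 ≤ ‖Complex.equivRealProdCLM.symm x‖ := by
    rw [← one_le_sq_iff₀ (norm_nonneg _), norm_equivRealProdCLM_symm_sq]
    exact not_lt.1 hx
  change (discRetraction x).1 ^ 2 + (discRetraction x).2 ^ 2 = 1
  rw [← norm_equivRealProdCLM_symm_sq, discRetraction, ContinuousLinearEquiv.symm_apply_apply,
    norm_radialRetraction one_le, one_pow]

lemma exists_lipschitzWith_discRetraction : ∃ C, LipschitzWith C discRetraction :=
  ⟨_, Complex.equivRealProdCLM.lipschitz.comp
    (lipschitzWith_radialRetraction.comp Complex.equivRealProdCLM.symm.lipschitz)⟩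

end UnitDisc

section Stokes

variable {a b g h φ : ℝ × ℝ → ℝ}

lemma jacobian_eq_zero_of_eventuallyEq {x : ℝ × ℝ} (ha : a =ᶠ[𝓝 x] 0) :
    jacobian a b x = 0 := by
  simp only [jacobian, ha.fderiv_eq, Pi.zero_def, fderiv_fun_const, Pi.zero_apply, zero_apply,
    zero_mul, sub_zero]

lemma integrableOn_jacobian (ha : ∃ C, LipschitzWith C a) (hb : ∃ C, LipschitzWith C b) :
    IntegrableOn (jacobian a b) unitDisc := by
  obtain ⟨A, ha⟩ := ha
  obtain ⟨B, hb⟩ := hb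
  exact Measure.integrableOn_of_bounded volume_unitDisc_lt_top.ne
    measurable_jacobian.aestronglyMeasurable (.of_forall (abs_jacobian_le ha hb))

lemma BddLipschitz.integrableOn_mul_jacobian (hg : BddLipschitz g) (ha : ∃ C, LipschitzWith C a)
    (hb : ∃ C, LipschitzWith C b) : IntegrableOn (fun x => g x * jacobian a b x) unitDisc :=
  (integrableOn_jacobian ha hb).bdd_mul hg.continuous.aestronglyMeasurable
    (.of_forall hg.2.choose_spec)

lemma setIntegral_jacobian_eq_zero (ha : ∃ C, LipschitzWith C a) (hb : ∃ C, LipschitzWith C b)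
    (h : ∀ x ∈ unitCircle, a x = 0) : ∫ x in unitDisc, jacobian a b x = 0 := by
  obtain ⟨A, ha⟩ := ha
  obtain ⟨B, hb⟩ := hb
  obtain ⟨C, hC⟩ := exists_lipschitzWith_discRetraction
  set a' : ℝ × ℝ → ℝ := fun x => a (discRetraction x)
  have a'_eq {x : ℝ × ℝ} (hx : x ∉ unitDisc) : a' x = 0 := h _ (discRetraction_mem_unitCircle hx)
  have hs : HasCompactSupport a' := HasCompactSupport.intro (isCompact_closedBall 0 1)
    fun x hx => a'_eq fun hU => hx (D2_subset_closedBall (unitDisc_subset_D2 hU))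
  have ha' : LipschitzWith (A * C) a' := ha.comp hC
  have integral_eq : ∫ x in unitDisc, jacobian a' b x = ∫ x, jacobian a' b x := by
    refine setIntegral_eq_integral_of_ae_compl_eq_zero ?_
    filter_upwards [D2_ae_eq_unitDisc.mem_iff] with x hx hxU
    refine jacobian_eq_zero_of_eventuallyEq ?_
    filter_upwards [isClosed_D2.isOpen_compl.mem_nhds (mt hx.1 hxU)] with z hz
    exact a'_eq fun hzU => hz (unitDisc_subset_D2 hzU)
  rw [← integral_jacobian_eq_zero ha' hb hs, ← integral_eq]
  refine setIntegral_congr_fun measurableSet_unitDisc fun x hx => jacobian_congr ?_ .rfl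
  filter_upwards [isOpen_unitDisc.mem_nhds hx] with z hz
  exact congr_arg a (discRetraction_of_mem (unitDisc_subset_D2 hz)).symm

lemma setIntegral_mul_jacobian_eq_neg (hφ : BddLipschitz φ) (hφ₀ : ∀ x ∈ unitCircle, φ x = 0)
    (hg : BddLipschitz g) (hh : ∃ C, LipschitzWith C h) :
    ∫ x in unitDisc, g x * jacobian φ h x = -∫ x in unitDisc, φ x * jacobian g h x := by
  have leibniz : ∀ᵐ x, g x * jacobian φ h x =
      jacobian (fun x => φ x * g x) h x - φ x * jacobian g h x := by
    filter_upwards [hφ.ae_differentiableAt, hg.ae_differentiableAt] with x dφ dg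
    rw [jacobian_mul_left dφ dg, add_sub_cancel_left]
  rw [integral_congr_ae (ae_restrict_of_ae leibniz),
    integral_sub (integrableOn_jacobian (hφ.mul hg).1 hh) (hφ.integrableOn_mul_jacobian hg.1 hh),
    setIntegral_jacobian_eq_zero (hφ.mul hg).1 hh fun x hx => by rw [hφ₀ x hx, zero_mul], zero_sub]

end Stokes

section Mollifier

variable {y y' r r' t Y R : ℝ}

/-- A smooth function rising from `0` at `y - r` to `1` at `y + r`. -/
noncomputable def smoothStep (y r t : ℝ) : ℝ := Real.smoothTransition (((t - y) / r + 1) / 2)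

/-- The smooth mollifier of mass one supported in `[y - r, y + r]`. -/
noncomputable def mollifier (y r t : ℝ) : ℝ := deriv (smoothStep y r) t

lemma contDiff_smoothStep (y r : ℝ) : ContDiff ℝ 2 (smoothStep y r) :=
  Real.smoothTransition.contDiff.comp (by fun_prop)

lemma differentiable_smoothStep (y r : ℝ) : Differentiable ℝ (smoothStep y r) :=
  (contDiff_smoothStep y r).differentiable two_ne_zero

lemma contDiff_mollifier (y r : ℝ) : ContDiff ℝ 1 (mollifier y r) :=
  ContDiff.deriv' (n := 1) (contDiff_smoothStep y r)

lemma smoothStep_of_le (hr : 0 < r) (h : t ≤ y - r) : smoothStep y r t = 0 := by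
  refine Real.smoothTransition.zero_of_nonpos ?_
  linarith [(div_le_iff₀ hr).2 (show t - y ≤ -1 * r by linarith)]

lemma smoothStep_of_ge (hr : 0 < r) (h : y + r ≤ t) : smoothStep y r t = 1 := by
  refine Real.smoothTransition.one_of_one_le ?_
  linarith [(le_div_iff₀ hr).2 (show 1 * r ≤ t - y by linarith)]

lemma abs_smoothStep_sub_le (y r t y' r' t' : ℝ) : |smoothStep y r t - smoothStep y' r' t'| ≤ 1 :=
  abs_sub_le_of_nonneg_of_le (Real.smoothTransition.nonneg _) (Real.smoothTransition.le_one _)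
    (Real.smoothTransition.nonneg _) (Real.smoothTransition.le_one _)

lemma smoothStep_sub_eq_zero (hr : 0 < r) (hr' : 0 < r') (h : r + dist y Y ≤ R)
    (h' : r' + dist y' Y ≤ R) (ht : t ∉ Metric.closedBall Y R) :
    smoothStep y r t - smoothStep y' r' t = 0 := by
  rw [Real.dist_eq] at h h'
  rw [Metric.mem_closedBall, Real.dist_eq, not_le, lt_abs] at ht
  have ⟨hl, hu⟩ := abs_le.1 (le_sub_iff_add_le'.2 h)
  have ⟨hl', hu'⟩ := abs_le.1 (le_sub_iff_add_le'.2 h')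
  rcases ht with ht | ht
  · rw [smoothStep_of_ge hr (by linarith), smoothStep_of_ge hr' (by linarith), sub_self]
  · rw [smoothStep_of_le hr (by linarith), smoothStep_of_le hr' (by linarith), sub_self]

lemma mollifier_eq_zero (hr : 0 < r) (h : t ∉ Metric.closedBall y r) : mollifier y r t = 0 := by
  rw [Metric.mem_closedBall, Real.dist_eq, not_le, lt_abs] at h
  rcases h with h | h
  · have eventually_one : smoothStep y r =ᶠ[𝓝 t] fun _ => 1 := by
      filter_upwards [Ioi_mem_nhds (show y + r < t by linarith)] with s hs
      exact smoothStep_of_ge hr (le_of_lt hs)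
    rw [mollifier, eventually_one.deriv_eq, deriv_const]
  · have eventually_zero : smoothStep y r =ᶠ[𝓝 t] fun _ => 0 := by
      filter_upwards [Iio_mem_nhds (show t < y - r by linarith)] with s hs
      exact smoothStep_of_le hr (le_of_lt hs)
    rw [mollifier, eventually_zero.deriv_eq, deriv_const]

lemma hasCompactSupport_mollifier (hr : 0 < r) : HasCompactSupport (mollifier y r) :=
  HasCompactSupport.intro (isCompact_closedBall y r) fun _ => mollifier_eq_zero hr

lemma mollifier_eq_rescale (y r t : ℝ) : mollifier y r t = mollifier 0 1 ((t - y) / r) * r⁻¹ := by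
  have smoothStep_eq : smoothStep y r = fun t => smoothStep 0 1 ((t - y) / r) := by
    ext t
    simp only [smoothStep, sub_zero, div_one]
  have hasDerivAt_div : HasDerivAt (fun t => (t - y) / r) r⁻¹ t := by
    simpa only [one_div] using ((hasDerivAt_id' t).sub_const y).div_const r
  rw [mollifier, smoothStep_eq]
  exact ((differentiable_smoothStep 0 1 _).hasDerivAt.comp t hasDerivAt_div).deriv

lemma exists_mollifier_bound :
    ∃ c : ℝ, 0 ≤ c ∧ ∀ y r t : ℝ, 0 < r → |mollifier y r t| ≤ c / r := by
  obtain ⟨c, hc⟩ := (hasCompactSupport_mollifier (y := 0) one_pos).exists_bound_of_continuous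
    (contDiff_mollifier 0 1).continuous
  refine ⟨c, (norm_nonneg _).trans (hc 0), fun y r t hr => ?_⟩
  rw [mollifier_eq_rescale, abs_mul, abs_inv, abs_of_pos hr, div_eq_mul_inv]
  exact mul_le_mul_of_nonneg_right (hc _) (inv_nonneg.2 hr.le)

/-- A constant bounding the mollifier of scale one. -/
noncomputable def mollifierBound : ℝ := exists_mollifier_bound.choose

lemma mollifierBound_nonneg : 0 ≤ mollifierBound := exists_mollifier_bound.choose_spec.1

lemma abs_mollifier_le (hr : 0 < r) (t : ℝ) : |mollifier y r t| ≤ mollifierBound / r :=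
  exists_mollifier_bound.choose_spec.2 y r t hr

lemma integral_mollifier (hr : 0 < r) : ∫ t, mollifier y r t = 1 := by
  have interval_eq : ∫ t in (y - r)..(y + r), mollifier y r t = 1 := by
    unfold mollifier
    rw [intervalIntegral.integral_deriv_eq_sub (fun x _ => differentiable_smoothStep y r x)
      ((contDiff_mollifier y r).continuous.intervalIntegrable _ _),
      smoothStep_of_ge hr le_rfl, smoothStep_of_le hr le_rfl, sub_zero]
  rw [← interval_eq, intervalIntegral.integral_of_le (by linarith), ← integral_Icc_eq_integral_Ioc,
    ← Real.closedBall_eq_Icc]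
  exact (setIntegral_eq_integral_of_forall_compl_eq_zero fun x => mollifier_eq_zero hr).symm

lemma bddLipschitz_mollifier (hr : 0 < r) : BddLipschitz (mollifier y r) :=
  bddLipschitz_of_contDiff (contDiff_mollifier y r) (hasCompactSupport_mollifier hr)

lemma bddLipschitz_smoothStep (hr : 0 < r) : BddLipschitz (smoothStep y r) :=
  ⟨⟨(mollifierBound / r).toNNReal, lipschitzWith_of_nnnorm_deriv_le
    (differentiable_smoothStep y r) fun t => NNReal.coe_le_coe.1 <| by
      rw [Real.coe_toNNReal _ (div_nonneg mollifierBound_nonneg hr.le)]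
      exact abs_mollifier_le hr t⟩,
    1, fun _ => abs_le.2 ⟨neg_one_lt_zero.le.trans (Real.smoothTransition.nonneg _),
      Real.smoothTransition.le_one _⟩⟩

end Mollifier

section Slices

/-- A Lipschitz map `(F₁, F₂)` of the disc to the plane whose Jacobian is dominated by the area
density `j` and which maps the unit circle off the region `Q`. -/
structure IsDominatedMap (Q : Set (ℝ × ℝ)) (F₁ F₂ j : ℝ × ℝ → ℝ) : Prop where
  lipschitz_fst : ∃ C, LipschitzWith C F₁
  lipschitz_snd : ∃ C, LipschitzWith C F₂
  nonneg : ∀ x, 0 ≤ j x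
  integrableOn : IntegrableOn j unitDisc
  abs_jacobian_le : ∀ᵐ x, x ∈ unitDisc → |jacobian F₁ F₂ x| ≤ j x
  notMem_of_mem_unitCircle : ∀ x ∈ unitCircle, (F₁ x, F₂ x) ∉ Q

/-- A test function for the slices of the disc by `(F₁, F₂)`: a bounded Lipschitz function whose
Jacobians with `F₁` and `F₂` are dominated by the area density `j`. -/
structure IsDominatedTest (F₁ F₂ j g : ℝ × ℝ → ℝ) : Prop where
  bddLipschitz : BddLipschitz g
  abs_jacobian_fst_le : ∀ᵐ x, x ∈ unitDisc → |jacobian g F₁ x| ≤ j x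
  abs_jacobian_snd_le : ∀ᵐ x, x ∈ unitDisc → |jacobian g F₂ x| ≤ j x

/-- The push-forward to the plane of the area measure with density `j` on the unit disc. -/
noncomputable def massMeasure (F₁ F₂ j : ℝ × ℝ → ℝ) : Measure (ℝ × ℝ) :=
  ((volume.restrict unitDisc).withDensity fun x => ENNReal.ofReal (j x)).map
    fun x => (F₁ x, F₂ x)

/-- The slice `⟨⟦D²⟧, (F₁, F₂), y⟩` of the disc, mollified at scale `r` and evaluated at the test
function `g`. -/
noncomputable def mollifiedSlice (F₁ F₂ g : ℝ × ℝ → ℝ) (y : ℝ × ℝ) (r : ℝ) : ℝ :=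
  ∫ x in unitDisc, mollifier y.1 r (F₁ x) * mollifier y.2 r (F₂ x) * g x * jacobian F₁ F₂ x

/-- The maximal function of `μ` at `y`, over radii up to `r`, is at most `l`. -/
def MaximalBound (μ : Measure (ℝ × ℝ)) (l r : ℝ) (y : ℝ × ℝ) : Prop :=
  ∀ ρ, 0 < ρ → ρ ≤ r → μ.real (Metric.closedBall y ρ) ≤ l * ρ ^ 2

variable {Q B : Set (ℝ × ℝ)} {F₁ F₂ j g f h ψ : ℝ × ℝ → ℝ} {y y' Y : ℝ × ℝ}
  {M r r' R l s s' : ℝ}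

lemma MaximalBound.mono {μ : Measure (ℝ × ℝ)} (hμ : MaximalBound μ l r y) (h : r' ≤ r) :
    MaximalBound μ l r' y :=
  fun ρ hρ hρr => hμ ρ hρ (hρr.trans h)

lemma IsDominatedMap.measurable (hF : IsDominatedMap Q F₁ F₂ j) :
    Measurable fun x => (F₁ x, F₂ x) :=
  (hF.lipschitz_fst.choose_spec.continuous.prodMk
    hF.lipschitz_snd.choose_spec.continuous).measurable

lemma IsDominatedMap.massMeasure_apply (hF : IsDominatedMap Q F₁ F₂ j) (hB : MeasurableSet B) :
    massMeasure F₁ F₂ j B =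
      ∫⁻ x in (fun x => (F₁ x, F₂ x)) ⁻¹' B ∩ unitDisc, ENNReal.ofReal (j x) := by
  rw [massMeasure, Measure.map_apply hF.measurable hB, withDensity_apply _ (hF.measurable hB),
    Measure.restrict_restrict (hF.measurable hB)]

lemma IsDominatedMap.massMeasure_real (hF : IsDominatedMap Q F₁ F₂ j) (hB : MeasurableSet B) :
    (massMeasure F₁ F₂ j).real B =
      ∫ x in (fun x => (F₁ x, F₂ x)) ⁻¹' B ∩ unitDisc, j x := by
  rw [measureReal_def, hF.massMeasure_apply hB,
    integral_eq_lintegral_of_nonneg_ae (.of_forall hF.nonneg)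
      (hF.integrableOn.mono_set Set.inter_subset_right).aestronglyMeasurable]

lemma IsDominatedMap.abs_setIntegral_le (hF : IsDominatedMap Q F₁ F₂ j) (hB : MeasurableSet B)
    (hf₀ : ∀ x, (F₁ x, F₂ x) ∉ B → f x = 0) (hf : ∀ᵐ x, x ∈ unitDisc → |f x| ≤ M * j x) :
    |∫ x in unitDisc, f x| ≤ M * (massMeasure F₁ F₂ j).real B := by
  have hm : MeasurableSet ((fun x => (F₁ x, F₂ x)) ⁻¹' B) := hF.measurable hB
  rw [hF.massMeasure_real hB, ← integral_const_mul, ← Measure.restrict_restrict hm,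
    ← integral_indicator hm]
  refine (Real.norm_eq_abs _).symm.trans_le <| norm_integral_le_of_norm_le
    ((hF.integrableOn.const_mul M).indicator hm) ((ae_restrict_iff' measurableSet_unitDisc).2 ?_)
  filter_upwards [hf] with x hx hU
  by_cases hxB : (F₁ x, F₂ x) ∈ B
  · rw [Set.indicator_of_mem (s := (fun x => (F₁ x, F₂ x)) ⁻¹' B) hxB]
    exact hx hU
  · rw [Set.indicator_of_notMem (s := (fun x => (F₁ x, F₂ x)) ⁻¹' B) hxB, hf₀ x hxB, norm_zero]

lemma IsDominatedMap.abs_setIntegral_mul_jacobian_le (hF : IsDominatedMap Q F₁ F₂ j)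
    (hg : BddLipschitz g) (hh : ∃ C, LipschitzWith C h)
    (hgh : ∀ᵐ x, x ∈ unitDisc → |jacobian g h x| ≤ j x) (hψ : BddLipschitz ψ)
    (hB : MeasurableSet B) (hBQ : B ⊆ Q) (hψ₀ : ∀ z ∉ B, ψ z = 0) (hψM : ∀ z, |ψ z| ≤ M) :
    |∫ x in unitDisc, g x * jacobian (fun x => ψ (F₁ x, F₂ x)) h x| ≤
      M * (massMeasure F₁ F₂ j).real B := by
  obtain ⟨A₁, hA₁⟩ := hF.lipschitz_fst
  obtain ⟨A₂, hA₂⟩ := hF.lipschitz_snd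
  rw [setIntegral_mul_jacobian_eq_neg (hψ.comp ⟨_, hA₁.prodMk hA₂⟩)
    (fun x hx => hψ₀ _ fun hxB => hF.notMem_of_mem_unitCircle x hx (hBQ hxB)) hg hh, abs_neg]
  refine hF.abs_setIntegral_le hB (fun x hx => by rw [hψ₀ _ hx, zero_mul]) ?_
  filter_upwards [hgh] with x hx hU
  rw [abs_mul]
  exact mul_le_mul (hψM _) (hx hU) (abs_nonneg _) ((abs_nonneg _).trans (hψM 0))

lemma jacobian_mul_comp_right {K κ : ℝ → ℝ} {x : ℝ × ℝ} (dK : Differentiable ℝ K)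
    (dκ : Differentiable ℝ κ) (d₁ : DifferentiableAt ℝ F₁ x) (d₂ : DifferentiableAt ℝ F₂ x) :
    jacobian (fun x => K (F₁ x) * κ (F₂ x)) F₂ x =
      deriv K (F₁ x) * κ (F₂ x) * jacobian F₁ F₂ x := by
  rw [jacobian_mul_comp_self (c := fun x => K (F₁ x)) ((dK _).comp x d₁) d₂ dκ,
    jacobian_comp_left d₁ (dK _)]
  ring

lemma deriv_smoothStep_sub (a b a' b' t : ℝ) :
    deriv (fun t => smoothStep a b t - smoothStep a' b' t) t =
      mollifier a b t - mollifier a' b' t :=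
  deriv_fun_sub (differentiable_smoothStep a b t) (differentiable_smoothStep a' b' t)

lemma IsDominatedMap.abs_setIntegral_mul_jacobian_prod_le (hF : IsDominatedMap Q F₁ F₂ j)
    (hg : BddLipschitz g) (hh : ∃ C, LipschitzWith C h)
    (hgh : ∀ᵐ x, x ∈ unitDisc → |jacobian g h x| ≤ j x) {K κ : ℝ → ℝ} {a b : ℝ}
    (hK : BddLipschitz K) (hκ : BddLipschitz κ) (hKa : ∀ t, |K t| ≤ a) (hκb : ∀ t, |κ t| ≤ b)
    (hK₀ : ∀ t ∉ Metric.closedBall Y.1 R, K t = 0) (hκ₀ : ∀ t ∉ Metric.closedBall Y.2 R, κ t = 0)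
    (hQ : Metric.closedBall Y R ⊆ Q) :
    |∫ x in unitDisc, g x * jacobian (fun x => K (F₁ x) * κ (F₂ x)) h x| ≤
      a * b * (massMeasure F₁ F₂ j).real (Metric.closedBall Y R) := by
  refine hF.abs_setIntegral_mul_jacobian_le hg hh hgh (ψ := fun z => K z.1 * κ z.2)
    ((hK.comp ⟨1, LipschitzWith.prod_fst⟩).mul (hκ.comp ⟨1, LipschitzWith.prod_snd⟩))
    Metric.isClosed_closedBall.measurableSet hQ (fun z hz => ?_) fun z => ?_
  · rw [← closedBall_prod_same, Set.mem_prod, not_and_or] at hz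
    exact mul_eq_zero.2 (hz.imp (hK₀ _) (hκ₀ _))
  · rw [abs_mul]
    exact mul_le_mul (hKa _) (hκb _) (abs_nonneg _) ((abs_nonneg _).trans (hKa 0))

/-- Moving the slice in two steps, one coordinate at a time: each increment of the kernel is the
Jacobian of a compactly supported function, so that integrating by parts trades it for `∂g`. -/
lemma mollifiedSlice_sub_ae_eq (hF : IsDominatedMap Q F₁ F₂ j) (y y' : ℝ × ℝ) (r r' : ℝ) :
    ∀ᵐ x,
      mollifier y.1 r (F₁ x) * mollifier y.2 r (F₂ x) * g x * jacobian F₁ F₂ x -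
        mollifier y'.1 r' (F₁ x) * mollifier y'.2 r' (F₂ x) * g x * jacobian F₁ F₂ x =
      g x * jacobian (fun x => (smoothStep y.1 r (F₁ x) - smoothStep y'.1 r' (F₁ x)) *
        mollifier y.2 r (F₂ x)) F₂ x -
      g x * jacobian (fun x => mollifier y'.1 r' (F₁ x) *
        (smoothStep y.2 r (F₂ x) - smoothStep y'.2 r' (F₂ x))) F₁ x := by
  have d (a b a' b' : ℝ) : Differentiable ℝ fun t => smoothStep a b t - smoothStep a' b' t :=
    (differentiable_smoothStep a b).sub (differentiable_smoothStep a' b')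
  have dm (a b : ℝ) : Differentiable ℝ (mollifier a b) :=
    (contDiff_mollifier a b).differentiable one_ne_zero
  filter_upwards [hF.lipschitz_fst.choose_spec.ae_differentiableAt,
    hF.lipschitz_snd.choose_spec.ae_differentiableAt] with x d₁ d₂
  simp only [mul_comm (mollifier y'.1 r' (F₁ _))]
  rw [jacobian_mul_comp_right (d _ _ _ _) (dm _ _) d₁ d₂,
    jacobian_mul_comp_right (d _ _ _ _) (dm _ _) d₂ d₁, deriv_smoothStep_sub,
    deriv_smoothStep_sub, jacobian_swap F₂ F₁]
  ring

lemma IsDominatedMap.integrableOn_mollifiedSlice (hF : IsDominatedMap Q F₁ F₂ j)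
    (hg : BddLipschitz g) (y : ℝ × ℝ) (hr : 0 < r) :
    IntegrableOn (fun x => mollifier y.1 r (F₁ x) * mollifier y.2 r (F₂ x) * g x *
      jacobian F₁ F₂ x) unitDisc :=
  ((((bddLipschitz_mollifier hr).comp hF.lipschitz_fst).mul
    ((bddLipschitz_mollifier hr).comp hF.lipschitz_snd)).mul hg).integrableOn_mul_jacobian
      hF.lipschitz_fst hF.lipschitz_snd

lemma IsDominatedMap.abs_mollifiedSlice_sub_le (hF : IsDominatedMap Q F₁ F₂ j)
    (hg : IsDominatedTest F₁ F₂ j g) (hr : 0 < r) (hr' : 0 < r') (h : r + dist y Y ≤ R)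
    (h' : r' + dist y' Y ≤ R) (hQ : Metric.closedBall Y R ⊆ Q) :
    |mollifiedSlice F₁ F₂ g y r - mollifiedSlice F₁ F₂ g y' r'| ≤
      mollifierBound * (1 / r + 1 / r') *
        (massMeasure F₁ F₂ j).real (Metric.closedBall Y R) := by
  rw [Prod.dist_eq, ← max_add_add_left, max_le_iff] at h h'
  have step₁ : BddLipschitz fun t => smoothStep y.1 r t - smoothStep y'.1 r' t :=
    (bddLipschitz_smoothStep hr).sub (bddLipschitz_smoothStep hr')
  have step₂ : BddLipschitz fun t => smoothStep y.2 r t - smoothStep y'.2 r' t :=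
    (bddLipschitz_smoothStep hr).sub (bddLipschitz_smoothStep hr')
  have moll₂ : BddLipschitz (mollifier y.2 r) := bddLipschitz_mollifier hr
  have moll₁ : BddLipschitz (mollifier y'.1 r') := bddLipschitz_mollifier hr'
  have bound₁ := hF.abs_setIntegral_mul_jacobian_prod_le hg.bddLipschitz hF.lipschitz_snd
    hg.abs_jacobian_snd_le step₁ moll₂ (fun t => abs_smoothStep_sub_le _ _ t _ _ t)
    (abs_mollifier_le hr) (fun t => smoothStep_sub_eq_zero hr hr' h.1 h'.1)
    (fun t ht => mollifier_eq_zero hr fun hw => ht (Metric.closedBall_subset_closedBall' h.2 hw)) hQ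
  have bound₂ := hF.abs_setIntegral_mul_jacobian_prod_le hg.bddLipschitz hF.lipschitz_fst
    hg.abs_jacobian_fst_le moll₁ step₂ (abs_mollifier_le hr')
    (fun t => abs_smoothStep_sub_le _ _ t _ _ t)
    (fun t ht => mollifier_eq_zero hr' fun hw => ht (Metric.closedBall_subset_closedBall' h'.1 hw))
    (fun t => smoothStep_sub_eq_zero hr hr' h.2 h'.2) hQ
  have lip₁ := ((step₁.comp hF.lipschitz_fst).mul (moll₂.comp hF.lipschitz_snd)).1
  have lip₂ := ((moll₁.comp hF.lipschitz_fst).mul (step₂.comp hF.lipschitz_snd)).1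
  rw [mollifiedSlice, mollifiedSlice,
    ← integral_sub (hF.integrableOn_mollifiedSlice hg.bddLipschitz y hr)
      (hF.integrableOn_mollifiedSlice hg.bddLipschitz y' hr'),
    integral_congr_ae (ae_restrict_of_ae (mollifiedSlice_sub_ae_eq hF y y' r r')),
    integral_sub (hg.bddLipschitz.integrableOn_mul_jacobian lip₁ hF.lipschitz_snd)
      (hg.bddLipschitz.integrableOn_mul_jacobian lip₂ hF.lipschitz_fst)]
  exact ((abs_sub _ _).trans (add_le_add bound₁ bound₂)).trans_eq (by ring)

lemma IsDominatedMap.abs_mollifiedSlice_sub_limit_le (hF : IsDominatedMap Q F₁ F₂ j)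
    (hg : IsDominatedTest F₁ F₂ j g) (hr : 0 < r) (hQ : Metric.closedBall y r ⊆ Q)
    (hμ : MaximalBound (massMeasure F₁ F₂ j) l r y)
    (hs : Tendsto (mollifiedSlice F₁ F₂ g y) (𝓝[>] 0) (𝓝 s)) :
    |mollifiedSlice F₁ F₂ g y r - s| ≤ 6 * mollifierBound * l * r := by
  have scale_pos (n : ℕ) : 0 < r * (1 / 2) ^ n := by positivity
  have scale_le (n : ℕ) : r * (1 / 2) ^ n ≤ r :=
    mul_le_of_le_one_right hr.le (pow_le_one₀ (by norm_num) (by norm_num))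
  have tendsto_scale : Tendsto (fun n : ℕ => r * (1 / 2) ^ n) atTop (𝓝[>] 0) :=
    mul_zero r ▸ TendstoNhdsWithinIoi.const_mul hr
      (tendsto_pow_atTop_nhdsWithin_zero_of_lt_one one_half_pos one_half_lt_one)
  have dist_succ_le (n : ℕ) : dist (mollifiedSlice F₁ F₂ g y (r * (1 / 2) ^ n))
      (mollifiedSlice F₁ F₂ g y (r * (1 / 2) ^ (n + 1))) ≤
        6 * mollifierBound * l * r / 2 / 2 ^ n := by
    have halve : r * (1 / 2) ^ (n + 1) ≤ r * (1 / 2) ^ n := by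
      rw [pow_succ]
      linarith [scale_pos n]
    calc _ ≤ mollifierBound * (1 / (r * (1 / 2) ^ n) + 1 / (r * (1 / 2) ^ (n + 1))) *
          (massMeasure F₁ F₂ j).real (Metric.closedBall y (r * (1 / 2) ^ n)) :=
          hF.abs_mollifiedSlice_sub_le hg (scale_pos n) (scale_pos (n + 1))
            (by rw [dist_self, add_zero])
            (by rwa [dist_self, add_zero])
            ((Metric.closedBall_subset_closedBall (scale_le n)).trans hQ)
      _ ≤ mollifierBound * (1 / (r * (1 / 2) ^ n) + 1 / (r * (1 / 2) ^ (n + 1))) *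
          (l * (r * (1 / 2) ^ n) ^ 2) := by
          have := hμ _ (scale_pos n) (scale_le n)
          have := mollifierBound_nonneg
          gcongr
      _ = _ := by
          rw [pow_succ, one_div_pow]
          field_simp
          ring
  simpa only [pow_zero, mul_one, Function.comp_apply, Real.dist_eq] using
    dist_le_of_le_geometric_two_of_tendsto₀ dist_succ_le (hs.comp tendsto_scale)

lemma IsDominatedMap.abs_slice_sub_le (hF : IsDominatedMap Q F₁ F₂ j)
    (hg : IsDominatedTest F₁ F₂ j g) (hQ : Metric.closedBall y r ⊆ Q)
    (hQ' : Metric.closedBall y' r ⊆ Q) (hμ : MaximalBound (massMeasure F₁ F₂ j) l r y)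
    (hμ' : MaximalBound (massMeasure F₁ F₂ j) l r y')
    (hs : Tendsto (mollifiedSlice F₁ F₂ g y) (𝓝[>] 0) (𝓝 s))
    (hs' : Tendsto (mollifiedSlice F₁ F₂ g y') (𝓝[>] 0) (𝓝 s'))
    (hr : 2 * dist y y' ≤ r) :
    |s - s'| ≤ 20 * mollifierBound * l * dist y y' := by
  rcases eq_or_ne y y' with rfl | hne
  · rw [tendsto_nhds_unique hs hs', sub_self, abs_zero, dist_self, mul_zero]
  have dist_pos : 0 < dist y y' := dist_pos.2 hne
  set D := dist y y' with hD
  have D_le_r : D ≤ r := by linarith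
  have near := hF.abs_mollifiedSlice_sub_limit_le hg dist_pos
    ((Metric.closedBall_subset_closedBall D_le_r).trans hQ) (hμ.mono D_le_r) hs
  have near' := hF.abs_mollifiedSlice_sub_limit_le hg dist_pos
    ((Metric.closedBall_subset_closedBall D_le_r).trans hQ') (hμ'.mono D_le_r) hs'
  have move : |mollifiedSlice F₁ F₂ g y D - mollifiedSlice F₁ F₂ g y' D| ≤
      8 * mollifierBound * l * D := calc
    _ ≤ mollifierBound * (1 / D + 1 / D) *
        (massMeasure F₁ F₂ j).real (Metric.closedBall y (2 * D)) :=
      hF.abs_mollifiedSlice_sub_le hg dist_pos dist_pos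
        (by rw [dist_self]; linarith) (by rw [dist_comm, ← hD]; linarith)
        ((Metric.closedBall_subset_closedBall hr).trans hQ)
    _ ≤ mollifierBound * (1 / D + 1 / D) * (l * (2 * D) ^ 2) := by
      have := hμ (2 * D) (by linarith) hr
      have := mollifierBound_nonneg
      gcongr
    _ = 8 * mollifierBound * l * D := by
      field_simp
      ring
  rw [abs_le] at *
  constructor <;> linarith [near.1, near.2, near'.1, near'.2, move.1, move.2]

end Slices

section Degree

/-- The rectangle over which the degree of the planar projection of the filling is computed. -/
def testRectangle : Set (ℝ × ℝ) := {z | |z.1| < 1 / 4 ∧ 0 < z.2 ∧ z.2 < 1 / 4}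

/-- The map `(F₁, F₂)` folds the lower half of the unit circle onto the first axis and keeps the
upper half off `testRectangle`, above it where its first coordinate is small. -/
structure IsDegreeOneBoundary (F₁ F₂ : ℝ × ℝ → ℝ) : Prop where
  lower : ∀ p ∈ unitCircle, p.2 ≤ 0 → F₁ p = p.1 ∧ F₂ p = 0
  upper : ∀ p ∈ unitCircle, 0 ≤ p.2 → |F₁ p| < 1 / 4 → 1 / 4 ≤ F₂ p

variable {F₁ F₂ : ℝ × ℝ → ℝ} {y : ℝ × ℝ} {r : ℝ}

lemma IsDegreeOneBoundary.notMem (hF : IsDegreeOneBoundary F₁ F₂) {p : ℝ × ℝ}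
    (hp : p ∈ unitCircle) : (F₁ p, F₂ p) ∉ testRectangle := by
  rintro ⟨h₁, h₂, h₃⟩
  rcases le_total p.2 0 with hp₂ | hp₂
  · exact h₂.ne' (hF.lower p hp hp₂).2
  · exact h₃.not_ge (hF.upper p hp hp₂ h₁)

lemma abs_lt_of_mollifier_ne_zero (hr : 0 < r) (hQ : Metric.closedBall y r ⊆ testRectangle)
    {t : ℝ} (ht : mollifier y.1 r t ≠ 0) : |t| < 1 / 4 := by
  have mem : t ∈ Metric.closedBall y.1 r := not_imp_comm.1 (mollifier_eq_zero hr) ht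
  have mem_prod : (t, y.2) ∈ Metric.closedBall y r := by
    rw [← closedBall_prod_same]
    exact ⟨mem, Metric.mem_closedBall_self hr.le⟩
  exact (hQ mem_prod).1

lemma snd_bounds_of_closedBall_subset (hr : 0 < r) (hQ : Metric.closedBall y r ⊆ testRectangle) :
    0 < y.2 - r ∧ y.2 + r < 1 / 4 := by
  have mem {t : ℝ} (ht : |t - y.2| ≤ r) : (y.1, t) ∈ testRectangle := by
    apply hQ
    rw [← closedBall_prod_same]
    exact ⟨Metric.mem_closedBall_self hr.le, ht⟩
  exact ⟨(mem (t := y.2 - r) (by rw [sub_sub_cancel_left, abs_neg, abs_of_pos hr])).2.1,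
    (mem (t := y.2 + r) (by rw [add_sub_cancel_left, abs_of_pos hr])).2.2⟩

lemma lt_neg_of_mem_unitCircle {p : ℝ × ℝ} (hp : p ∈ unitCircle) (h₁ : |p.1| < 1 / 4)
    (h₂ : p.2 ≤ 0) : p.2 < -0.9 := by
  have hp : p.1 ^ 2 + p.2 ^ 2 = 1 := hp
  have ⟨_, _⟩ := abs_lt.1 h₁
  by_contra! h
  nlinarith

lemma IsDegreeOneBoundary.mollifier_mul_smoothStep_sub (hF : IsDegreeOneBoundary F₁ F₂)
    (hr : 0 < r) (hQ : Metric.closedBall y r ⊆ testRectangle) {p : ℝ × ℝ} (hp : p ∈ unitCircle) :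
    (smoothStep y.2 r (F₂ p) - smoothStep (-0.7) 0.2 p.2) * mollifier y.1 r (F₁ p) = 0 := by
  rw [mul_eq_zero, or_iff_not_imp_right]
  intro hF₁
  have abs_lt := abs_lt_of_mollifier_ne_zero hr hQ hF₁
  have ⟨low, high⟩ := snd_bounds_of_closedBall_subset hr hQ
  rcases le_total p.2 0 with hp₂ | hp₂
  · have ⟨F₁_eq, F₂_eq⟩ := hF.lower p hp hp₂
    have := lt_neg_of_mem_unitCircle hp (F₁_eq ▸ abs_lt) hp₂
    rw [F₂_eq, smoothStep_of_le hr low.le, smoothStep_of_le (by norm_num) (by linarith), sub_zero]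
  · have := hF.upper p hp hp₂ abs_lt
    rw [smoothStep_of_ge hr (by linarith), smoothStep_of_ge (by norm_num) (by linarith), sub_self]

lemma IsDegreeOneBoundary.smoothStep_sub_mul_mollifier (hF : IsDegreeOneBoundary F₁ F₂)
    (a b : ℝ) {p : ℝ × ℝ} (hp : p ∈ unitCircle) :
    (smoothStep a b (F₁ p) - smoothStep a b p.1) * mollifier (-0.7) 0.2 p.2 = 0 := by
  rcases le_total p.2 0 with hp₂ | hp₂
  · rw [(hF.lower p hp hp₂).1, sub_self, zero_mul]
  · rw [mollifier_eq_zero (t := p.2) (by norm_num), mul_zero]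
    rw [Real.closedBall_eq_Icc]
    exact fun h => absurd h.2 (by linarith)

lemma jacobian_smoothStep_sub_mul_mollifier {G H f : ℝ × ℝ → ℝ} {x : ℝ × ℝ} (a b a' b' c d : ℝ)
    (dG : DifferentiableAt ℝ G x) (dH : DifferentiableAt ℝ H x) (df : DifferentiableAt ℝ f x) :
    jacobian (fun x => (smoothStep a b (G x) - smoothStep a' b' (H x)) * mollifier c d (f x)) f x =
      mollifier c d (f x) * (mollifier a b (G x) * jacobian G f x -
        mollifier a' b' (H x) * jacobian H f x) := by
  have dPG : DifferentiableAt ℝ (fun x => smoothStep a b (G x)) x :=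
    (differentiable_smoothStep a b _).comp x dG
  have dPH : DifferentiableAt ℝ (fun x => smoothStep a' b' (H x)) x :=
    (differentiable_smoothStep a' b' _).comp x dH
  rw [jacobian_mul_comp_self (c := fun x => smoothStep a b (G x) - smoothStep a' b' (H x))
    (dPG.sub dPH) df ((contDiff_mollifier c d).differentiable one_ne_zero),
    jacobian_sub_left dPG dPH, jacobian_comp_left dG (differentiable_smoothStep a b _),
    jacobian_comp_left dH (differentiable_smoothStep a' b' _)]
  rfl

lemma jacobian_fst_snd (x : ℝ × ℝ) : jacobian Prod.fst Prod.snd x = 1 := by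
  simp [jacobian, fderiv_fst, fderiv_snd]

/-- By Stokes: the two forms differ by the differential of
`(smoothStep a b ∘ G - smoothStep a' b' ∘ H) * (mollifier c d ∘ f) df`, which is zero on the
circle. -/
lemma setIntegral_mollifier_jacobian_congr {G H f : ℝ × ℝ → ℝ} {a b a' b' c d : ℝ}
    (hb : 0 < b) (hb' : 0 < b') (hd : 0 < d) (hG : ∃ C, LipschitzWith C G)
    (hH : ∃ C, LipschitzWith C H) (hf : ∃ C, LipschitzWith C f)
    (h : ∀ p ∈ unitCircle,
      (smoothStep a b (G p) - smoothStep a' b' (H p)) * mollifier c d (f p) = 0) :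
    ∫ x in unitDisc, mollifier c d (f x) * mollifier a b (G x) * jacobian G f x =
      ∫ x in unitDisc, mollifier c d (f x) * mollifier a' b' (H x) * jacobian H f x := by
  have hm : BddLipschitz fun x => mollifier c d (f x) := (bddLipschitz_mollifier hd).comp hf
  have hsteps : BddLipschitz fun x =>
      (smoothStep a b (G x) - smoothStep a' b' (H x)) * mollifier c d (f x) :=
    (((bddLipschitz_smoothStep hb).comp hG).sub ((bddLipschitz_smoothStep hb').comp hH)).mul hm
  rw [← sub_eq_zero, ← integral_sub
    ((hm.mul ((bddLipschitz_mollifier hb).comp hG)).integrableOn_mul_jacobian hG hf)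
    ((hm.mul ((bddLipschitz_mollifier hb').comp hH)).integrableOn_mul_jacobian hH hf),
    ← setIntegral_jacobian_eq_zero hsteps.1 hf h]
  refine integral_congr_ae (ae_restrict_of_ae ?_)
  filter_upwards [hG.choose_spec.ae_differentiableAt, hH.choose_spec.ae_differentiableAt,
    hf.choose_spec.ae_differentiableAt] with x dG dH df
  rw [jacobian_smoothStep_sub_mul_mollifier _ _ _ _ _ _ dG dH df]
  ring

lemma setIntegral_mollifier_mul_mollifier (hr : 0 < r)
    (hQ : Metric.closedBall y r ⊆ testRectangle) :
    ∫ x in unitDisc, mollifier (-0.7) 0.2 x.2 * mollifier y.1 r x.1 = 1 := by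
  rw [setIntegral_eq_integral_of_forall_compl_eq_zero, Measure.volume_eq_prod]
  · simp only [mul_comm (mollifier (-0.7) 0.2 _)]
    rw [integral_prod_mul (mollifier y.1 r) (mollifier (-0.7) 0.2), integral_mollifier hr,
      integral_mollifier (by norm_num), mul_one]
  · intro x hx
    by_contra hne
    have ⟨h₂, h₁⟩ := mul_ne_zero_iff.1 hne
    have h₂ := not_imp_comm.1 (mollifier_eq_zero (by norm_num)) h₂
    rw [Real.closedBall_eq_Icc] at h₂
    have ⟨_, _⟩ := abs_lt.1 (abs_lt_of_mollifier_ne_zero hr hQ h₁)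
    refine hx (show x.1 ^ 2 + x.2 ^ 2 < 1 from ?_)
    nlinarith [h₂.1, h₂.2]

theorem IsDegreeOneBoundary.mollifiedSlice_one (hF : IsDegreeOneBoundary F₁ F₂)
    (hF₁ : ∃ C, LipschitzWith C F₁) (hF₂ : ∃ C, LipschitzWith C F₂) (hr : 0 < r)
    (hQ : Metric.closedBall y r ⊆ testRectangle) :
    mollifiedSlice F₁ F₂ (fun _ => 1) y r = 1 := by
  have hfst : ∃ C, LipschitzWith C (Prod.fst : ℝ × ℝ → ℝ) := ⟨1, LipschitzWith.prod_fst⟩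
  have hsnd : ∃ C, LipschitzWith C (Prod.snd : ℝ × ℝ → ℝ) := ⟨1, LipschitzWith.prod_snd⟩
  have deform_snd := setIntegral_mollifier_jacobian_congr hr (by norm_num) hr hF₂ hsnd hF₁
    fun p hp => hF.mollifier_mul_smoothStep_sub hr hQ hp
  have deform_fst := setIntegral_mollifier_jacobian_congr hr hr (by norm_num) hF₁ hfst hsnd
    fun p hp => hF.smoothStep_sub_mul_mollifier y.1 r hp
  simp only [jacobian_fst_snd, mul_one] at deform_fst
  simp only [jacobian_swap _ F₁, mul_neg, integral_neg, neg_inj] at deform_snd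
  simp only [mul_comm (mollifier (-0.7) 0.2 _)] at deform_fst
  simp only [mollifiedSlice, mul_one]
  rw [deform_snd, deform_fst]
  simpa only [mul_comm] using setIntegral_mollifier_mul_mollifier hr hQ

end Degree

section InjOnPartition

variable {α β : Type*} [MeasurableSpace α] {f : α → β} {s : Set α} {P : ℕ → Set α}

/-- `P` is a countable measurable partition of `s` into sets on which `f` is injective. -/
structure IsInjOnPartition (f : α → β) (s : Set α) (P : ℕ → Set α) : Prop where
  measurableSet : ∀ k, MeasurableSet (P k)
  disjoint : Pairwise (Function.onFun Disjoint P)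
  iUnion_eq : ⋃ k, P k = s
  injOn : ∀ k, Set.InjOn f (P k)

namespace IsInjOnPartition

lemma subset (hP : IsInjOnPartition f s P) (k : ℕ) : P k ⊆ s :=
  hP.iUnion_eq ▸ Set.subset_iUnion P k

variable [Nonempty α]

lemma invFunOn_apply (hP : IsInjOnPartition f s P) {k : ℕ} {x : α} (hx : x ∈ P k) :
    Function.invFunOn f (P k) (f x) = x :=
  (hP.injOn k).leftInvOn_invFunOn hx

open Classical in
lemma tsum_fibre {M : Type*} [AddCommMonoid M] [TopologicalSpace M]
    (hP : IsInjOnPartition f s P) (φ : α → M) (y : β) :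
    ∑' x : ↥(s ∩ f ⁻¹' {y}), φ x =
      ∑' k, (f '' P k).indicator (fun y => φ (Function.invFunOn f (P k) y)) y := by
  let e : {k | y ∈ f '' P k} → ↥(s ∩ f ⁻¹' {y}) := fun k =>
    ⟨Function.invFunOn f (P k) y, hP.subset k (Function.invFunOn_mem k.2),
      Function.invFunOn_eq k.2⟩
  have e_bijective : Function.Bijective e := by
    refine ⟨fun k l hkl => ?_, fun ⟨x, hx, hxy⟩ => ?_⟩
    · by_contra hne
      have hx : Function.invFunOn f (P k) y = Function.invFunOn f (P l) y :=
        congrArg Subtype.val hkl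
      exact Set.disjoint_left.1 (hP.disjoint (Subtype.coe_injective.ne hne))
        (Function.invFunOn_mem k.2) (hx ▸ Function.invFunOn_mem l.2)
    · rw [← hP.iUnion_eq, Set.mem_iUnion] at hx
      obtain ⟨k, hk⟩ := hx
      obtain rfl : f x = y := hxy
      exact ⟨⟨k, x, hk, rfl⟩, Subtype.ext (hP.invFunOn_apply hk)⟩
  rw [← (Equiv.ofBijective e e_bijective).tsum_eq fun x => φ x]
  exact tsum_subtype {k | y ∈ f '' P k} fun k => φ (Function.invFunOn f (P k) y)

lemma encard_fibre (hP : IsInjOnPartition f s P) (y : β) :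
    ((s ∩ f ⁻¹' {y}).encard : ℝ≥0∞) = ∑' k, (f '' P k).indicator (fun _ => 1) y := by
  rw [← ENNReal.tsum_set_one, hP.tsum_fibre fun _ => (1 : ℝ≥0∞)]

end IsInjOnPartition

end InjOnPartition

section AreaFormula

variable {E G : Type*} [NormedAddCommGroup E] [NormedSpace ℝ E] [FiniteDimensional ℝ E]
  {f : E → E} {f' : E → E →L[ℝ] E} {s : Set E} {P : ℕ → Set E}

lemma exists_injOn_of_approximatesLinearOn (A : E →L[ℝ] E) :
    ∃ c : ℝ≥0, c ≠ 0 ∧ (A.det ≠ 0 → ∀ t, ApproximatesLinearOn f A t c → Set.InjOn f t) := by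
  by_cases hA : A.det ≠ 0
  swap
  · exact ⟨1, one_ne_zero, fun h => absurd h hA⟩
  have coe_A : (A.toContinuousLinearEquivOfDetNeZero hA : E →L[ℝ] E) = A := by
    ext
    rfl
  rcases (A.toContinuousLinearEquivOfDetNeZero hA).subsingleton_or_nnnorm_symm_pos with hE | hpos
  · exact ⟨1, one_ne_zero, fun _ t _ x _ y _ _ => Subsingleton.elim x y⟩
  · refine ⟨_, (half_pos (inv_pos.2 hpos)).ne', fun _ t ht => ?_⟩
    exact (coe_A.symm ▸ ht : ApproximatesLinearOn f
      (A.toContinuousLinearEquivOfDetNeZero hA : E →L[ℝ] E) t _).injOn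
      (.inr (NNReal.half_lt_self (inv_pos.2 hpos).ne'))

variable [MeasurableSpace E] [BorelSpace E] {μ : Measure E} [NormedAddCommGroup G]

lemma exists_isInjOnPartition (hs : MeasurableSet s)
    (hf : ∀ x ∈ s, HasFDerivWithinAt f (f' x) s x) (hf' : ∀ x ∈ s, (f' x).det ≠ 0) :
    ∃ P, IsInjOnPartition f s P := by
  choose c hc₀ hc using exists_injOn_of_approximatesLinearOn (E := E) (f := f)
  obtain ⟨t, A, tdisj, tmeas, tcov, tapprox, tA⟩ :=
    exists_partition_approximatesLinearOn_of_hasFDerivWithinAt f s f' hf c hc₀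
  refine ⟨fun k => s ∩ t k, fun k => hs.inter (tmeas k), fun k l hkl =>
    (tdisj hkl).mono Set.inter_subset_right Set.inter_subset_right, ?_, fun k => ?_⟩
  · rw [← Set.inter_iUnion, Set.inter_eq_left.2 tcov]
  · rcases s.eq_empty_or_nonempty with rfl | hne
    · simp
    · obtain ⟨y, hy, hAy⟩ := tA hne k
      exact hc (A k) (hAy ▸ hf' y hy) _ (tapprox k)

variable [μ.IsAddHaarMeasure]

lemma IsInjOnPartition.measurableSet_image (hP : IsInjOnPartition f s P)
    (hf : ∀ x ∈ s, HasFDerivWithinAt f (f' x) s x) (k : ℕ) : MeasurableSet (f '' P k) :=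
  measurable_image_of_fderivWithin (hP.measurableSet k)
    (fun x hx => (hf x (hP.subset k hx)).mono (hP.subset k)) (hP.injOn k)

lemma measurable_encard_fibre (hs : MeasurableSet s)
    (hf : ∀ x ∈ s, HasFDerivWithinAt f (f' x) s x) (hf' : ∀ x ∈ s, (f' x).det ≠ 0) :
    Measurable fun y => ((s ∩ f ⁻¹' {y}).encard : ℝ≥0∞) := by
  obtain ⟨P, hP⟩ := exists_isInjOnPartition hs hf hf'
  simp only [hP.encard_fibre]
  exact Measurable.tsum fun k => measurable_const.indicator (hP.measurableSet_image hf k)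

theorem lintegral_encard_fibre (hs : MeasurableSet s)
    (hf : ∀ x ∈ s, HasFDerivWithinAt f (f' x) s x) (hf' : ∀ x ∈ s, (f' x).det ≠ 0) :
    ∫⁻ y, ((s ∩ f ⁻¹' {y}).encard : ℝ≥0∞) ∂μ = ∫⁻ x in s, ENNReal.ofReal |(f' x).det| ∂μ := by
  obtain ⟨P, hP⟩ := exists_isInjOnPartition hs hf hf'
  simp only [hP.encard_fibre]
  rw [lintegral_tsum fun k =>
      (measurable_const.indicator (hP.measurableSet_image hf k)).aemeasurable,
    ← hP.iUnion_eq, lintegral_iUnion hP.measurableSet hP.disjoint]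
  refine tsum_congr fun k => ?_
  rw [lintegral_indicator (hP.measurableSet_image hf k), setLIntegral_const, one_mul,
    lintegral_abs_det_fderiv_eq_addHaar_image μ (hP.measurableSet k)
      (fun x hx => (hf x (hP.subset k hx)).mono (hP.subset k)) (hP.injOn k)]

lemma integrable_tsum {α : Type*} [MeasurableSpace α] {μ : Measure α} [CompleteSpace G]
    {F : ℕ → α → G} (hF : ∀ k, Integrable (F k) μ) (hsum : ∑' k, ∫⁻ a, ‖F k a‖ₑ ∂μ ≠ ∞) :
    Integrable (fun a => ∑' k, F k a) μ := by
  have hmeas (k : ℕ) : AEMeasurable (fun a => ‖F k a‖ₑ) μ := (hF k).1.enorm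
  rw [← lintegral_tsum hmeas] at hsum
  have ae_summable : ∀ᵐ a ∂μ, Summable fun k => F k a := by
    filter_upwards [ae_lt_top' (AEMeasurable.tsum hmeas) hsum] with a ha
    exact .of_norm (NNReal.summable_coe.2 (ENNReal.tsum_coe_ne_top_iff_summable.1 ha.ne))
  refine ⟨aestronglyMeasurable_of_tendsto_ae atTop
    (fun n => Finset.aestronglyMeasurable_fun_sum (Finset.range n) fun k _ => (hF k).1)
    (ae_summable.mono fun a ha => ha.hasSum.tendsto_sum_nat), ?_⟩
  exact (lintegral_mono fun a => enorm_tsum_le_tsum_enorm).trans_lt hsum.lt_top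

variable [NormedSpace ℝ G] {φ : E → G}

namespace IsInjOnPartition

lemma integrable_indicator (hP : IsInjOnPartition f s P)
    (hf : ∀ x ∈ s, HasFDerivWithinAt f (f' x) s x)
    (hφ : IntegrableOn (fun x => |(f' x).det| • φ x) s μ) (k : ℕ) :
    Integrable ((f '' P k).indicator fun y => φ (Function.invFunOn f (P k) y)) μ := by
  rw [integrable_indicator_iff (hP.measurableSet_image hf k),
    integrableOn_image_iff_integrableOn_abs_det_fderiv_smul μ (hP.measurableSet k)
      (fun x hx => (hf x (hP.subset k hx)).mono (hP.subset k)) (hP.injOn k)]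
  refine (hφ.mono_set (hP.subset k)).congr_fun (fun x hx => ?_) (hP.measurableSet k)
  simp only [hP.invFunOn_apply hx]

lemma integral_indicator (hP : IsInjOnPartition f s P)
    (hf : ∀ x ∈ s, HasFDerivWithinAt f (f' x) s x) (φ : E → G) (k : ℕ) :
    ∫ y, (f '' P k).indicator (fun y => φ (Function.invFunOn f (P k) y)) y ∂μ =
      ∫ x in P k, |(f' x).det| • φ x ∂μ := by
  rw [MeasureTheory.integral_indicator (hP.measurableSet_image hf k),
    integral_image_eq_integral_abs_det_fderiv_smul μ (hP.measurableSet k)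
      (fun x hx => (hf x (hP.subset k hx)).mono (hP.subset k)) (hP.injOn k)]
  refine setIntegral_congr_fun (hP.measurableSet k) fun x hx => ?_
  simp only [hP.invFunOn_apply hx]

lemma tsum_lintegral_enorm_indicator (hP : IsInjOnPartition f s P)
    (hf : ∀ x ∈ s, HasFDerivWithinAt f (f' x) s x) (φ : E → G) :
    ∑' k, ∫⁻ y, ‖(f '' P k).indicator (fun y => φ (Function.invFunOn f (P k) y)) y‖ₑ ∂μ =
      ∫⁻ x in s, ‖|(f' x).det| • φ x‖ₑ ∂μ := by
  rw [← hP.iUnion_eq, lintegral_iUnion hP.measurableSet hP.disjoint]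
  refine tsum_congr fun k => ?_
  simp only [enorm_indicator_eq_indicator_enorm]
  rw [lintegral_indicator (hP.measurableSet_image hf k),
    lintegral_image_eq_lintegral_abs_det_fderiv_mul μ (hP.measurableSet k)
      (fun x hx => (hf x (hP.subset k hx)).mono (hP.subset k)) (hP.injOn k)]
  refine setLIntegral_congr_fun (hP.measurableSet k) fun x hx => ?_
  simp only [hP.invFunOn_apply hx, enorm_smul, Real.enorm_eq_ofReal_abs, abs_abs]

end IsInjOnPartition

theorem integrable_tsum_fibre [CompleteSpace G] (hs : MeasurableSet s)
    (hf : ∀ x ∈ s, HasFDerivWithinAt f (f' x) s x) (hf' : ∀ x ∈ s, (f' x).det ≠ 0)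
    (hφ : IntegrableOn (fun x => |(f' x).det| • φ x) s μ) :
    Integrable (fun y => ∑' x : ↥(s ∩ f ⁻¹' {y}), φ x) μ := by
  obtain ⟨P, hP⟩ := exists_isInjOnPartition hs hf hf'
  simp only [hP.tsum_fibre φ]
  exact integrable_tsum (hP.integrable_indicator hf hφ)
    ((hP.tsum_lintegral_enorm_indicator hf φ).trans_ne hφ.2.ne)

theorem integral_tsum_fibre (hs : MeasurableSet s)
    (hf : ∀ x ∈ s, HasFDerivWithinAt f (f' x) s x) (hf' : ∀ x ∈ s, (f' x).det ≠ 0)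
    (hφ : IntegrableOn (fun x => |(f' x).det| • φ x) s μ) :
    ∫ y, ∑' x : ↥(s ∩ f ⁻¹' {y}), φ x ∂μ = ∫ x in s, |(f' x).det| • φ x ∂μ := by
  obtain ⟨P, hP⟩ := exists_isInjOnPartition hs hf hf'
  simp only [hP.tsum_fibre φ]
  rw [integral_tsum (fun k => (hP.integrable_indicator hf hφ k).1)
      ((hP.tsum_lintegral_enorm_indicator hf φ).trans_ne hφ.2.ne),
    tsum_congr fun k => hP.integral_indicator hf φ k]
  rw [← hP.iUnion_eq] at hφ ⊢
  exact (integral_iUnion hP.measurableSet hP.disjoint hφ).symm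

end AreaFormula

section RegularSlices

variable {F₁ F₂ j g : ℝ × ℝ → ℝ} {Q : Set (ℝ × ℝ)}

/-- The points of the unit disc at which `(F₁, F₂)` is a differentiable map of rank two. -/
def regularSet (F₁ F₂ : ℝ × ℝ → ℝ) : Set (ℝ × ℝ) :=
  {x ∈ unitDisc | DifferentiableAt ℝ F₁ x ∧ DifferentiableAt ℝ F₂ x ∧ jacobian F₁ F₂ x ≠ 0}

/-- The points of `regularSet F₁ F₂` which `(F₁, F₂)` maps to `y`. -/
def regularFibre (F₁ F₂ : ℝ × ℝ → ℝ) (y : ℝ × ℝ) : Set (ℝ × ℝ) :=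
  regularSet F₁ F₂ ∩ (fun x => (F₁ x, F₂ x)) ⁻¹' {y}

/-- The slice `⟨⟦D²⟧, (F₁, F₂), y⟩` of the disc, evaluated at the test function `g`: the sum of `g`
over the regular fibre, each point being counted with its orientation. -/
noncomputable def slice (F₁ F₂ g : ℝ × ℝ → ℝ) (y : ℝ × ℝ) : ℝ :=
  ∑' x : regularFibre F₁ F₂ y, (SignType.sign (jacobian F₁ F₂ x) : ℝ) * g x

lemma measurableSet_regularSet (F₁ F₂ : ℝ × ℝ → ℝ) : MeasurableSet (regularSet F₁ F₂) :=
  measurableSet_unitDisc.inter <| (measurableSet_of_differentiableAt ℝ F₁).inter <|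
    (measurableSet_of_differentiableAt ℝ F₂).inter <|
      (measurable_jacobian (measurableSet_singleton 0)).compl

lemma hasFDerivWithinAt_of_mem_regularSet {x : ℝ × ℝ} (hx : x ∈ regularSet F₁ F₂) :
    HasFDerivWithinAt (fun x => (F₁ x, F₂ x)) ((fderiv ℝ F₁ x).prod (fderiv ℝ F₂ x))
      (regularSet F₁ F₂) x :=
  (hx.2.1.hasFDerivAt.prodMk hx.2.2.1.hasFDerivAt).hasFDerivWithinAt

lemma det_fderiv_prod (F₁ F₂ : ℝ × ℝ → ℝ) (x : ℝ × ℝ) :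
    ((fderiv ℝ F₁ x).prod (fderiv ℝ F₂ x)).det = jacobian F₁ F₂ x :=
  det_prod_eq _ _

lemma det_fderiv_prod_ne_zero {x : ℝ × ℝ} (hx : x ∈ regularSet F₁ F₂) :
    ((fderiv ℝ F₁ x).prod (fderiv ℝ F₂ x)).det ≠ 0 :=
  (det_fderiv_prod F₁ F₂ x).trans_ne hx.2.2.2

lemma measurable_encard_regularFibre (F₁ F₂ : ℝ × ℝ → ℝ) :
    Measurable fun y => ((regularFibre F₁ F₂ y).encard : ℝ≥0∞) :=
  measurable_encard_fibre (measurableSet_regularSet F₁ F₂)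
    (fun _ => hasFDerivWithinAt_of_mem_regularSet) fun _ => det_fderiv_prod_ne_zero

lemma IsDominatedMap.lintegral_encard_regularFibre_le (hF : IsDominatedMap Q F₁ F₂ j) :
    ∫⁻ y, ((regularFibre F₁ F₂ y).encard : ℝ≥0∞) ≤ massMeasure F₁ F₂ j Set.univ := by
  rw [hF.massMeasure_apply .univ, Set.preimage_univ, Set.univ_inter]
  refine (lintegral_encard_fibre (measurableSet_regularSet F₁ F₂)
    (fun _ => hasFDerivWithinAt_of_mem_regularSet) fun _ => det_fderiv_prod_ne_zero).trans_le ?_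
  simp only [det_fderiv_prod]
  refine (lintegral_mono_set fun x hx => hx.1).trans (lintegral_mono_ae ?_)
  filter_upwards [(ae_restrict_iff' measurableSet_unitDisc).2 hF.abs_jacobian_le] with x hx
  exact ENNReal.ofReal_le_ofReal hx

lemma integrable_slice (hF₁ : ∃ C, LipschitzWith C F₁) (hF₂ : ∃ C, LipschitzWith C F₂)
    (hg : BddLipschitz g) : Integrable (slice F₁ F₂ g) := by
  refine integrable_tsum_fibre (φ := fun x => (SignType.sign (jacobian F₁ F₂ x) : ℝ) * g x)
    (measurableSet_regularSet F₁ F₂)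
    (fun _ => hasFDerivWithinAt_of_mem_regularSet) (fun _ => det_fderiv_prod_ne_zero) ?_
  refine ((hg.integrableOn_mul_jacobian hF₁ hF₂).mono_set fun x hx => hx.1).congr
    (.of_forall fun x => ?_)
  simp only [det_fderiv_prod, smul_eq_mul, ← mul_assoc, abs_mul_sign]
  exact mul_comm _ _

lemma setIntegral_regularSet (hF₁ : ∃ C, LipschitzWith C F₁) (hF₂ : ∃ C, LipschitzWith C F₂)
    (h : ℝ × ℝ → ℝ) :
    ∫ x in regularSet F₁ F₂, h x * jacobian F₁ F₂ x =
      ∫ x in unitDisc, h x * jacobian F₁ F₂ x := by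
  refine (setIntegral_eq_of_subset_of_ae_sdiff_eq_zero measurableSet_unitDisc.nullMeasurableSet
    (fun x hx => hx.1) ?_).symm
  filter_upwards [hF₁.choose_spec.ae_differentiableAt, hF₂.choose_spec.ae_differentiableAt]
    with x h₁ h₂ hx
  rw [not_imp_comm.1 (fun h₀ => ⟨hx.1, h₁, h₂, h₀⟩) hx.2, mul_zero]

lemma mollifiedSlice_eq_integral (hF₁ : ∃ C, LipschitzWith C F₁)
    (hF₂ : ∃ C, LipschitzWith C F₂) (hg : BddLipschitz g) {r : ℝ} (hr : 0 < r) (y : ℝ × ℝ) :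
    mollifiedSlice F₁ F₂ g y r =
      ∫ z : ℝ × ℝ, mollifier y.1 r z.1 * mollifier y.2 r z.2 * slice F₁ F₂ g z := by
  let η (z : ℝ × ℝ) : ℝ := mollifier y.1 r z.1 * mollifier y.2 r z.2
  let φ (x : ℝ × ℝ) : ℝ := SignType.sign (jacobian F₁ F₂ x) * (η (F₁ x, F₂ x) * g x)
  have abs_det_smul_φ (x : ℝ × ℝ) : |((fderiv ℝ F₁ x).prod (fderiv ℝ F₂ x)).det| • φ x =
      η (F₁ x, F₂ x) * g x * jacobian F₁ F₂ x := by
    rw [det_fderiv_prod, smul_eq_mul, ← mul_assoc, abs_mul_sign, mul_comm]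
  have bddLipschitz : BddLipschitz fun x => η (F₁ x, F₂ x) * g x :=
    (((bddLipschitz_mollifier hr).comp hF₁).mul ((bddLipschitz_mollifier hr).comp hF₂)).mul hg
  have tsum_φ (z : ℝ × ℝ) : ∑' x : regularFibre F₁ F₂ z, φ x = η z * slice F₁ F₂ g z := by
    rw [slice, ← tsum_mul_left]
    refine tsum_congr fun x => ?_
    have apply_eq : (F₁ x, F₂ x) = z := x.2.2
    simp only [φ, apply_eq]
    exact mul_left_comm _ _ _
  calc mollifiedSlice F₁ F₂ g y r
      = ∫ x in regularSet F₁ F₂, η (F₁ x, F₂ x) * g x * jacobian F₁ F₂ x :=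
        (setIntegral_regularSet hF₁ hF₂ _).symm
    _ = ∫ z, ∑' x : regularFibre F₁ F₂ z, φ x := by
        simp only [← abs_det_smul_φ]
        refine (integral_tsum_fibre (measurableSet_regularSet F₁ F₂)
          (fun _ => hasFDerivWithinAt_of_mem_regularSet)
          (fun _ => det_fderiv_prod_ne_zero) ?_).symm
        simp only [abs_det_smul_φ]
        exact (bddLipschitz.integrableOn_mul_jacobian hF₁ hF₂).mono_set fun x hx => hx.1
    _ = ∫ z : ℝ × ℝ, η z * slice F₁ F₂ g z := integral_congr_ae (.of_forall tsum_φ)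

end RegularSlices

section ApproximateIdentity

variable {S : ℝ × ℝ → ℝ} {y : ℝ × ℝ} {r : ℝ}

lemma volume_closedBall_prod (y : ℝ × ℝ) (hr : 0 ≤ r) :
    volume (Metric.closedBall y r) = ENNReal.ofReal (4 * r ^ 2) := by
  rw [← closedBall_prod_same, Measure.volume_eq_prod, Measure.prod_prod, Real.volume_closedBall,
    Real.volume_closedBall, ← ENNReal.ofReal_mul (by positivity)]
  ring_nf

lemma abs_mollifier_mul_mollifier_le (hr : 0 < r) (y z : ℝ × ℝ) :
    |mollifier y.1 r z.1 * mollifier y.2 r z.2| ≤ (mollifierBound / r) ^ 2 := by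
  rw [abs_mul, sq]
  exact mul_le_mul (abs_mollifier_le hr _) (abs_mollifier_le hr _) (abs_nonneg _)
    (div_nonneg mollifierBound_nonneg hr.le)

lemma mollifier_mul_mollifier_eq_zero (hr : 0 < r) {z : ℝ × ℝ}
    (hz : z ∉ Metric.closedBall y r) : mollifier y.1 r z.1 * mollifier y.2 r z.2 = 0 := by
  contrapose! hz
  rw [← closedBall_prod_same]
  exact ⟨not_imp_comm.1 (mollifier_eq_zero hr) (left_ne_zero_of_mul hz),
    not_imp_comm.1 (mollifier_eq_zero hr) (right_ne_zero_of_mul hz)⟩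

lemma abs_integral_mollifier_mul_sub_le (hS : Integrable S) (hr : 0 < r) (y : ℝ × ℝ) :
    |(∫ z : ℝ × ℝ, mollifier y.1 r z.1 * mollifier y.2 r z.2 * S z) - S y| ≤
      4 * mollifierBound ^ 2 * ⨍ z in Metric.closedBall y r, ‖S z - S y‖ := by
  let η (z : ℝ × ℝ) : ℝ := mollifier y.1 r z.1 * mollifier y.2 r z.2
  have hη : Continuous η := ((contDiff_mollifier y.1 r).continuous.comp continuous_fst).mul
    ((contDiff_mollifier y.2 r).continuous.comp continuous_snd)
  have η_integrable : Integrable η := hη.integrable_of_hasCompactSupport <|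
    .intro (isCompact_closedBall y r) fun z => mollifier_mul_mollifier_eq_zero hr
  have integral_η : ∫ z, η z = 1 := by
    rw [Measure.volume_eq_prod, integral_prod_mul, integral_mollifier hr, integral_mollifier hr,
      one_mul]
  have ηS_integrable : Integrable fun z => η z * S z :=
    hS.bdd_mul hη.aestronglyMeasurable (.of_forall fun z => abs_mollifier_mul_mollifier_le hr y z)
  have hSy : IntegrableOn (fun z => S z - S y) (Metric.closedBall y r) :=
    hS.integrableOn.sub (integrableOn_const measure_closedBall_lt_top.ne)
  calc |(∫ z, η z * S z) - S y|
      = ‖∫ z in Metric.closedBall y r, η z * (S z - S y)‖ := by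
        rw [setIntegral_eq_integral_of_forall_compl_eq_zero fun z hz => by
          simp only [η, mollifier_mul_mollifier_eq_zero hr hz, zero_mul]]
        simp only [mul_sub]
        rw [integral_sub ηS_integrable (η_integrable.mul_const _), integral_mul_const,
          integral_η, one_mul, Real.norm_eq_abs]
    _ ≤ ∫ z in Metric.closedBall y r, (mollifierBound / r) ^ 2 * ‖S z - S y‖ := by
        refine norm_integral_le_of_norm_le (hSy.norm.const_mul _) (.of_forall fun z => ?_)
        rw [norm_mul]
        exact mul_le_mul_of_nonneg_right (abs_mollifier_mul_mollifier_le hr y z) (norm_nonneg _)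
    _ = 4 * mollifierBound ^ 2 * ⨍ z in Metric.closedBall y r, ‖S z - S y‖ := by
        rw [integral_const_mul, setAverage_eq, measureReal_def, volume_closedBall_prod y hr.le,
          ENNReal.toReal_ofReal (by positivity), smul_eq_mul]
        field_simp

lemma ae_tendsto_integral_mollifier_mul (hS : Integrable S) :
    ∀ᵐ y, Tendsto (fun r => ∫ z : ℝ × ℝ, mollifier y.1 r z.1 * mollifier y.2 r z.2 * S z)
      (𝓝[>] 0) (𝓝 (S y)) := by
  filter_upwards [IsUnifLocDoublingMeasure.ae_tendsto_average_norm_sub volume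
    hS.locallyIntegrable 1] with y hy
  have tendsto_average := (hy (l := 𝓝[>] (0 : ℝ)) (fun _ => y) id tendsto_id <| by
    filter_upwards [self_mem_nhdsWithin] with r hr
    rw [one_mul]
    exact Metric.mem_closedBall_self (Set.mem_Ioi.1 hr).le).const_mul
      (4 * mollifierBound ^ 2)
  rw [mul_zero] at tendsto_average
  refine tendsto_iff_dist_tendsto_zero.2 <|
    squeeze_zero' (.of_forall fun _ => dist_nonneg) ?_ tendsto_average
  filter_upwards [self_mem_nhdsWithin] with r hr
  exact abs_integral_mollifier_mul_sub_le hS hr y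

lemma ae_tendsto_mollifiedSlice {F₁ F₂ g : ℝ × ℝ → ℝ} (hF₁ : ∃ C, LipschitzWith C F₁)
    (hF₂ : ∃ C, LipschitzWith C F₂) (hg : BddLipschitz g) :
    ∀ᵐ y, Tendsto (mollifiedSlice F₁ F₂ g y) (𝓝[>] 0) (𝓝 (slice F₁ F₂ g y)) := by
  filter_upwards [ae_tendsto_integral_mollifier_mul (integrable_slice hF₁ hF₂ hg)] with y hy
  refine hy.congr' ?_
  filter_upwards [self_mem_nhdsWithin] with r hr
  exact (mollifiedSlice_eq_integral hF₁ hF₂ hg hr y).symm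

end ApproximateIdentity

section MaximalInequality

lemma exists_of_not_maximalBound {μ : Measure (ℝ × ℝ)} {l r : ℝ} {y : ℝ × ℝ}
    (hy : ¬ MaximalBound μ l r y) :
    ∃ ρ, 0 < ρ ∧ ρ ≤ r ∧ ENNReal.ofReal (l * ρ ^ 2) ≤ μ (Metric.closedBall y ρ) := by
  unfold MaximalBound at hy
  push Not at hy
  obtain ⟨ρ, hρ, hρr, lt_real⟩ := hy
  exact ⟨ρ, hρ, hρr, ENNReal.ofReal_le_of_le_toReal lt_real.le⟩

lemma volume_setOf_not_maximalBound_le (μ : Measure (ℝ × ℝ)) {l : ℝ} (r : ℝ) (hl : 0 < l) :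
    volume {y | ¬ MaximalBound μ l r y} ≤ ENNReal.ofReal (100 / l) * μ Set.univ := by
  choose! ρ hρ hρr hρμ using
    fun (y : ℝ × ℝ) (hy : ¬ MaximalBound μ l r y) => exists_of_not_maximalBound hy
  obtain ⟨u, hu, disjoint, covering⟩ :=
    Vitali.exists_disjoint_subfamily_covering_enlargement_closedBall
      {y | ¬ MaximalBound μ l r y} id ρ r hρr 5 (by norm_num)
  have countable : u.Countable := disjoint.countable_of_nonempty_interior fun y hy =>
    ⟨y, Metric.ball_subset_interior_closedBall (Metric.mem_ball_self (hρ y (hu hy)))⟩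
  have subset : {y | ¬ MaximalBound μ l r y} ⊆ ⋃ y ∈ u, Metric.closedBall y (5 * ρ y) := by
    intro y hy
    obtain ⟨b, hb, ball_subset⟩ := covering y hy
    exact Set.mem_biUnion hb (ball_subset (Metric.mem_closedBall_self (hρ y hy).le))
  calc volume {y | ¬ MaximalBound μ l r y}
      ≤ ∑' y : u, volume (Metric.closedBall (y : ℝ × ℝ) (5 * ρ y)) :=
        (measure_mono subset).trans (measure_biUnion_le _ countable _)
    _ ≤ ∑' y : u, ENNReal.ofReal (100 / l) * μ (Metric.closedBall (y : ℝ × ℝ) (ρ y)) := by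
        refine ENNReal.tsum_le_tsum fun y => ?_
        rw [volume_closedBall_prod _ (by linarith [hρ y (hu y.2)])]
        refine le_of_eq_of_le ?_ (mul_le_mul_right (hρμ y (hu y.2)) _)
        rw [← ENNReal.ofReal_mul (by positivity)]
        congr 1
        field_simp
        ring
    _ = ENNReal.ofReal (100 / l) * μ (⋃ y ∈ u, Metric.closedBall y (ρ y)) := by
        rw [ENNReal.tsum_mul_left]
        exact congrArg _ (measure_biUnion countable disjoint
          fun y _ => Metric.isClosed_closedBall.measurableSet).symm
    _ ≤ ENNReal.ofReal (100 / l) * μ Set.univ := by gcongr; exact Set.subset_univ _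

end MaximalInequality

section GoodValues

variable {F₁ F₂ j : ℝ × ℝ → ℝ} {gs : ℕ → ℝ × ℝ → ℝ} {C : ℝ} {N : ℕ}

lemma exists_signed_enumeration {α : Type*} {s : Set α} {N : ℕ} (hs : s.Nonempty)
    (hN : s.encard ≤ N) (w : α → SignType) :
    ∃ (p : Fin N → α) (σ : Fin N → SignType), (∀ k, p k ∈ s) ∧
      ∀ g : α → ℝ, ∑' x : s, (w x : ℝ) * g x = ∑ k, (σ k : ℝ) * g (p k) := by
  obtain ⟨x₀, hx₀⟩ := hs
  have : Fintype s := (Set.finite_of_encard_le_coe hN).fintype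
  obtain ⟨ι⟩ : Nonempty (s ↪ Fin N) := Function.Embedding.nonempty_of_card_le <| by
    rwa [Fintype.card_fin, ← Nat.card_eq_fintype_card, ← Nat.cast_le (α := ℕ∞),
      ← ENat.card_eq_coe_natCard]
  refine ⟨Function.extend ι (↑) fun _ => x₀, Function.extend ι (fun x => w x) 0,
    fun k => ?_, fun g => ?_⟩
  · by_cases hk : ∃ x, ι x = k
    · obtain ⟨x, rfl⟩ := hk
      rw [ι.injective.extend_apply]
      exact x.2
    · rwa [Function.extend_apply' _ _ _ hk]
  · rw [tsum_fintype]
    refine Fintype.sum_of_injective ι ι.injective _ _ (fun k hk => ?_) fun x => ?_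
    · rw [Function.extend_apply' (f := ι) _ 0 _ hk, Pi.zero_apply, SignType.coe_zero, zero_mul]
    · rw [ι.injective.extend_apply, ι.injective.extend_apply]

lemma isOpen_testRectangle : IsOpen testRectangle :=
  (isOpen_lt continuous_fst.abs continuous_const).inter <|
    (isOpen_lt continuous_const continuous_snd).inter <| isOpen_lt continuous_snd continuous_const

lemma IsDegreeOneBoundary.ae_slice_one (hF : IsDegreeOneBoundary F₁ F₂)
    (hF₁ : ∃ C, LipschitzWith C F₁) (hF₂ : ∃ C, LipschitzWith C F₂) :
    ∀ᵐ y, y ∈ testRectangle → slice F₁ F₂ (fun _ => 1) y = 1 := by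
  filter_upwards [ae_tendsto_mollifiedSlice hF₁ hF₂ (bddLipschitz_const 1)] with y hy hyQ
  refine tendsto_nhds_unique hy (tendsto_const_nhds.congr' ?_)
  obtain ⟨ε, hε, ball_subset⟩ :=
    Metric.nhds_basis_closedBall.mem_iff.1 (isOpen_testRectangle.mem_nhds hyQ)
  filter_upwards [self_mem_nhdsWithin, nhdsWithin_le_nhds (Iic_mem_nhds hε)] with r hr hrε
  exact (hF.mollifiedSlice_one hF₁ hF₂ hr
    ((Metric.closedBall_subset_closedBall hrε).trans ball_subset)).symm

/-- A square well inside `testRectangle`, from which the values to slice at are taken. -/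
def innerSquare : Set (ℝ × ℝ) := Metric.closedBall (0, 1 / 8) (1 / 16)

lemma volume_innerSquare : volume innerSquare = ENNReal.ofReal (1 / 64) := by
  rw [innerSquare, volume_closedBall_prod _ (by norm_num)]
  norm_num

lemma closedBall_subset_testRectangle {y : ℝ × ℝ} (hy : y ∈ innerSquare) :
    Metric.closedBall y (1 / 32) ⊆ testRectangle := by
  intro z hz
  rw [innerSquare, ← closedBall_prod_same, Set.mem_prod, Real.closedBall_eq_Icc,
    Real.closedBall_eq_Icc] at hy
  rw [← closedBall_prod_same, Set.mem_prod, Real.closedBall_eq_Icc, Real.closedBall_eq_Icc] at hz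
  obtain ⟨⟨hy₁, hy₁'⟩, hy₂, hy₂'⟩ := hy
  obtain ⟨⟨hz₁, hz₁'⟩, hz₂, hz₂'⟩ := hz
  norm_num at hy₁ hy₁' hy₂ hy₂'
  exact ⟨abs_lt.2 ⟨by linarith, by linarith⟩, by linarith, by linarith⟩

lemma innerSquare_subset_testRectangle : innerSquare ⊆ testRectangle := fun _ hy =>
  closedBall_subset_testRectangle hy (Metric.mem_closedBall_self (by norm_num))

/-- The values `y` at which the slice of a disc of area at most `C` is well behaved: its maximal
function is bounded, it has at most `N` points and total weight one, and it is the limit of the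
mollified slices when tested against each `gs i`. -/
def goodValues (F₁ F₂ j : ℝ × ℝ → ℝ) (gs : ℕ → ℝ × ℝ → ℝ) (C : ℝ) (N : ℕ) : Set (ℝ × ℝ) :=
  {y ∈ innerSquare | MaximalBound (massMeasure F₁ F₂ j) (25600 * C) (1 / 32) y ∧
    ((regularFibre F₁ F₂ y).encard : ℝ≥0∞) ≤ N ∧ slice F₁ F₂ (fun _ => 1) y = 1 ∧
    ∀ i, Tendsto (mollifiedSlice F₁ F₂ (gs i) y) (𝓝[>] 0) (𝓝 (slice F₁ F₂ (gs i) y))}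

lemma volume_setOf_le_encard_le (hF : IsDominatedMap testRectangle F₁ F₂ j) (hC : 1 ≤ C)
    (hmass : massMeasure F₁ F₂ j Set.univ ≤ ENNReal.ofReal C) (hN : 256 * C ≤ N) :
    volume {y | (N : ℝ≥0∞) ≤ (regularFibre F₁ F₂ y).encard} ≤ ENNReal.ofReal (1 / 256) := by
  have N_pos : (0 : ℝ) < N := by linarith
  calc volume {y | (N : ℝ≥0∞) ≤ (regularFibre F₁ F₂ y).encard}
      ≤ (∫⁻ y, ((regularFibre F₁ F₂ y).encard : ℝ≥0∞)) / N :=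
        meas_ge_le_lintegral_div (measurable_encard_regularFibre F₁ F₂).aemeasurable
          (by exact_mod_cast N_pos.ne') (ENNReal.natCast_ne_top N)
    _ ≤ ENNReal.ofReal C / N :=
        ENNReal.div_le_div_right (hF.lintegral_encard_regularFibre_le.trans hmass) _
    _ ≤ ENNReal.ofReal (1 / 256) := by
        rw [← ENNReal.ofReal_natCast, ← ENNReal.ofReal_div_of_pos N_pos]
        refine ENNReal.ofReal_le_ofReal ((div_le_iff₀ N_pos).2 ?_)
        linarith

lemma volume_setOf_not_maximalBound_massMeasure_le (hC : 1 ≤ C)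
    (hmass : massMeasure F₁ F₂ j Set.univ ≤ ENNReal.ofReal C) :
    volume {y | ¬ MaximalBound (massMeasure F₁ F₂ j) (25600 * C) (1 / 32) y} ≤
      ENNReal.ofReal (1 / 256) := by
  refine (volume_setOf_not_maximalBound_le _ _ (by positivity)).trans ?_
  refine (mul_le_mul_right hmass _).trans_eq ?_
  rw [← ENNReal.ofReal_mul (by positivity)]
  congr 1
  field_simp
  norm_num

lemma le_volume_goodValues (hF : IsDominatedMap testRectangle F₁ F₂ j)
    (hdeg : IsDegreeOneBoundary F₁ F₂) (hgs : ∀ i, BddLipschitz (gs i)) (hC : 1 ≤ C)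
    (hmass : massMeasure F₁ F₂ j Set.univ ≤ ENNReal.ofReal C) (hN : 256 * C ≤ N) :
    ENNReal.ofReal (1 / 128) ≤ volume (goodValues F₁ F₂ j gs C N) := by
  let maximal := {y | ¬ MaximalBound (massMeasure F₁ F₂ j) (25600 * C) (1 / 32) y}
  let crowded := {y | (N : ℝ≥0∞) ≤ (regularFibre F₁ F₂ y).encard}
  let null := {y | ¬ ((y ∈ testRectangle → slice F₁ F₂ (fun _ => 1) y = 1) ∧
    ∀ i, Tendsto (mollifiedSlice F₁ F₂ (gs i) y) (𝓝[>] 0) (𝓝 (slice F₁ F₂ (gs i) y)))}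
  have volume_null : volume null = 0 := ae_iff.1 <|
    (hdeg.ae_slice_one hF.lipschitz_fst hF.lipschitz_snd).and <| ae_all_iff.2 fun i =>
      ae_tendsto_mollifiedSlice hF.lipschitz_fst hF.lipschitz_snd (hgs i)
  have subset : innerSquare ⊆ goodValues F₁ F₂ j gs C N ∪ (maximal ∪ crowded ∪ null) := by
    intro y hy
    by_contra! bad
    simp only [Set.mem_union, not_or] at bad
    obtain ⟨notMem, ⟨h_max, h_crowd⟩, h_null⟩ := bad
    obtain ⟨slice_one, tendsto⟩ := not_not.1 h_null
    exact notMem ⟨hy, not_not.1 h_max, (not_le.1 h_crowd).le,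
      slice_one (innerSquare_subset_testRectangle hy), tendsto⟩
  have volume_bad : volume (maximal ∪ crowded ∪ null) ≤ ENNReal.ofReal (1 / 128) :=
    calc volume (maximal ∪ crowded ∪ null)
        ≤ volume maximal + volume crowded + volume null :=
          (measure_union_le _ _).trans (add_le_add_left (measure_union_le _ _) _)
      _ ≤ ENNReal.ofReal (1 / 256) + ENNReal.ofReal (1 / 256) + 0 :=
          add_le_add (add_le_add (volume_setOf_not_maximalBound_massMeasure_le hC hmass)
            (volume_setOf_le_encard_le hF hC hmass hN)) volume_null.le
      _ = ENNReal.ofReal (1 / 128) := by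
          rw [add_zero, ← ENNReal.ofReal_add (by norm_num) (by norm_num)]
          norm_num
  refine (ENNReal.add_le_add_iff_right ENNReal.ofReal_ne_top).1 <|
    calc ENNReal.ofReal (1 / 128) + ENNReal.ofReal (1 / 128)
        = volume innerSquare := by
          rw [volume_innerSquare, ← ENNReal.ofReal_add (by norm_num) (by norm_num)]
          norm_num
      _ ≤ volume (goodValues F₁ F₂ j gs C N) + ENNReal.ofReal (1 / 128) :=
          (measure_mono subset).trans <| (measure_union_le _ _).trans <|
            add_le_add_right volume_bad _

theorem exists_lipschitz_slices (hF : IsDominatedMap testRectangle F₁ F₂ j)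
    (hdeg : IsDegreeOneBoundary F₁ F₂) (hgs : ∀ i, IsDominatedTest F₁ F₂ j (gs i)) (hC : 1 ≤ C)
    (hmass : massMeasure F₁ F₂ j Set.univ ≤ ENNReal.ofReal C) (hN : 256 * C ≤ N) :
    ∃ G ⊆ innerSquare, ENNReal.ofReal (1 / 128) ≤ volume G ∧
      ∃ (p : ℝ × ℝ → Fin N → ℝ × ℝ) (σ : ℝ × ℝ → Fin N → SignType), ∀ y ∈ G,
        (∀ k, p y k ∈ unitDisc ∧ (F₁ (p y k), F₂ (p y k)) = y) ∧ ∑ k, (σ y k : ℝ) = 1 ∧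
        ∀ y' ∈ G, dist y y' ≤ 1 / 64 → ∀ i,
          |∑ k, (σ y k : ℝ) * gs i (p y k) - ∑ k, (σ y' k : ℝ) * gs i (p y' k)| ≤
            20 * mollifierBound * (25600 * C) * dist y y' := by
  have enumeration (y : ℝ × ℝ) (hy : y ∈ goodValues F₁ F₂ j gs C N) :
      ∃ (p : Fin N → ℝ × ℝ) (σ : Fin N → SignType), (∀ k, p k ∈ regularFibre F₁ F₂ y) ∧
        ∀ g, slice F₁ F₂ g y = ∑ k, (σ k : ℝ) * g (p k) := by
    refine exists_signed_enumeration (Set.nonempty_iff_ne_empty.2 fun empty => ?_)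
      (by exact_mod_cast hy.2.2.1) fun x => SignType.sign (jacobian F₁ F₂ x)
    have slice_one := hy.2.2.2.1
    rw [slice, empty, tsum_empty] at slice_one
    exact zero_ne_one slice_one
  choose! p σ hp hσ using enumeration
  refine ⟨goodValues F₁ F₂ j gs C N, fun y hy => hy.1,
    le_volume_goodValues hF hdeg (fun i => (hgs i).bddLipschitz) hC hmass hN, p, σ,
    fun y hy => ⟨fun k => ⟨(hp y hy k).1.1, (hp y hy k).2⟩, ?_, fun y' hy' dist_le i => ?_⟩⟩
  · simpa only [mul_one] using (hσ y hy fun _ => 1).symm.trans hy.2.2.2.1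
  · rw [← hσ y hy, ← hσ y' hy']
    exact hF.abs_slice_sub_le (hgs i) (closedBall_subset_testRectangle hy.1)
      (closedBall_subset_testRectangle hy'.1) hy.2.1 hy'.2.1 (hy.2.2.2.2 i) (hy'.2.2.2.2 i)
      (by linarith)

end GoodValues

section MetricDerivative

variable {Y : Type u} [PseudoMetricSpace Y] {Φ φ : ℝ × ℝ → Y} {α β : Y → ℝ} {K L : ℝ≥0}
  {x : ℝ × ℝ}

lemma eventually_dist_div_le (hΦ : LipschitzWith K Φ) (x v : ℝ × ℝ) :
    ∀ᶠ r in 𝓝[>] (0 : ℝ), dist (Φ (x + r • v)) (Φ x) / r ≤ K * ‖v‖ := by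
  filter_upwards [self_mem_nhdsWithin] with r (hr : 0 < r)
  rw [div_le_iff₀ hr]
  refine (hΦ.dist_le_mul _ _).trans_eq ?_
  rw [dist_eq_norm, add_sub_cancel_left, norm_smul, Real.norm_of_nonneg hr.le]
  ring

lemma isBoundedUnder_dist_div (hΦ : LipschitzWith K Φ) (x v : ℝ × ℝ) :
    IsBoundedUnder (· ≤ ·) (𝓝[>] (0 : ℝ)) fun r : ℝ => dist (Φ (x + r • v)) (Φ x) / r :=
  isBoundedUnder_of_eventually_le (eventually_dist_div_le hΦ x v)

lemma isCoboundedUnder_dist_div (Φ : ℝ × ℝ → Y) (x v : ℝ × ℝ) :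
    IsCoboundedUnder (· ≤ ·) (𝓝[>] (0 : ℝ)) fun r : ℝ => dist (Φ (x + r • v)) (Φ x) / r := by
  refine (isBoundedUnder_of_eventually_ge (a := 0) ?_).isCoboundedUnder_le
  filter_upwards [self_mem_nhdsWithin] with r hr
  exact div_nonneg dist_nonneg (Set.mem_Ioi.1 hr).le

lemma mder_le (hΦ : LipschitzWith K Φ) (x v : ℝ × ℝ) : mder Φ x v ≤ K * ‖v‖ :=
  limsup_le_of_le (isCoboundedUnder_dist_div Φ x v) (eventually_dist_div_le hΦ x v)

lemma mder_le_one_iff (hΦ : LipschitzWith K Φ) (x v : ℝ × ℝ) :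
    mder Φ x v ≤ 1 ↔ ∀ m : ℕ, ∃ n : ℕ, ∀ r ∈ Set.Ioo 0 (1 / ((n : ℝ) + 1)),
      dist (Φ (x + r • v)) (Φ x) ≤ (1 + 1 / ((m : ℝ) + 1)) * r := by
  rw [mder, limsup_le_iff (isCoboundedUnder_dist_div Φ x v) (isBoundedUnder_dist_div hΦ x v)]
  refine ⟨fun h m => ?_, fun h b hb => ?_⟩
  · obtain ⟨ε, hε, subset⟩ := mem_nhdsGT_iff_exists_Ioo_subset.1
      (h (1 + 1 / ((m : ℝ) + 1)) (lt_add_of_pos_right _ (by positivity)))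
    obtain ⟨n, hn⟩ := exists_nat_one_div_lt (Set.mem_Ioi.1 hε)
    exact ⟨n, fun r hr => ((div_lt_iff₀ hr.1).1 (subset ⟨hr.1, hr.2.trans hn⟩)).le⟩
  · obtain ⟨m, hm⟩ := exists_nat_one_div_lt (sub_pos.2 hb)
    obtain ⟨n, hn⟩ := h m
    filter_upwards [Ioo_mem_nhdsGT (show (0 : ℝ) < 1 / ((n : ℝ) + 1) by positivity)] with r hr
    rw [div_lt_iff₀ hr.1]
    exact (hn r hr).trans_lt (mul_lt_mul_of_pos_right (by linarith) hr.1)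

lemma measurableSet_mder_le_one (hΦ : LipschitzWith K Φ) :
    MeasurableSet {z : (ℝ × ℝ) × (ℝ × ℝ) | mder Φ z.1 z.2 ≤ 1} := by
  simp only [mder_le_one_iff hΦ]
  refine measurableSet_setOfPred.2 (.forall fun m => .exists fun n => measurableSet_setOfPred.1 ?_)
  simp only [Set.ofPred_forall]
  have hcont := hΦ.continuous
  exact (isClosed_biInter fun r _ =>
    isClosed_le (by fun_prop) continuous_const).measurableSet

lemma measurable_jac2_mder (hΦ : LipschitzWith K Φ) : Measurable fun x => jac2 (mder Φ x) := by
  have measurable_volume : Measurable fun x => volume {v : ℝ × ℝ | mder Φ x v ≤ 1} :=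
    measurable_measure_prodMk_left (measurableSet_mder_le_one hΦ)
  exact Measurable.ite (measurableSet_lt measurable_volume measurable_const)
    (measurable_const.div measurable_volume.ennreal_toReal) measurable_const

lemma jac2_nonneg (s : ℝ × ℝ → ℝ) : 0 ≤ jac2 s := by
  unfold jac2
  split_ifs
  · positivity
  · exact le_rfl

lemma le_volume_mder_le_one (hΦ : LipschitzWith K Φ) (x : ℝ × ℝ) :
    ENNReal.ofReal (4 * (1 / ((K : ℝ) + 1)) ^ 2) ≤ volume {v : ℝ × ℝ | mder Φ x v ≤ 1} := by
  rw [← volume_closedBall_prod 0 (by positivity)]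
  refine measure_mono fun v hv => (mder_le hΦ x v).trans ?_
  rw [mem_closedBall_zero_iff, le_div_iff₀ (by positivity)] at hv
  linarith [norm_nonneg v]

lemma le_volume_mder_le_one_toReal (hΦ : LipschitzWith K Φ)
    (hx : volume {v : ℝ × ℝ | mder Φ x v ≤ 1} < ⊤) :
    4 * (1 / ((K : ℝ) + 1)) ^ 2 ≤ (volume {v : ℝ × ℝ | mder Φ x v ≤ 1}).toReal :=
  (ENNReal.ofReal_le_iff_le_toReal hx.ne).1 (le_volume_mder_le_one hΦ x)

lemma jac2_mder_le (hΦ : LipschitzWith K Φ) (x : ℝ × ℝ) :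
    jac2 (mder Φ x) ≤ Real.pi / (4 * (1 / ((K : ℝ) + 1)) ^ 2) := by
  unfold jac2
  split_ifs with hx
  · exact div_le_div_of_nonneg_left Real.pi_pos.le (by positivity)
      (le_volume_mder_le_one_toReal hΦ hx)
  · positivity

lemma integrableOn_jac2_mder (hΦ : LipschitzWith K Φ) :
    IntegrableOn (fun x => jac2 (mder Φ x)) unitDisc :=
  Measure.integrableOn_of_bounded volume_unitDisc_lt_top.ne
    (measurable_jac2_mder hΦ).aestronglyMeasurable <| .of_forall fun x =>
      (Real.norm_of_nonneg (jac2_nonneg _)).trans_le (jac2_mder_le hΦ x)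

lemma mder_congr (h : Set.EqOn φ Φ unitDisc) (hx : x ∈ unitDisc) : mder φ x = mder Φ x := by
  funext v
  have tendsto : Tendsto (fun r : ℝ => x + r • v) (𝓝[>] 0) (𝓝 x) :=
    ((by fun_prop : Continuous fun r : ℝ => x + r • v).tendsto' 0 x (by
      rw [zero_smul, add_zero])).mono_left nhdsWithin_le_nhds
  refine limsup_congr ?_
  filter_upwards [tendsto.eventually (isOpen_unitDisc.mem_nhds hx)] with r hr
  rw [h hr, h hx]

lemma lipArea_eq_setIntegral_unitDisc (h : Set.EqOn φ Φ unitDisc) :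
    lipArea φ = ∫ x in unitDisc, jac2 (mder Φ x) := by
  rw [lipArea, setIntegral_congr_set D2_ae_eq_unitDisc]
  exact setIntegral_congr_fun measurableSet_unitDisc fun x hx => by rw [mder_congr h hx]

lemma abs_fderiv_comp_le_mder (hΦ : LipschitzWith K Φ) (hα : LipschitzWith L α)
    (hx : DifferentiableAt ℝ (fun z => α (Φ z)) x) (v : ℝ × ℝ) :
    |fderiv ℝ (fun z => α (Φ z)) x v| ≤ L * mder Φ x v := by
  have hasDerivAt : HasDerivAt (fun t : ℝ => α (Φ (x + t • v)))
      (fderiv ℝ (fun z => α (Φ z)) x v) 0 :=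
    hx.hasFDerivAt.hasLineDerivAt v
  have tendsto_slope := hasDerivAt.tendsto_slope_zero_right.abs
  simp only [zero_add, zero_smul, add_zero, smul_eq_mul] at tendsto_slope
  have tendsto_mul : Tendsto (fun b => (L : ℝ) * b)
      (𝓝[>] mder Φ x v) (𝓝 ((L : ℝ) * mder Φ x v)) :=
    ((continuous_const_mul (L : ℝ)).tendsto _).mono_left nhdsWithin_le_nhds
  refine ge_of_tendsto tendsto_mul (eventually_mem_nhdsWithin.mono fun b hb => ?_)
  refine le_of_tendsto tendsto_slope ?_
  filter_upwards [self_mem_nhdsWithin,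
    eventually_lt_of_limsup_lt hb (isBoundedUnder_dist_div hΦ x v)] with t (ht : 0 < t) lt_b
  calc |t⁻¹ * (α (Φ (x + t • v)) - α (Φ x))|
      = dist (α (Φ (x + t • v))) (α (Φ x)) / t := by
        rw [abs_mul, abs_inv, abs_of_pos ht, inv_mul_eq_div, Real.dist_eq]
    _ ≤ L * (dist (Φ (x + t • v)) (Φ x) / t) := by
        rw [← mul_div_assoc]
        exact div_le_div_of_nonneg_right (hα.dist_le_mul _ _) ht.le
    _ ≤ L * b := by gcongr

lemma abs_jacobian_comp_le_jac2_mder (hΦ : LipschitzWith K Φ) (hα : LipschitzWith L α)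
    (hβ : LipschitzWith L β) (hαx : DifferentiableAt ℝ (fun z => α (Φ z)) x)
    (hβx : DifferentiableAt ℝ (fun z => β (Φ z)) x) :
    |jacobian (fun z => α (Φ z)) (fun z => β (Φ z)) x| ≤
      4 / Real.pi * L ^ 2 * jac2 (mder Φ x) := by
  set J := jacobian (fun z => α (Φ z)) (fun z => β (Φ z)) x
  rcases eq_or_ne J 0 with J_zero | J_ne
  · rw [J_zero, abs_zero]
    exact mul_nonneg (by positivity) (jac2_nonneg _)
  let A := (fderiv ℝ (fun z => α (Φ z)) x).prod (fderiv ℝ (fun z => β (Φ z)) x)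
  have det_A : A.det = J := det_prod_eq _ _
  have subset : {v : ℝ × ℝ | mder Φ x v ≤ 1} ⊆ A ⁻¹' Metric.closedBall 0 L := by
    intro v hv
    rw [Set.mem_preimage, mem_closedBall_zero_iff]
    exact max_le
      ((abs_fderiv_comp_le_mder hΦ hα hαx v).trans (mul_le_of_le_one_right L.2 hv))
      ((abs_fderiv_comp_le_mder hΦ hβ hβx v).trans (mul_le_of_le_one_right L.2 hv))
  have volume_le : volume {v : ℝ × ℝ | mder Φ x v ≤ 1} ≤
      ENNReal.ofReal (|J|⁻¹ * (4 * L ^ 2)) := by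
    refine (measure_mono subset).trans_eq ?_
    rw [Measure.addHaar_preimage_continuousLinearMap _ (det_A.trans_ne J_ne), ← abs_inv,
      volume_closedBall_prod _ L.coe_nonneg, ENNReal.ofReal_mul (abs_nonneg _), ← det_A]
  have finite := volume_le.trans_lt ENNReal.ofReal_lt_top
  have V_pos : 0 < (volume {v : ℝ × ℝ | mder Φ x v ≤ 1}).toReal :=
    lt_of_lt_of_le (by positivity) (le_volume_mder_le_one_toReal hΦ finite)
  have V_le := ENNReal.toReal_le_of_le_ofReal (by positivity) volume_le
  rw [← div_eq_inv_mul, le_div_iff₀ (abs_pos.2 J_ne)] at V_le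
  rw [jac2, if_pos finite]
  calc |J| ≤ 4 * L ^ 2 / (volume {v : ℝ × ℝ | mder Φ x v ≤ 1}).toReal := by
        rw [le_div_iff₀ V_pos]
        linarith
    _ = 4 / Real.pi * L ^ 2 *
          (Real.pi / (volume {v : ℝ × ℝ | mder Φ x v ≤ 1}).toReal) := by
        field_simp

lemma ae_abs_jacobian_comp_le_jac2_mder (hΦ : LipschitzWith K Φ) (hα : LipschitzWith L α)
    (hβ : LipschitzWith L β) :
    ∀ᵐ x, |jacobian (fun z => α (Φ z)) (fun z => β (Φ z)) x| ≤
      4 / Real.pi * L ^ 2 * jac2 (mder Φ x) := by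
  filter_upwards [(hα.comp hΦ).ae_differentiableAt, (hβ.comp hΦ).ae_differentiableAt] with x hαx hβx
  exact abs_jacobian_comp_le_jac2_mder hΦ hα hβ hαx hβx

end MetricDerivative

section BoundaryLoop

variable {Y : Type u}

lemma exists_angle_of_nonneg {p : ℝ × ℝ} (hp : p ∈ unitCircle) (hp₂ : 0 ≤ p.2) :
    ∃ s ∈ Set.Icc (0 : ℝ) (1 / 2),
      (Real.cos (2 * Real.pi * s), Real.sin (2 * Real.pi * s)) = p := by
  have hp : p.1 ^ 2 + p.2 ^ 2 = 1 := hp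
  have angle_eq : 2 * Real.pi * (Real.arccos p.1 / (2 * Real.pi)) = Real.arccos p.1 :=
    mul_div_cancel₀ _ Real.two_pi_pos.ne'
  refine ⟨Real.arccos p.1 / (2 * Real.pi),
    ⟨div_nonneg (Real.arccos_nonneg _) Real.two_pi_pos.le, ?_⟩, ?_⟩
  · rw [div_le_iff₀ Real.two_pi_pos]
    linarith [Real.arccos_le_pi p.1]
  · rw [angle_eq, Real.cos_arccos (by nlinarith) (by nlinarith), Real.sin_arccos,
      show 1 - p.1 ^ 2 = p.2 ^ 2 by linarith, Real.sqrt_sq hp₂]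

lemma exists_angle_of_nonpos {p : ℝ × ℝ} (hp : p ∈ unitCircle) (hp₂ : p.2 ≤ 0) :
    ∃ s ∈ Set.Icc (1 / 2 : ℝ) 1,
      (Real.cos (2 * Real.pi * s), Real.sin (2 * Real.pi * s)) = p := by
  have conj_mem : (p.1, -p.2) ∈ unitCircle := by
    change p.1 ^ 2 + (-p.2) ^ 2 = 1
    rwa [neg_sq]
  obtain ⟨s, hs, angle⟩ := exists_angle_of_nonneg conj_mem (neg_nonneg.2 hp₂)
  rw [Prod.mk.injEq] at angle
  refine ⟨1 - s, ⟨by linarith [hs.2], by linarith [hs.1]⟩, ?_⟩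
  rw [mul_one_sub, Real.cos_two_pi_sub, Real.sin_two_pi_sub, angle.1, angle.2, neg_neg]

lemma loopLength_le [PseudoEMetricSpace Y] {γ : ℝ → Y} {K : ℝ≥0}
    (hγ : LipschitzOnWith K γ (Set.Icc 0 1)) : loopLength γ ≤ K := by
  refine ENNReal.toReal_mono ENNReal.coe_ne_top ?_
  calc eVariationOn γ (Set.Icc 0 1)
      ≤ K * eVariationOn id (Set.Icc (0 : ℝ) 1) := hγ.comp_eVariationOn_le (Set.mapsTo_id _)
    _ ≤ K * 1 := by
        gcongr
        simp
    _ = K := mul_one _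

/-- A geodesic `g` on `[-r, r]` together with a curve `c` of length at most `68 * r` which joins its
endpoints outside of the ball of radius `r` about its midpoint. -/
structure IsFatBigon [PseudoMetricSpace Y] (r : ℝ) (g c : ℝ → Y) : Prop where
  pos : 0 < r
  isGeodesicOn : IsGeodesicOn g (Set.Icc (-r) r)
  lipschitzOnWith : LipschitzOnWith 1 c (Set.Icc 0 (68 * r))
  mapsTo : Set.MapsTo c (Set.Icc 0 (68 * r)) (Metric.ball (g 0) r)ᶜ
  apply_zero : c 0 = g r
  apply_end : c (68 * r) = g (-r)

/-- The boundary loop of a fat bigon; the lower half of the circle projects to the geodesic. -/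
noncomputable def boundaryLoop (r : ℝ) (g c : ℝ → Y) (s : ℝ) : Y :=
  if s ≤ 1 / 2 then c (136 * r * s) else g (r * Real.cos (2 * Real.pi * s))

lemma boundaryLoop_of_le (r : ℝ) (g c : ℝ → Y) {s : ℝ} (hs : s ≤ 1 / 2) :
    boundaryLoop r g c s = c (136 * r * s) :=
  if_pos hs

lemma mul_mem_Icc {r t : ℝ} (hr : 0 ≤ r) (ht : t ∈ Set.Icc (-1 : ℝ) 1) :
    r * t ∈ Set.Icc (-r) r :=
  ⟨by nlinarith [ht.1], mul_le_of_le_one_right hr ht.2⟩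

namespace IsFatBigon

variable [PseudoMetricSpace Y] {r : ℝ} {g c : ℝ → Y}

lemma boundaryLoop_of_ge (h : IsFatBigon r g c) {s : ℝ} (hs : 1 / 2 ≤ s) :
    boundaryLoop r g c s = g (r * Real.cos (2 * Real.pi * s)) := by
  rcases hs.eq_or_lt with rfl | hs
  · rw [boundaryLoop_of_le r g c le_rfl, show 136 * r * (1 / 2) = 68 * r by ring, h.apply_end,
      show 2 * Real.pi * (1 / 2) = Real.pi by ring, Real.cos_pi, mul_neg_one]
  · exact if_neg hs.not_ge

lemma lipschitzOnWith_boundaryLoop (h : IsFatBigon r g c) :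
    LipschitzOnWith (136 * r).toNNReal (boundaryLoop r g c) (Set.Icc 0 1) := by
  have r_pos := h.pos
  have coe_eq : ((136 * r).toNNReal : ℝ) = 136 * r := Real.coe_toNNReal _ (by positivity)
  refine lipschitzOnWith_Icc_union (b := 1 / 2) (.of_dist_le_mul fun s hs t ht => ?_)
    (.of_dist_le_mul fun s hs t ht => ?_)
  · have mem {s : ℝ} (hs : s ∈ Set.Icc (0 : ℝ) (1 / 2)) : 136 * r * s ∈ Set.Icc 0 (68 * r) :=
      ⟨mul_nonneg (by positivity) hs.1, by nlinarith [hs.2]⟩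
    rw [boundaryLoop_of_le _ _ _ hs.2, boundaryLoop_of_le _ _ _ ht.2, coe_eq]
    refine (h.lipschitzOnWith.dist_le_mul _ (mem hs) _ (mem ht)).trans_eq ?_
    rw [NNReal.coe_one, one_mul, Real.dist_eq, Real.dist_eq, ← mul_sub, abs_mul,
      abs_of_pos (by positivity)]
  · have mem (s : ℝ) : r * Real.cos (2 * Real.pi * s) ∈ Set.Icc (-r) r :=
      mul_mem_Icc r_pos.le (Real.cos_mem_Icc _)
    rw [h.boundaryLoop_of_ge hs.1, h.boundaryLoop_of_ge ht.1, h.isGeodesicOn _ (mem s) _ (mem t),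
      coe_eq]
    calc |r * Real.cos (2 * Real.pi * s) - r * Real.cos (2 * Real.pi * t)|
        = r * |Real.cos (2 * Real.pi * s) - Real.cos (2 * Real.pi * t)| := by
          rw [← mul_sub, abs_mul, abs_of_pos r_pos]
      _ ≤ r * |2 * Real.pi * s - 2 * Real.pi * t| := by
          exact mul_le_mul_of_nonneg_left (Real.abs_cos_sub_cos_le _ _) r_pos.le
      _ = 2 * Real.pi * (r * dist s t) := by
          rw [← mul_sub, abs_mul, abs_of_pos Real.two_pi_pos, Real.dist_eq]
          ring
      _ ≤ 136 * (r * dist s t) := by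
          gcongr
          linarith [Real.pi_le_four]
      _ = 136 * r * dist s t := (mul_assoc _ _ _).symm

lemma isLipLoop_boundaryLoop (h : IsFatBigon r g c) : IsLipLoop (boundaryLoop r g c) := by
  refine ⟨⟨_, h.lipschitzOnWith_boundaryLoop⟩, ?_⟩
  rw [boundaryLoop_of_le _ _ _ (by norm_num), mul_zero, h.apply_zero,
    h.boundaryLoop_of_ge (by norm_num), mul_one, Real.cos_two_pi, mul_one]

lemma loopLength_boundaryLoop_le (h : IsFatBigon r g c) :
    loopLength (boundaryLoop r g c) ≤ 136 * r :=
  (loopLength_le h.lipschitzOnWith_boundaryLoop).trans_eq <|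
    Real.coe_toNNReal _ (mul_nonneg (by norm_num) h.pos.le)

variable {φ : ℝ × ℝ → Y} {p : ℝ × ℝ}

lemma apply_of_nonpos (h : IsFatBigon r g c) (hφ : BoundsLoop φ (boundaryLoop r g c))
    (hp : p ∈ unitCircle) (hp₂ : p.2 ≤ 0) : φ p = g (r * p.1) := by
  obtain ⟨s, hs, rfl⟩ := exists_angle_of_nonpos hp hp₂
  rw [hφ.2 s ⟨by linarith [hs.1], hs.2⟩, h.boundaryLoop_of_ge hs.1]

lemma le_dist_of_nonneg (h : IsFatBigon r g c) (hφ : BoundsLoop φ (boundaryLoop r g c))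
    (hp : p ∈ unitCircle) (hp₂ : 0 ≤ p.2) : r ≤ dist (φ p) (g 0) := by
  obtain ⟨s, hs, rfl⟩ := exists_angle_of_nonneg hp hp₂
  rw [hφ.2 s ⟨hs.1, by linarith [hs.2]⟩, boundaryLoop_of_le _ _ _ hs.2]
  exact not_lt.1 (h.mapsTo ⟨mul_nonneg (mul_nonneg (by norm_num) h.pos.le) hs.1,
    by nlinarith [hs.2, h.pos]⟩)

end IsFatBigon

end BoundaryLoop

section PlanarProjection

variable {Y : Type u} [PseudoMetricSpace Y] {r : ℝ} {g c : ℝ → Y} {φ : ℝ × ℝ → Y}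

/-- The coordinate along the geodesic `g`, rescaled to run from `-1` to `1` on `[-r, r]`. -/
noncomputable def axial (r : ℝ) (g : ℝ → Y) (w : Y) : ℝ := (dist w (g (-r)) - r) / r

/-- The rescaled distance from the geodesic `g`. -/
noncomputable def transverse (r : ℝ) (g : ℝ → Y) (w : Y) : ℝ :=
  Metric.infDist w (g '' Set.Icc (-r) r) / r

/-- The tent function of height `δ` centred at `u`, for the metric rescaled by `r⁻¹`. -/
noncomputable def tent (r δ : ℝ) (u w : Y) : ℝ := max 0 (δ - dist u w / r)

lemma lipschitzWith_div {f : Y → ℝ} (hf : LipschitzWith 1 f) (hr : 0 < r) :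
    LipschitzWith r⁻¹.toNNReal fun w => f w / r := by
  refine .of_dist_le_mul fun u v => ?_
  rw [Real.coe_toNNReal _ (inv_pos.2 hr).le, Real.dist_eq, ← sub_div, abs_div, abs_of_pos hr,
    inv_mul_eq_div, ← Real.dist_eq]
  exact div_le_div_of_nonneg_right (by simpa using hf.dist_le_mul u v) hr.le

lemma lipschitzWith_axial (hr : 0 < r) (g : ℝ → Y) : LipschitzWith r⁻¹.toNNReal (axial r g) :=
  lipschitzWith_div (by simpa using (LipschitzWith.dist_left (g (-r))).sub (.const r)) hr

lemma lipschitzWith_transverse (hr : 0 < r) (g : ℝ → Y) :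
    LipschitzWith r⁻¹.toNNReal (transverse r g) :=
  lipschitzWith_div (Metric.lipschitz_infDist_pt _) hr

lemma lipschitzWith_tent (hr : 0 < r) (δ : ℝ) (u : Y) :
    LipschitzWith r⁻¹.toNNReal (tent r δ u) := by
  unfold tent
  simpa only [zero_add] using
    ((LipschitzWith.const δ).sub (lipschitzWith_div (LipschitzWith.dist_right u) hr)).const_max 0

lemma abs_tent_le (hr : 0 < r) (δ : ℝ) (u w : Y) : |tent r δ u w| ≤ |δ| := by
  rw [tent, abs_of_nonneg (le_max_left _ _)]
  exact max_le (abs_nonneg _) ((sub_le_self _ (by positivity)).trans (le_abs_self δ))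

lemma IsFatBigon.axial_geodesic (h : IsFatBigon r g c) {t : ℝ} (ht : t ∈ Set.Icc (-1 : ℝ) 1) :
    axial r g (g (r * t)) = t := by
  have r_pos := h.pos
  have mem := mul_mem_Icc r_pos.le ht
  rw [axial, h.isGeodesicOn _ mem _ (Set.left_mem_Icc.2 (by linarith)),
    abs_of_nonneg (by linarith [mem.1])]
  field_simp
  ring

lemma IsFatBigon.dist_lt_of_transverse_lt (h : IsFatBigon r g c) {w : Y}
    (hw : |axial r g w| < 1 / 4) (hw' : transverse r g w < 1 / 4) : dist w (g 0) < r := by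
  have r_pos := h.pos
  have left_mem : -r ∈ Set.Icc (-r) r := Set.left_mem_Icc.2 (by linarith)
  have zero_mem : (0 : ℝ) ∈ Set.Icc (-r) r := ⟨by linarith, by linarith⟩
  rw [axial, abs_div, abs_of_pos r_pos, div_lt_iff₀ r_pos, abs_lt] at hw
  rw [transverse, div_lt_iff₀ r_pos,
    Metric.infDist_lt_iff ((Set.nonempty_of_mem zero_mem).image g)] at hw'
  obtain ⟨_, ⟨t, ht, rfl⟩, dist_lt⟩ := hw'
  have dist_left : dist (g t) (g (-r)) = t + r := by
    rw [h.isGeodesicOn t ht _ left_mem, sub_neg_eq_add, abs_of_nonneg (by linarith [ht.1])]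
  have abs_t_lt : |t| < r / 2 := by
    have le₁ := dist_triangle w (g t) (g (-r))
    have le₂ := dist_triangle_left (g t) (g (-r)) w
    exact abs_lt.2 ⟨by linarith, by linarith⟩
  calc dist w (g 0) ≤ dist w (g t) + dist (g t) (g 0) := dist_triangle _ _ _
    _ < 1 / 4 * r + r / 2 := by
        rw [h.isGeodesicOn t ht 0 zero_mem, sub_zero]
        exact add_lt_add dist_lt abs_t_lt
    _ < r := by linarith

lemma IsFatBigon.isDegreeOneBoundary (h : IsFatBigon r g c)
    (hφ : BoundsLoop φ (boundaryLoop r g c)) :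
    IsDegreeOneBoundary (fun x => axial r g (φ x)) (fun x => transverse r g (φ x)) where
  lower p hp hp₂ := by
    have hp₁ : p.1 ∈ Set.Icc (-1 : ℝ) 1 := by
      have hp : p.1 ^ 2 + p.2 ^ 2 = 1 := hp
      rw [Set.mem_Icc, ← abs_le, ← sq_le_one_iff_abs_le_one]
      linarith [sq_nonneg p.2]
    rw [h.apply_of_nonpos hφ hp hp₂, h.axial_geodesic hp₁, transverse,
      Metric.infDist_zero_of_mem (Set.mem_image_of_mem g (mul_mem_Icc h.pos.le hp₁)), zero_div]
    exact ⟨rfl, rfl⟩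
  upper p hp hp₂ hp₁ := by
    by_contra! lt
    exact (h.le_dist_of_nonneg hφ hp hp₂).not_gt (h.dist_lt_of_transverse_lt hp₁ lt)

end PlanarProjection

section Sheets

/-- `C` is a constant for the quadratic isoperimetric inequality in `Y`. -/
def IsQuadIsopConst (Y : Type u) [PseudoMetricSpace Y] (C : ℝ) : Prop :=
  ∀ c : ℝ → Y, IsLipLoop c → ∃ φ, BoundsLoop φ c ∧ lipArea φ ≤ C * loopLength c ^ 2

/-- An upper bound for the rescaled area of a filling of the boundary of a fat bigon. -/
def fillingConst (C : ℝ) : ℝ := 1 + 25000 * C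

/-- The area density of `Φ` for the metric rescaled by `r⁻¹`, enlarged by a factor `4 / π` so that
it dominates the Jacobians of pairs of `r⁻¹`-Lipschitz functions. -/
noncomputable def areaDensity {Y : Type u} [PseudoMetricSpace Y] (r : ℝ) (Φ : ℝ × ℝ → Y)
    (x : ℝ × ℝ) : ℝ :=
  4 / Real.pi * r⁻¹ ^ 2 * jac2 (mder Φ x)

/-- The signed sum over the sheets at `y` of the tent functions of height `δ` centred at `q`. -/
noncomputable def bumpSum {N : ℕ} (D : (ℝ × ℝ) × Fin N → (ℝ × ℝ) × Fin N → ℝ)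
    (σ : ℝ × ℝ → Fin N → SignType) (q : (ℝ × ℝ) × Fin N) (δ : ℝ) (y : ℝ × ℝ) : ℝ :=
  ∑ k, (σ y k : ℝ) * max 0 (δ - D q (y, k))

/-- A signed `N`-valued section over `G ⊆ ℝ²` of total sign one whose signed fibres depend in a
Lipschitz way on the base point when tested against tent functions; the pairs `(y, k)` stand for the
points of the fibre over `y`, at the mutual distances `D`. -/
structure IsLipschitzSheets {N : ℕ} (D : (ℝ × ℝ) × Fin N → (ℝ × ℝ) × Fin N → ℝ)
    (σ : ℝ × ℝ → Fin N → SignType) (G : Set (ℝ × ℝ)) (L : ℝ) : Prop where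
  self a : D a a = 0
  symm a b : D a b = D b a
  triangle a b c : D a c ≤ D a b + D b c
  sum_sign : ∀ y ∈ G, ∑ k, (σ y k : ℝ) = 1
  dist_le : ∀ y ∈ G, ∀ y' ∈ G, ∀ k k', dist y y' ≤ D (y, k) (y', k')
  le_four : ∀ y ∈ G, ∀ y' ∈ G, ∀ k k', D (y, k) (y', k') ≤ 4
  abs_bumpSum_sub_le : ∀ y ∈ G, ∀ y' ∈ G, dist y y' < 1 / 64 → ∀ q δ,
    |bumpSum D σ q δ y - bumpSum D σ q δ y'| ≤ L * dist y y'

variable {Y : Type u} [PseudoMetricSpace Y] {Φ : ℝ × ℝ → Y} {g c : ℝ → Y} {α β : Y → ℝ}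
  {r C : ℝ} {K : ℝ≥0}

lemma fillingConst_ge_one (hC : 0 < C) : 1 ≤ fillingConst C := by
  unfold fillingConst
  linarith

lemma IsFatBigon.exists_filling (h : IsFatBigon r g c) (hY : IsQuadIsopConst Y C) (hC : 0 < C) :
    ∃ (Φ : ℝ × ℝ → Y) (K : ℝ≥0), LipschitzWith K Φ ∧
      IsDegreeOneBoundary (fun x => axial r g (Φ x)) (fun x => transverse r g (Φ x)) ∧
      ∫ x in unitDisc, jac2 (mder Φ x) ≤ C * (136 * r) ^ 2 := by
  obtain ⟨φ, hφ, area_le⟩ := hY _ h.isLipLoop_boundaryLoop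
  obtain ⟨Kφ, lipschitz_φ⟩ := hφ.1
  obtain ⟨K, lipschitz_retraction⟩ := exists_lipschitzWith_discRetraction
  have eqOn : Set.EqOn φ (fun x => φ (discRetraction x)) D2 := fun x hx => by
    simp only [discRetraction_of_mem hx]
  refine ⟨fun x => φ (discRetraction x), Kφ * K, ?_, h.isDegreeOneBoundary ⟨?_, fun s hs => ?_⟩, ?_⟩
  · exact lipschitzOnWith_univ.1 <| lipschitz_φ.comp lipschitz_retraction.lipschitzOnWith
      fun x _ => discRetraction_mem x
  · exact ⟨Kφ, lipschitzOnWith_congr eqOn.symm lipschitz_φ⟩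
  · exact (eqOn (Real.cos_sq_add_sin_sq _).le).symm.trans (hφ.2 s hs)
  · rw [← lipArea_eq_setIntegral_unitDisc (eqOn.mono unitDisc_subset_D2)]
    refine area_le.trans ?_
    gcongr
    · exact ENNReal.toReal_nonneg
    · exact h.loopLength_boundaryLoop_le

lemma areaDensity_nonneg (r : ℝ) (Φ : ℝ × ℝ → Y) (x : ℝ × ℝ) : 0 ≤ areaDensity r Φ x :=
  mul_nonneg (by positivity) (jac2_nonneg _)

lemma ae_abs_jacobian_le_areaDensity (hr : 0 < r) (hΦ : LipschitzWith K Φ)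
    (hα : LipschitzWith r⁻¹.toNNReal α) (hβ : LipschitzWith r⁻¹.toNNReal β) :
    ∀ᵐ x, x ∈ unitDisc →
      |jacobian (fun z => α (Φ z)) (fun z => β (Φ z)) x| ≤ areaDensity r Φ x := by
  have coe_eq : (r⁻¹.toNNReal : ℝ) = r⁻¹ := Real.coe_toNNReal _ (inv_pos.2 hr).le
  filter_upwards [ae_abs_jacobian_comp_le_jac2_mder hΦ hα hβ] with x hx _
  rwa [coe_eq] at hx

lemma isDominatedMap_axial_transverse (hr : 0 < r) (hΦ : LipschitzWith K Φ)
    (hdeg : IsDegreeOneBoundary (fun x => axial r g (Φ x)) (fun x => transverse r g (Φ x))) :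
    IsDominatedMap testRectangle (fun x => axial r g (Φ x)) (fun x => transverse r g (Φ x))
      (areaDensity r Φ) where
  lipschitz_fst := ⟨_, (lipschitzWith_axial hr g).comp hΦ⟩
  lipschitz_snd := ⟨_, (lipschitzWith_transverse hr g).comp hΦ⟩
  nonneg := areaDensity_nonneg r Φ
  integrableOn := (integrableOn_jac2_mder hΦ).const_mul _
  abs_jacobian_le := ae_abs_jacobian_le_areaDensity hr hΦ (lipschitzWith_axial hr g)
    (lipschitzWith_transverse hr g)
  notMem_of_mem_unitCircle _ := hdeg.notMem

lemma isDominatedTest_tent (hr : 0 < r) (g : ℝ → Y) (hΦ : LipschitzWith K Φ) (δ : ℝ) (u : Y) :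
    IsDominatedTest (fun x => axial r g (Φ x)) (fun x => transverse r g (Φ x)) (areaDensity r Φ)
      (fun x => tent r δ u (Φ x)) where
  bddLipschitz := ⟨⟨_, (lipschitzWith_tent hr δ u).comp hΦ⟩, |δ|, fun _ => abs_tent_le hr δ u _⟩
  abs_jacobian_fst_le := ae_abs_jacobian_le_areaDensity hr hΦ (lipschitzWith_tent hr δ u)
    (lipschitzWith_axial hr g)
  abs_jacobian_snd_le := ae_abs_jacobian_le_areaDensity hr hΦ (lipschitzWith_tent hr δ u)
    (lipschitzWith_transverse hr g)

lemma setIntegral_areaDensity_le (hr : 0 < r) (hC : 0 < C)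
    (harea : ∫ x in unitDisc, jac2 (mder Φ x) ≤ C * (136 * r) ^ 2) :
    ∫ x in unitDisc, areaDensity r Φ x ≤ fillingConst C := by
  have four_div_pi_le : 4 / Real.pi ≤ 4 / 3 :=
    div_le_div_of_nonneg_left (by norm_num) (by norm_num) Real.pi_gt_three.le
  calc ∫ x in unitDisc, areaDensity r Φ x
      = 4 / Real.pi * r⁻¹ ^ 2 * ∫ x in unitDisc, jac2 (mder Φ x) := integral_const_mul _ _
    _ ≤ 4 / 3 * r⁻¹ ^ 2 * (C * (136 * r) ^ 2) := by
        gcongr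
        exact integral_nonneg fun x => jac2_nonneg _
    _ = 4 / 3 * 136 ^ 2 * C := by field_simp
    _ ≤ fillingConst C := by
        unfold fillingConst
        linarith

lemma massMeasure_areaDensity_le (hr : 0 < r) (hC : 0 < C)
    (hF : IsDominatedMap testRectangle (fun x => axial r g (Φ x)) (fun x => transverse r g (Φ x))
      (areaDensity r Φ))
    (harea : ∫ x in unitDisc, jac2 (mder Φ x) ≤ C * (136 * r) ^ 2) :
    massMeasure (fun x => axial r g (Φ x)) (fun x => transverse r g (Φ x)) (areaDensity r Φ)
      Set.univ ≤ ENNReal.ofReal (fillingConst C) := by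
  rw [hF.massMeasure_apply .univ, Set.preimage_univ, Set.univ_inter,
    ← ofReal_integral_eq_lintegral_ofReal hF.integrableOn (.of_forall (areaDensity_nonneg r Φ))]
  exact ENNReal.ofReal_le_ofReal (setIntegral_areaDensity_le hr hC harea)

lemma dist_axial_transverse_le (hr : 0 < r) (g : ℝ → Y) (u v : Y) :
    dist (axial r g u, transverse r g u) (axial r g v, transverse r g v) ≤ dist u v / r := by
  have le := ((lipschitzWith_axial hr g).prodMk (lipschitzWith_transverse hr g)).dist_le_mul u v
  rwa [max_self, Real.coe_toNNReal _ (inv_pos.2 hr).le, inv_mul_eq_div] at le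

lemma dist_div_le_four (hr : 0 < r) {u v : Y} (hu : axial r g u ≤ 1) (hv : axial r g v ≤ 1) :
    dist u v / r ≤ 4 := by
  have dist_left_le {w : Y} (hw : axial r g w ≤ 1) : dist w (g (-r)) ≤ 2 * r := by
    linarith [(div_le_iff₀ hr).1 hw]
  rw [div_le_iff₀ hr]
  linarith [dist_triangle_right u v (g (-r)), dist_left_le hu, dist_left_le hv]

lemma axial_le_one_of_mem_innerSquare {w : Y}
    (hw : (axial r g w, transverse r g w) ∈ innerSquare) : axial r g w ≤ 1 := by
  have le := (max_le_iff.1 (Metric.mem_closedBall.1 hw)).1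
  rw [Real.dist_eq] at le
  linarith [(abs_le.1 le).2]

lemma isLipschitzSheets_of_planar {N : ℕ} {L : ℝ} {G : Set (ℝ × ℝ)} (hr : 0 < r)
    (hG : G ⊆ innerSquare) {P : (ℝ × ℝ) × Fin N → Y} {σ : ℝ × ℝ → Fin N → SignType}
    (hP : ∀ y ∈ G, ∀ k, (axial r g (P (y, k)), transverse r g (P (y, k))) = y)
    (hσ : ∀ y ∈ G, ∑ k, (σ y k : ℝ) = 1)
    (hbump : ∀ y ∈ G, ∀ y' ∈ G, dist y y' ≤ 1 / 64 → ∀ q δ,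
      |∑ k, (σ y k : ℝ) * tent r δ (P q) (P (y, k)) -
        ∑ k, (σ y' k : ℝ) * tent r δ (P q) (P (y', k))| ≤ L * dist y y') :
    IsLipschitzSheets (fun a b => dist (P a) (P b) / r) σ G L where
  self a := by rw [dist_self, zero_div]
  symm a b := by rw [dist_comm]
  triangle a b c := by
    rw [← add_div]
    exact div_le_div_of_nonneg_right (dist_triangle _ _ _) hr.le
  sum_sign := hσ
  dist_le y hy y' hy' k k' := by
    simpa only [hP y hy k, hP y' hy' k'] using
      dist_axial_transverse_le hr g (P (y, k)) (P (y', k'))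
  le_four y hy y' hy' k k' := by
    have axial_le {y : ℝ × ℝ} (hy : y ∈ G) (k : Fin N) : axial r g (P (y, k)) ≤ 1 :=
      axial_le_one_of_mem_innerSquare (by rw [hP y hy k]; exact hG hy)
    exact dist_div_le_four hr (axial_le hy k) (axial_le hy' k')
  abs_bumpSum_sub_le y hy y' hy' hyy' := hbump y hy y' hy' hyy'.le

lemma continuous_tent_comp (hΦ : Continuous Φ) (r : ℝ) (w : Y) :
    Continuous fun q : (ℝ × ℝ) × ℝ => tent r q.2 (Φ q.1) w := by
  unfold tent
  fun_prop

theorem IsFatBigon.exists_isLipschitzSheets (h : IsFatBigon r g c) (hY : IsQuadIsopConst Y C)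
    (hC : 0 < C) {N : ℕ} (hN : 256 * fillingConst C ≤ N) :
    ∃ G ⊆ innerSquare, ENNReal.ofReal (1 / 128) ≤ volume G ∧
      ∃ (P : (ℝ × ℝ) × Fin N → Y) (σ : ℝ × ℝ → Fin N → SignType),
        IsLipschitzSheets (fun a b => dist (P a) (P b) / r) σ G
          (20 * mollifierBound * (25600 * fillingConst C)) := by
  have r_pos := h.pos
  obtain ⟨Φ, K, lipschitz_Φ, hdeg, harea⟩ := h.exists_filling hY hC
  have hF := isDominatedMap_axial_transverse r_pos lipschitz_Φ hdeg
  let centre := TopologicalSpace.denseSeq ((ℝ × ℝ) × ℝ)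
  obtain ⟨G, hG, volume_G, p, σ, slices⟩ := exists_lipschitz_slices hF hdeg
    (fun i => isDominatedTest_tent r_pos g lipschitz_Φ (centre i).2 (Φ (centre i).1))
    (fillingConst_ge_one hC) (massMeasure_areaDensity_le r_pos hC hF harea) hN
  refine ⟨G, hG, volume_G, fun a => Φ (p a.1 a.2), σ, isLipschitzSheets_of_planar r_pos hG
    (fun y hy k => ((slices y hy).1 k).2) (fun y hy => (slices y hy).2.1)
    fun y hy y' hy' hyy' q δ => ?_⟩
  have continuous_sum (y : ℝ × ℝ) : Continuous fun q : (ℝ × ℝ) × ℝ =>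
      ∑ k, (σ y k : ℝ) * tent r q.2 (Φ q.1) (Φ (p y k)) :=
    continuous_finsetSum _ fun k _ =>
      continuous_const.mul (continuous_tent_comp lipschitz_Φ.continuous r _)
  exact (TopologicalSpace.denseRange_denseSeq _).induction_on (p := fun q : (ℝ × ℝ) × ℝ =>
      |∑ k, (σ y k : ℝ) * tent r q.2 (Φ q.1) (Φ (p y k)) -
        ∑ k, (σ y' k : ℝ) * tent r q.2 (Φ q.1) (Φ (p y' k))| ≤ _) (p q.1 q.2, δ)
    (isClosed_le ((continuous_sum y).sub (continuous_sum y')).abs continuous_const)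
    ((slices y hy).2.2 y' hy' hyy')

end Sheets

section AsymptoticSubsets

open UniformSpace (Completion)

variable {X : Type u} [MetricSpace X]

variable (X) in
/-- With respect to the distance `D`, the finite subsets of `W` are up to arbitrarily small errors
subsets of `X` rescaled by arbitrarily small factors. -/
def IsFinitelyAsymptotic {W : Type v} (D : W → W → ℝ) : Prop :=
  ∀ (F : Finset W) (ε : ℝ), 0 < ε → ∀ M : ℝ, ∃ r, M ≤ r ∧ ∃ x : W → X,
    ∀ w ∈ F, ∀ w' ∈ F, |D w w' - r⁻¹ * dist (x w) (x w')| ≤ ε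

variable {W : Type v} [MetricSpace W]

lemma exists_approx_completion {F : Finset W} {x : W → X} {r δ : ℝ}
    (hF : ∀ w, ∃ w' ∈ F, dist w w' < δ)
    (hx : ∀ w ∈ F, ∀ w' ∈ F, |dist w w' - r⁻¹ * dist (x w) (x w')| ≤ δ) :
    ∃ f : x '' (F : Set W) → Completion W,
      (∀ p q, |dist (f p) (f q) - r⁻¹ * dist (p : X) (q : X)| ≤ δ) ∧
      ∀ z, ∃ p, dist z (f p) ≤ 3 * δ := by
  choose s hs using fun p : x '' (F : Set W) => p.2
  refine ⟨fun p => s p, fun p q => ?_, fun z => ?_⟩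
  · rw [Completion.dist_eq]
    simpa only [(hs p).2, (hs q).2] using hx _ (hs p).1 _ (hs q).1
  · obtain ⟨_, ⟨w₀, rfl⟩⟩ : (Set.range ((↑) : W → Completion W)).Nonempty :=
      Completion.denseRange_coe.nonempty_iff.2 ⟨z⟩ |>.elim fun w => ⟨_, w, rfl⟩
    have δ_pos : 0 < δ := let ⟨_, _, lt⟩ := hF w₀; dist_nonneg.trans_lt lt
    obtain ⟨w, dist_w⟩ := Completion.denseRange_coe.exists_dist_lt z δ_pos
    obtain ⟨w', hw', dist_w'⟩ := hF w
    let p : x '' (F : Set W) := ⟨x w', w', hw', rfl⟩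
    have dist_s : dist w' (s p) ≤ δ := by
      have le := hx w' hw' (s p) (hs p).1
      rw [(hs p).2, dist_self, mul_zero, sub_zero] at le
      exact (le_abs_self _).trans le
    refine ⟨p, ?_⟩
    calc dist z (s p : Completion W)
        ≤ dist z w + dist (w : Completion W) w' + dist (w' : Completion W) (s p) :=
          dist_triangle4 _ _ _ _
      _ ≤ 3 * δ := by
          rw [Completion.dist_eq, Completion.dist_eq]
          linarith

lemma compactSpace_completion (hW : TotallyBounded (Set.univ : Set W)) :
    CompactSpace (Completion W) := by
  refine ⟨isCompact_iff_totallyBounded_isComplete.2 ⟨?_, isClosed_univ.isComplete⟩⟩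
  rw [← Completion.denseRange_coe.closure_range, ← Set.image_univ]
  exact (hW.image (Completion.uniformContinuous_coe W)).closure

theorem IsFinitelyAsymptotic.isAsymptoticSubset_completion [Nonempty W]
    (h : IsFinitelyAsymptotic X (dist : W → W → ℝ)) (hW : TotallyBounded (Set.univ : Set W)) :
    IsAsymptoticSubset X (Completion W) := by
  have net (n : ℕ) : ∃ F : Finset W, ∀ w, ∃ w' ∈ F, dist w w' < 1 / ((n : ℝ) + 1) := by
    obtain ⟨t, finite_t, cover⟩ := Metric.totallyBounded_iff.1 hW _ Nat.one_div_pos_of_nat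
    exact ⟨finite_t.toFinset, fun w => by simpa using cover (Set.mem_univ w)⟩
  choose F hF using net
  choose r le_r x hx using fun n : ℕ => h (F n) (1 / ((n : ℝ) + 1)) Nat.one_div_pos_of_nat n
  refine ⟨compactSpace_completion hW, fun n => x n '' F n, r, fun n => ⟨?_, ?_⟩, ?_, fun ε hε => ?_⟩
  · obtain ⟨w, hw, -⟩ := hF n (Classical.arbitrary W)
    exact ⟨x n w, w, hw, rfl⟩
  · exact ((F n).finite_toSet.image _).isCompact
  · exact tendsto_atTop_mono le_r tendsto_natCast_atTop_atTop
  · filter_upwards [tendsto_one_div_add_atTop_nhds_zero_nat.eventually_lt_const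
      (show 0 < ε / 3 by positivity)] with n hn
    obtain ⟨f, dist_f, dense_f⟩ := exists_approx_completion (hF n) (hx n)
    refine ⟨f, fun p q => (dist_f p q).trans (by linarith), fun z => ?_⟩
    obtain ⟨p, hp⟩ := dense_f z
    exact ⟨p, hp.trans (by linarith)⟩

theorem exists_lipschitzOnWith_hausdorffMeasure_ne_zero [MeasurableSpace (Completion W)]
    [BorelSpace (Completion W)] {ψ : W → ℝ × ℝ} {K L : ℝ≥0} (hψ : LipschitzWith K ψ)
    (hψ' : AntilipschitzWith L ψ) (hW : TotallyBounded (Set.univ : Set W))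
    (hvol : volume (Set.range ψ) ≠ 0) :
    ∃ (S : Set (ℝ × ℝ)) (φ : ℝ × ℝ → Completion W),
      IsCompact S ∧ LipschitzOnWith L φ S ∧ μH[2] (φ '' S) ≠ 0 := by
  have := compactSpace_completion hW
  have lipschitz := hψ.completion_extension
  have antilipschitz : AntilipschitzWith L (Completion.extension ψ) := by
    refine .of_le_mul_dist fun z z' => Completion.induction_on₂ z z' ?_ fun w w' => ?_
    · exact isClosed_le continuous_dist (continuous_const.mul <|
        (lipschitz.continuous.comp continuous_fst).dist (lipschitz.continuous.comp continuous_snd))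
    · rw [Completion.dist_eq, Completion.extension_coe hψ.uniformContinuous,
        Completion.extension_coe hψ.uniformContinuous]
      exact hψ'.le_mul_dist w w'
  have : Nonempty (Completion W) := by
    obtain ⟨_, w, -⟩ := nonempty_of_measure_ne_zero hvol
    exact ⟨w⟩
  have image_eq : Function.invFun (Completion.extension ψ) ''
      Set.range (Completion.extension ψ) = Set.univ := by
    rw [← Set.range_comp, (Function.leftInverse_invFun antilipschitz.injective).comp_eq_id,
      Set.range_id]
  refine ⟨Set.range (Completion.extension ψ), Function.invFun (Completion.extension ψ),
    isCompact_range lipschitz.continuous, ?_, fun null => hvol ?_⟩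
  · exact lipschitzOnWith_iff_restrict.2
      (antilipschitz.to_rightInvOn fun y hy => Function.invFun_eq hy)
  · rw [image_eq] at null
    have le := lipschitz.hausdorffMeasure_image_le zero_le_two Set.univ
    rw [null, mul_zero, nonpos_iff_eq_zero, Set.image_univ, hausdorffMeasure_prod_real] at le
    refine measure_mono_null ?_ le
    rintro _ ⟨w, rfl⟩
    exact ⟨w, Completion.extension_coe hψ.uniformContinuous w⟩

end AsymptoticSubsets

section BilipschitzDistances

variable {W : Type v} {α : Type*} [MetricSpace α]

/-- `D` is a pseudodistance on `W` for which `ψ` is `1`-Lipschitz and `L`-antilipschitz. -/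
structure IsBilipschitzDist (D : W → W → ℝ) (ψ : W → α) (L : ℝ≥0) : Prop where
  symm a b : D a b = D b a
  triangle a b c : D a c ≤ D a b + D b c
  dist_le a b : dist (ψ a) (ψ b) ≤ D a b
  le_mul_dist a b : D a b ≤ L * dist (ψ a) (ψ b)

variable {D : W → W → ℝ} {L : ℝ≥0}

lemma IsBilipschitzDist.comp {W' : Type*} {ψ : W → α} (h : IsBilipschitzDist D ψ L)
    (e : W' → W) : IsBilipschitzDist (fun a b => D (e a) (e b)) (ψ ∘ e) L :=
  ⟨fun _ _ => h.symm _ _, fun _ _ _ => h.triangle _ _ _, fun _ _ => h.dist_le _ _,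
    fun _ _ => h.le_mul_dist _ _⟩

lemma IsBilipschitzDist.exists_metricSpace {ψ : W → α} (h : IsBilipschitzDist D ψ L)
    (hψ : Function.Injective ψ) :
    ∃ _ : MetricSpace W, dist = D ∧ LipschitzWith 1 ψ ∧ AntilipschitzWith L ψ := by
  let _ : MetricSpace W :=
    { dist := D
      dist_self a := le_antisymm (by simpa only [dist_self, mul_zero] using h.le_mul_dist a a)
        (dist_nonneg.trans (h.dist_le a a))
      dist_comm := h.symm
      dist_triangle := h.triangle
      eq_of_dist_eq_zero {a b} hab := hψ (dist_le_zero.1 ((h.dist_le a b).trans_eq hab)) }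
  exact ⟨inferInstance, rfl, .mk_one h.dist_le,
    .of_le_mul_dist h.le_mul_dist⟩

theorem exists_isAsymptoticSubset_hausdorffMeasure_ne_zero {X : Type u} [MetricSpace X]
    {ψ : W → ℝ × ℝ} (hD : IsBilipschitzDist D ψ L) (hψ : Function.Injective ψ)
    (hbdd : Bornology.IsBounded (Set.range ψ)) (hvol : volume (Set.range ψ) ≠ 0)
    (hX : IsFinitelyAsymptotic X D) :
    ∃ (Z : Type v) (_ : MetricSpace Z), IsAsymptoticSubset X Z ∧
      ∃ (S : Set (ℝ × ℝ)) (φ : ℝ × ℝ → Z), IsCompact S ∧ LipschitzOnWith L φ S ∧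
        letI : MeasurableSpace Z := borel Z
        letI : BorelSpace Z := ⟨rfl⟩
        μH[2] (φ '' S) ≠ 0 := by
  obtain ⟨_, rfl, lipschitz, antilipschitz⟩ := hD.exists_metricSpace hψ
  have : Nonempty W := Set.range_nonempty_iff_nonempty.1 (nonempty_of_measure_ne_zero hvol)
  have totallyBounded : TotallyBounded (Set.univ : Set W) := by
    rw [← Set.preimage_range ψ]
    exact totallyBounded_preimage
      (antilipschitz.isUniformInducing lipschitz.uniformContinuous) 
      (hbdd.isCompact_closure.totallyBounded.subset subset_closure)
  let _ : MeasurableSpace (UniformSpace.Completion W) := borel _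
  have : BorelSpace (UniformSpace.Completion W) := ⟨rfl⟩
  exact ⟨UniformSpace.Completion W, inferInstance,
    hX.isAsymptoticSubset_completion totallyBounded,
    exists_lipschitzOnWith_hausdorffMeasure_ne_zero lipschitz antilipschitz totallyBounded hvol⟩

end BilipschitzDistances

section ChargedClusters

lemma exists_sum_setoid_class_ne_zero {ι M : Type*} [Fintype ι] [AddCommMonoid M] (s : Setoid ι)
    [DecidableRel s.r] {f : ι → M} (hf : ∑ i, f i ≠ 0) : ∃ i, ∑ j with s.r i j, f j ≠ 0 := by
  classical
  rw [← Finset.sum_fiberwise Finset.univ (Quotient.mk s) f] at hf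
  obtain ⟨q, -, hq⟩ := Finset.exists_ne_zero_of_sum_ne_zero hf
  obtain ⟨i, rfl⟩ := q.exists_rep
  refine ⟨i, ?_⟩
  convert hq using 3 with j
  rw [Quotient.eq]
  exact ⟨s.symm, s.symm⟩

lemma one_le_abs_sum_sign {ι : Type*} {σ : ι → SignType} {A : Finset ι}
    (h : ∑ k ∈ A, (σ k : ℝ) ≠ 0) : 1 ≤ |∑ k ∈ A, (σ k : ℝ)| := by
  have cast_sum : ∑ k ∈ A, (σ k : ℝ) = ((∑ k ∈ A, (σ k : ℤ) : ℤ) : ℝ) := by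
    push_cast
    exact Finset.sum_congr rfl fun k _ => by cases σ k <;> simp
  rw [cast_sum] at h ⊢
  exact_mod_cast Int.one_le_abs (by exact_mod_cast h)

lemma exists_subset_measure_ne_zero_dist_lt {α : Type*} [PseudoMetricSpace α]
    [TopologicalSpace.SeparableSpace α] [MeasurableSpace α] {μ : Measure α} {S : Set α}
    (hS : μ S ≠ 0) {ε : ℝ} (hε : 0 < ε) :
    ∃ T ⊆ S, μ T ≠ 0 ∧ ∀ y ∈ T, ∀ y' ∈ T, dist y y' < ε := by
  have : Nonempty α := (nonempty_of_measure_ne_zero hS).to_subtype.map Subtype.val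
  obtain ⟨i, hi⟩ : ∃ i, μ (S ∩ Metric.ball (TopologicalSpace.denseSeq α i) (ε / 2)) ≠ 0 := by
    by_contra! null
    refine hS (measure_mono_null (fun y hy => ?_) (measure_iUnion_null null))
    obtain ⟨i, hi⟩ := (TopologicalSpace.denseRange_denseSeq α).exists_dist_lt y (half_pos hε)
    exact Set.mem_iUnion.2 ⟨i, hy, hi⟩
  refine ⟨_, Set.inter_subset_left, hi, fun y hy y' hy' => ?_⟩
  linarith [dist_triangle_right y y' (TopologicalSpace.denseSeq α i), Metric.mem_ball.1 hy.2,
    Metric.mem_ball.1 hy'.2]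

variable {N : ℕ} {D : (ℝ × ℝ) × Fin N → (ℝ × ℝ) × Fin N → ℝ} {σ : ℝ × ℝ → Fin N → SignType}
  {G : Set (ℝ × ℝ)} {L ρ δ : ℝ} {y y' : ℝ × ℝ} {q : (ℝ × ℝ) × Fin N} {k k' : Fin N}

variable (D σ y k) in
open scoped Classical in
/-- The total sign carried by the sheets over `y` at `D`-distance zero from the `k`-th one. -/
noncomputable def clusterCharge : ℝ :=
  ∑ l with D (y, k) (y, l) = 0, (σ y l : ℝ)

variable (D ρ y) in
/-- The sheets over `y` are either at `D`-distance zero or `ρ`-separated. -/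
def HasGap : Prop :=
  ∀ k l, D (y, k) (y, l) < ρ → D (y, k) (y, l) = 0

lemma exists_lt_of_bumpSum_ne_zero (h : bumpSum D σ q δ y ≠ 0) : ∃ k, D q (y, k) < δ := by
  obtain ⟨k, -, hk⟩ := Finset.exists_ne_zero_of_sum_ne_zero h
  refine ⟨k, not_le.1 fun le => hk ?_⟩
  rw [max_eq_left (sub_nonpos.2 le), mul_zero]

namespace IsLipschitzSheets

lemma nonneg (h : IsLipschitzSheets D σ G L) (a b : (ℝ × ℝ) × Fin N) : 0 ≤ D a b := by
  linarith [h.triangle a b a, h.self a, h.symm a b]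

lemma right_congr (h : IsLipschitzSheets D σ G L) {a b : (ℝ × ℝ) × Fin N} (hab : D a b = 0)
    (q : (ℝ × ℝ) × Fin N) : D q a = D q b := by
  linarith [h.triangle q a b, h.triangle q b a, h.symm a b]

lemma exists_clusterCharge_ne_zero (h : IsLipschitzSheets D σ G L) (hy : y ∈ G) :
    ∃ k, clusterCharge D σ y k ≠ 0 := by
  classical
  have sum_ne_zero : ∑ k, (σ y k : ℝ) ≠ 0 := by
    rw [h.sum_sign y hy]
    exact one_ne_zero
  let cluster : Setoid (Fin N) :=
    { r := fun k l => D (y, k) (y, l) = 0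
      iseqv := ⟨fun k => h.self _, fun {k l} hkl => (h.symm _ _).trans hkl,
        fun {k l m} hkl hlm => (h.right_congr hlm _).symm.trans hkl⟩ }
  exact exists_sum_setoid_class_ne_zero cluster sum_ne_zero

lemma exists_hasGap (h : IsLipschitzSheets D σ G L) (hG : volume G ≠ 0) :
    ∃ ρ > 0, volume {y ∈ G | HasGap D ρ y} ≠ 0 := by
  by_contra! null
  refine hG (measure_mono_null (fun y hy => ?_)
    (measure_iUnion_null fun j : ℕ => null _ (Nat.one_div_pos_of_nat (n := j))))
  have eventually_gap (p : Fin N × Fin N) : ∀ᶠ j : ℕ in atTop,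
      D (y, p.1) (y, p.2) < 1 / ((j : ℝ) + 1) → D (y, p.1) (y, p.2) = 0 := by
    rcases (h.nonneg (y, p.1) (y, p.2)).eq_or_lt with eq | pos
    · exact .of_forall fun j _ => eq.symm
    · filter_upwards [tendsto_one_div_add_atTop_nhds_zero_nat.eventually_lt_const pos] with j hj lt
      exact absurd lt hj.not_gt
  obtain ⟨j, hj⟩ := (eventually_all.2 eventually_gap).exists
  exact Set.mem_iUnion.2 ⟨j, hy, fun k l => hj (k, l)⟩

lemma bumpSum_eq_clusterCharge_mul (h : IsLipschitzSheets D σ G L) (hgap : HasGap D ρ y)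
    (hδ : D q (y, k) ≤ δ) (hρ : D q (y, k) + δ ≤ ρ) :
    bumpSum D σ q δ y = clusterCharge D σ y k * (δ - D q (y, k)) := by
  classical
  unfold bumpSum clusterCharge
  rw [Finset.sum_filter, Finset.sum_mul]
  refine Finset.sum_congr rfl fun l _ => ?_
  split_ifs with same_cluster
  · rw [← h.right_congr same_cluster, max_eq_right (sub_nonneg.2 hδ)]
  · have gap : ρ ≤ D (y, k) (y, l) := not_lt.1 (mt (hgap k l) same_cluster)
    have far : δ ≤ D q (y, l) := by linarith [h.triangle (y, k) q (y, l), h.symm (y, k) q]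
    rw [max_eq_left (sub_nonpos.2 far), mul_zero, zero_mul]

lemma bumpSum_ne_zero (h : IsLipschitzSheets D σ G L) (hy : y ∈ G) (hy' : y' ∈ G)
    (hyy' : dist y y' < 1 / 64) (hgap : HasGap D ρ y) (hk : clusterCharge D σ y k ≠ 0)
    (hL : L * dist y y' < δ) (hδ : 0 ≤ δ) (hρ : δ ≤ ρ) : bumpSum D σ (y, k) δ y' ≠ 0 := by
  intro eq_zero
  have le := h.abs_bumpSum_sub_le y hy y' hy' hyy' (y, k) δ
  have bump_eq := h.bumpSum_eq_clusterCharge_mul (q := (y, k)) (δ := δ) hgap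
    (by rwa [h.self]) (by rwa [h.self, zero_add])
  rw [h.self, sub_zero] at bump_eq
  rw [eq_zero, sub_zero, bump_eq, abs_mul, abs_of_nonneg hδ] at le
  have charge_ge : 1 ≤ |clusterCharge D σ y k| := one_le_abs_sum_sign hk
  linarith [le_mul_of_one_le_left hδ charge_ge]

lemma le_mul_dist (h : IsLipschitzSheets D σ G L) (hL : 0 ≤ L) (hy : y ∈ G) (hy' : y' ∈ G)
    (hyy' : dist y y' < 1 / 64) (hgap : HasGap D ρ y) (hgap' : HasGap D ρ y')
    (hk : clusterCharge D σ y k ≠ 0) (hLρ : L * dist y y' < ρ / 4)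
    (hqk : D q (y, k) < ρ / 4) (hqk' : D q (y', k') < ρ / 4) :
    D (y, k) (y', k') ≤ L * dist y y' := by
  by_contra! lt
  have nonneg : 0 ≤ L * dist y y' := mul_nonneg hL dist_nonneg
  obtain ⟨l, hl⟩ := exists_lt_of_bumpSum_ne_zero <| h.bumpSum_ne_zero hy hy' hyy' hgap hk
    (lt_min lt hLρ) (nonneg.trans (lt_min lt hLρ).le) (min_le_right _ _ |>.trans (by linarith))
  have same_cluster : D (y', l) (y', k') = 0 := hgap' l k' <| by
    linarith [h.triangle (y', l) (y, k) (y', k'), h.triangle (y, k) q (y', k'),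
      h.symm (y', l) (y, k), h.symm (y, k) q, (lt_min_iff.1 hl).2]
  exact (lt_min_iff.1 hl).1.ne (h.right_congr same_cluster _)

theorem exists_lipschitz_section (h : IsLipschitzSheets D σ G L) (hL : 0 ≤ L)
    (hG : volume G ≠ 0) :
    ∃ E ⊆ G, volume E ≠ 0 ∧ ∃ κ : ℝ × ℝ → Fin N,
      ∀ y ∈ E, ∀ y' ∈ E, D (y, κ y) (y', κ y') ≤ L * dist y y' := by
  obtain ⟨ρ, ρ_pos, volume_ne_zero⟩ := h.exists_hasGap hG
  obtain ⟨E, hE, volume_E, dist_lt⟩ := exists_subset_measure_ne_zero_dist_lt volume_ne_zero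
    (show 0 < min (1 / 64) (ρ / (4 * (L + 1))) by positivity)
  have mul_dist_lt {y y'} (hy : y ∈ E) (hy' : y' ∈ E) : L * dist y y' < ρ / 4 := by
    have lt := (lt_min_iff.1 (dist_lt y hy y' hy')).2
    rw [lt_div_iff₀ (by positivity)] at lt
    linarith [dist_nonneg (x := y) (y := y')]
  have lt_sixtyfourth {y y'} (hy : y ∈ E) (hy' : y' ∈ E) : dist y y' < 1 / 64 :=
    (lt_min_iff.1 (dist_lt y hy y' hy')).1
  obtain ⟨y₀, hy₀⟩ := nonempty_of_measure_ne_zero volume_E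
  obtain ⟨k₀, charge₀⟩ := h.exists_clusterCharge_ne_zero (hE hy₀).1
  have near_charged (y) (hy : y ∈ E) :
      ∃ k, D (y₀, k₀) (y, k) < ρ / 4 ∧ clusterCharge D σ y k ≠ 0 := by
    have bump := h.bumpSum_ne_zero (hE hy₀).1 (hE hy).1 (lt_sixtyfourth hy₀ hy) (hE hy₀).2 charge₀
      (mul_dist_lt hy₀ hy) (by positivity) (by linarith)
    obtain ⟨k, hk⟩ := exists_lt_of_bumpSum_ne_zero bump
    rw [h.bumpSum_eq_clusterCharge_mul (hE hy).2 hk.le (by linarith)] at bump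
    exact ⟨k, hk, left_ne_zero_of_mul bump⟩
  have : Nonempty (Fin N) := ⟨k₀⟩
  choose! κ near charged using near_charged
  exact ⟨E, fun y hy => (hE hy).1, volume_E, κ, fun y hy y' hy' =>
    h.le_mul_dist hL (hE hy).1 (hE hy').1 (lt_sixtyfourth hy hy') (hE hy).2 (hE hy').2
      (charged y hy) (mul_dist_lt hy hy') (near y hy) (near y' hy')⟩

end IsLipschitzSheets

end ChargedClusters

section Ultralimits

section LimitSets

variable {ι α : Type*} [PseudoMetricSpace α]

/-- The points of `K` which are limits along `U` of points of the sets `G i`. -/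
def ultralimitSet (U : Ultrafilter ι) (K : Set α) (G : ι → Set α) : Set α :=
  {y ∈ K | Tendsto (fun i => Metric.infDist y (G i)) U (𝓝 0)}

lemma exists_ball_eventually_disjoint {U : Ultrafilter ι} {G : ι → Set α} {y : α}
    (hy : ¬Tendsto (fun i => Metric.infDist y (G i)) U (𝓝 0)) :
    ∃ ε > 0, ∀ᶠ i in U, Disjoint (G i) (Metric.ball y ε) := by
  simp only [Metric.tendsto_nhds, not_forall] at hy
  obtain ⟨ε, ε_pos, far⟩ := hy
  refine ⟨ε, ε_pos, (Ultrafilter.eventually_not.2 far).mono fun i hi => ?_⟩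
  rw [Real.dist_0_eq_abs, abs_of_nonneg Metric.infDist_nonneg] at hi
  exact Set.disjoint_left.2 fun z hz hzy =>
    hi ((Metric.infDist_le_dist_of_mem hz).trans_lt (Metric.mem_ball'.1 hzy))

lemma le_measure_ultralimitSet [MeasurableSpace α] {μ : Measure α} [μ.OuterRegular]
    {U : Ultrafilter ι} {K : Set α} {G : ι → Set α} {m : ℝ≥0∞} (hK : IsCompact K)
    (hG : ∀ i, G i ⊆ K) (hm : ∀ i, m ≤ μ (G i)) : m ≤ μ (ultralimitSet U K G) := by
  by_contra! lt
  obtain ⟨O, hO, isOpen_O, volume_O⟩ := Set.exists_isOpen_lt_of_lt _ _ lt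
  have eventually_disjoint : ∀ᶠ i in U, Disjoint (G i) (K \ O) := by
    refine (hK.diff isOpen_O).induction_on (p := fun s => ∀ᶠ i in U, Disjoint (G i) s)
      (.of_forall fun i => disjoint_bot_right) (fun s t hst ht => ht.mono fun i => .mono_right hst)
      (fun s t hs ht => ?_) fun y hy => ?_
    · filter_upwards [hs, ht] with i his hit using Set.disjoint_union_right.2 ⟨his, hit⟩
    · obtain ⟨ε, ε_pos, disjoint⟩ :=
        exists_ball_eventually_disjoint fun tendsto => hy.2 (hO ⟨hy.1, tendsto⟩)
      exact ⟨Metric.ball y ε, mem_nhdsWithin_of_mem_nhds (Metric.ball_mem_nhds y ε_pos), disjoint⟩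
  obtain ⟨i, hi⟩ := eventually_disjoint.exists
  have subset : G i ⊆ O := fun z hz => by_contra fun not_mem =>
    Set.disjoint_left.1 hi hz ⟨hG i hz, not_mem⟩
  exact ((hm i).trans (measure_mono subset)).not_gt volume_O

lemma exists_tendsto_of_mem_ultralimitSet {U : Ultrafilter ℕ} (hU : (U : Filter ℕ) ≤ atTop)
    {K : Set α} {G : ℕ → Set α} (hG : ∀ n, (G n).Nonempty) :
    ∃ q : ℕ → α → α, (∀ n y, q n y ∈ G n) ∧
      ∀ y ∈ ultralimitSet U K G, Tendsto (fun n => q n y) U (𝓝 y) := by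
  have near (n : ℕ) (y : α) : ∃ z ∈ G n, dist y z < Metric.infDist y (G n) + 1 / ((n : ℝ) + 1) :=
    (Metric.infDist_lt_iff (hG n)).1 (lt_add_of_pos_right _ Nat.one_div_pos_of_nat)
  choose q q_mem dist_q using near
  refine ⟨q, q_mem, fun y hy => tendsto_iff_dist_tendsto_zero.2 ?_⟩
  have bound_tendsto := hy.2.add (tendsto_one_div_add_atTop_nhds_zero_nat.mono_left hU)
  rw [add_zero] at bound_tendsto
  exact squeeze_zero (fun n => dist_nonneg)
    (fun n => (dist_comm _ _).trans_le (dist_q n y).le) bound_tendsto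

end LimitSets

lemma exists_tendsto_of_forall_mem {ι α : Type*} [TopologicalSpace α] {U : Ultrafilter ι}
    {K : Set α} (hK : IsCompact K) {f : ι → α} (hf : ∀ i, f i ∈ K) : ∃ a, Tendsto f U (𝓝 a) := by
  obtain ⟨a, -, ha⟩ := hK.ultrafilter_le_nhds (U.map f)
    (tendsto_principal.2 (.of_forall hf))
  exact ⟨a, ha⟩

variable {N : ℕ} {D : ℕ → (ℝ × ℝ) × Fin N → (ℝ × ℝ) × Fin N → ℝ}
  {σ : ℕ → ℝ × ℝ → Fin N → SignType} {G : ℕ → Set (ℝ × ℝ)} {K : Set (ℝ × ℝ)} {L : ℝ}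
  {U : Ultrafilter ℕ}

lemma IsLipschitzSheets.of_tendsto {q : ℕ → ℝ × ℝ → ℝ × ℝ}
    {D' : (ℝ × ℝ) × Fin N → (ℝ × ℝ) × Fin N → ℝ} {σ' : ℝ × ℝ → Fin N → SignType}
    {G' : Set (ℝ × ℝ)} (h : ∀ n, IsLipschitzSheets (D n) (σ n) (G n) L)
    (hq : ∀ n y, q n y ∈ G n) (hqG' : ∀ y ∈ G', Tendsto (fun n => q n y) U (𝓝 y))
    (hσ : ∀ y k, Tendsto (fun n => (σ n (q n y) k : ℝ)) U (𝓝 (σ' y k)))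
    (hD : ∀ a b, Tendsto (fun n => D n (q n a.1, a.2) (q n b.1, b.2)) U (𝓝 (D' a b))) :
    IsLipschitzSheets D' σ' G' L where
  self a := tendsto_nhds_unique (hD a a) (by simp only [(h _).self, tendsto_const_nhds])
  symm a b := tendsto_nhds_unique (hD a b) (by simpa only [(h _).symm] using hD b a)
  triangle a b c := le_of_tendsto_of_tendsto' (hD a c) ((hD a b).add (hD b c))
    fun n => (h n).triangle _ _ _
  sum_sign y _ := tendsto_nhds_unique (tendsto_finsetSum _ fun k _ => hσ y k) <| by
    simp only [(h _).sum_sign _ (hq _ y), tendsto_const_nhds]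
  dist_le y hy y' hy' k k' := le_of_tendsto_of_tendsto' ((hqG' y hy).dist (hqG' y' hy')) (hD _ _)
    fun n => (h n).dist_le _ (hq n y) _ (hq n y') k k'
  le_four y _ y' _ k k' := le_of_tendsto' (hD _ _)
    fun n => (h n).le_four _ (hq n y) _ (hq n y') k k'
  abs_bumpSum_sub_le y hy y' hy' hyy' a δ := by
    have tendsto_bumpSum (y : ℝ × ℝ) :
        Tendsto (fun n => bumpSum (D n) (σ n) (q n a.1, a.2) δ (q n y)) U
          (𝓝 (bumpSum D' σ' a δ y)) :=
      tendsto_finsetSum _ fun k _ => (hσ y k).mul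
        (tendsto_const_nhds.max (tendsto_const_nhds.sub (hD a (y, k))))
    have tendsto_dist := (hqG' y hy).dist (hqG' y' hy')
    refine le_of_tendsto_of_tendsto ((tendsto_bumpSum y).sub (tendsto_bumpSum y')).abs
      (tendsto_dist.const_mul L) ?_
    filter_upwards [tendsto_dist.eventually_lt_const hyy'] with n hn
    exact (h n).abs_bumpSum_sub_le _ (hq n y) _ (hq n y') hn _ δ

theorem IsLipschitzSheets.exists_ultralimit (hU : (U : Filter ℕ) ≤ atTop)
    (h : ∀ n, IsLipschitzSheets (D n) (σ n) (G n) L) (hG : ∀ n, (G n).Nonempty) :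
    ∃ D' σ', IsLipschitzSheets D' σ' (ultralimitSet U K G) L ∧
      ∃ q : ℕ → ℝ × ℝ → ℝ × ℝ, ∀ a b,
        Tendsto (fun n => D n (q n a.1, a.2) (q n b.1, b.2)) U (𝓝 (D' a b)) := by
  obtain ⟨q, q_mem, tendsto_q⟩ := exists_tendsto_of_mem_ultralimitSet (K := K) hU hG
  choose D' tendsto_D using fun a b : (ℝ × ℝ) × Fin N =>
    exists_tendsto_of_forall_mem (U := U) (isCompact_Icc (a := (0 : ℝ)) (b := 4))
      fun n => ⟨(h n).nonneg (q n a.1, a.2) (q n b.1, b.2),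
        (h n).le_four _ (q_mem n a.1) _ (q_mem n b.1) a.2 b.2⟩
  choose σ' tendsto_σ using fun (y : ℝ × ℝ) (k : Fin N) =>
    exists_tendsto_of_forall_mem (U := U) isCompact_univ fun n => Set.mem_univ (σ n (q n y) k)
  have tendsto_cast (y : ℝ × ℝ) (k : Fin N) :
      Tendsto (fun n => (σ n (q n y) k : ℝ)) U (𝓝 (σ' y k)) :=
    (continuous_of_discreteTopology (f := fun s : SignType => (s : ℝ))).continuousAt.tendsto.comp
      (tendsto_σ y k)
  exact ⟨D', σ', .of_tendsto h q_mem tendsto_q tendsto_cast tendsto_D, q, tendsto_D⟩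

theorem exists_isBilipschitzDist_ultralimit (hU : (U : Filter ℕ) ≤ atTop) {L : ℝ≥0}
    (h : ∀ n, IsLipschitzSheets (D n) (σ n) (G n) L) (hK : IsCompact K) (hG : ∀ n, G n ⊆ K)
    {m : ℝ≥0∞} (hm : m ≠ 0) (hvol : ∀ n, m ≤ volume (G n)) :
    ∃ E ⊆ K, volume E ≠ 0 ∧ ∃ D' : E → E → ℝ, IsBilipschitzDist D' Subtype.val L ∧
      ∃ a : ℕ → E → (ℝ × ℝ) × Fin N, ∀ y y',
        Tendsto (fun n => D n (a n y) (a n y')) U (𝓝 (D' y y')) := by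
  have nonempty (n : ℕ) : (G n).Nonempty :=
    nonempty_of_measure_ne_zero (hm.bot_lt.trans_le (hvol n)).ne'
  obtain ⟨D', σ', sheets, q, tendsto_D⟩ :=
    IsLipschitzSheets.exists_ultralimit (K := K) hU h nonempty
  obtain ⟨E, hE, volume_E, κ, le_mul_dist⟩ := sheets.exists_lipschitz_section L.2
    (hm.bot_lt.trans_le (le_measure_ultralimitSet hK hG hvol)).ne'
  refine ⟨E, fun y hy => (hE hy).1, volume_E, fun y y' => D' (y, κ y) (y', κ y'),
    ⟨fun _ _ => sheets.symm _ _, fun _ _ _ => sheets.triangle _ _ _,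
      fun y y' => sheets.dist_le y (hE y.2) y' (hE y'.2) _ _,
      fun y y' => le_mul_dist y y.2 y' y'.2⟩,
    fun n y => (q n y, κ y), fun y y' => tendsto_D _ _⟩

end Ultralimits

section Hyperbolicity

universe w

variable {X : Type u} [MetricSpace X] {Y : Type v}

lemma IsFatBigon.comp_isometry [PseudoMetricSpace Y] {r : ℝ} {g c : ℝ → X}
    (h : IsFatBigon r g c) {f : X → Y} (hf : Isometry f) : IsFatBigon r (f ∘ g) (f ∘ c) where
  pos := h.pos
  isGeodesicOn s hs t ht := (hf.dist_eq _ _).trans (h.isGeodesicOn s hs t ht)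
  lipschitzOnWith := by
    simpa only [one_mul] using hf.lipschitz.comp_lipschitzOnWith h.lipschitzOnWith
  mapsTo s hs mem := h.mapsTo hs <| by
    simpa only [Metric.mem_ball, Function.comp_apply, hf.dist_eq] using mem
  apply_zero := congrArg f h.apply_zero
  apply_end := congrArg f h.apply_end

lemma exists_isFatBigon (hX : GeodesicSpace X) (hn : ¬GromovHyperbolic X) (R : ℝ) :
    ∃ r, R ≤ r ∧ ∃ g c : ℝ → X, IsFatBigon r g c := by
  obtain ⟨r, le_r, r_pos, g, hg, -, c, lipschitz_c, mapsTo_c, c_zero, c_end⟩ :=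
    exists_geodesic_joinedInLength hX hn R
  exact ⟨r, le_r, g, c, r_pos, hg, lipschitz_c, mapsTo_c, c_zero, c_end⟩

lemma exists_coarse_inverse {α : Type*} [PseudoMetricSpace Y] {f : α → Y}
    (hf : Metric.hausdorffEDist (Set.range f) Set.univ ≠ ⊤) :
    ∃ (π : Y → α) (H : ℝ), ∀ y, dist y (f (π y)) ≤ H := by
  rw [Metric.hausdorffEDist_comm] at hf
  obtain ⟨H, lt_H⟩ := ENNReal.lt_iff_exists_nnreal_btwn.1 hf.lt_top
  have near (y : Y) : ∃ x, dist y (f x) ≤ H := by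
    obtain ⟨_, ⟨x, rfl⟩, hx⟩ := Metric.exists_edist_lt_of_hausdorffEDist_lt (Set.mem_univ y) lt_H.1
    exact ⟨x, (edist_lt_coe.1 hx).le⟩
  choose π hπ using near
  exact ⟨π, H, hπ⟩

lemma abs_dist_sub_dist_coarse_inverse_le [PseudoMetricSpace Y] {f : X → Y} (hf : Isometry f)
    {π : Y → X} {H : ℝ} (hπ : ∀ y, dist y (f (π y)) ≤ H) (y y' : Y) :
    |dist (π y) (π y') - dist y y'| ≤ 2 * H := by
  rw [← hf.dist_eq, ← Real.dist_eq, two_mul]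
  refine (dist_dist_dist_le _ _ _ _).trans (add_le_add ?_ ?_) <;>
  · rw [dist_comm]
    exact hπ _

lemma tendsto_inv_mul_dist_coarse_inverse [PseudoMetricSpace Y] {f : X → Y} (hf : Isometry f)
    {π : Y → X} {H : ℝ} (hπ : ∀ y, dist y (f (π y)) ≤ H) {ι : Type*} {l : Filter ι} {r : ι → ℝ}
    (hr : Tendsto r l atTop) {y y' : ι → Y} {d : ℝ}
    (hd : Tendsto (fun i => dist (y i) (y' i) / r i) l (𝓝 d)) :
    Tendsto (fun i => (r i)⁻¹ * dist (π (y i)) (π (y' i))) l (𝓝 d) := by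
  have error_tendsto : Tendsto
      (fun i => (r i)⁻¹ * (dist (π (y i)) (π (y' i)) - dist (y i) (y' i))) l (𝓝 0) := by
    refine squeeze_zero_norm' ?_ (hr.const_div_atTop (2 * H))
    filter_upwards [hr.eventually_gt_atTop 0] with i r_pos
    rw [norm_mul, norm_inv, Real.norm_of_nonneg r_pos.le, inv_mul_eq_div]
    exact div_le_div_of_nonneg_right (abs_dist_sub_dist_coarse_inverse_le hf hπ _ _) r_pos.le
  have sum_tendsto := hd.add error_tendsto
  rw [add_zero] at sum_tendsto
  exact sum_tendsto.congr fun i => by ring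

lemma isFinitelyAsymptotic_of_tendsto {W ι : Type*} {D : W → W → ℝ} {l : Filter ι} [l.NeBot]
    {r : ι → ℝ} (hr : Tendsto r l atTop) {x : ι → W → X}
    (hx : ∀ w w', Tendsto (fun i => (r i)⁻¹ * dist (x i w) (x i w')) l (𝓝 (D w w'))) :
    IsFinitelyAsymptotic X D := by
  intro F ε ε_pos M
  have eventually_close :
      ∀ᶠ i in l, ∀ w ∈ F, ∀ w' ∈ F, |D w w' - (r i)⁻¹ * dist (x i w) (x i w')| ≤ ε := by
    simp only [Finset.eventually_all]
    intro w _ w' _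
    filter_upwards [Metric.tendsto_nhds.1 (hx w w') ε ε_pos] with i hi
    rw [dist_comm, Real.dist_eq] at hi
    exact hi.le
  obtain ⟨i, close, le_r⟩ := (eventually_close.and (hr.eventually_ge_atTop M)).exists
  exact ⟨r i, le_r, x i, close⟩

theorem exists_isBilipschitzDist_isFinitelyAsymptotic [MetricSpace Y] (hX : GeodesicSpace X)
    (hn : ¬GromovHyperbolic X) {f : X → Y} (hf : Isometry f)
    (hH : Metric.hausdorffEDist (Set.range f) Set.univ ≠ ⊤) (hY : QuadIsopSpace Y) :
    ∃ (W : Type w) (ψ : W → ℝ × ℝ), Function.Injective ψ ∧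
      Bornology.IsBounded (Set.range ψ) ∧ volume (Set.range ψ) ≠ 0 ∧
        ∃ (D : W → W → ℝ) (L : ℝ≥0), IsBilipschitzDist D ψ L ∧ IsFinitelyAsymptotic X D := by
  obtain ⟨C, C_pos, hC⟩ := hY
  obtain ⟨π, H, hπ⟩ := exists_coarse_inverse hH
  choose r le_r g c bigon using fun n : ℕ => exists_isFatBigon hX hn n
  choose G hG volume_G P σ sheets using fun n =>
    ((bigon n).comp_isometry hf).exists_isLipschitzSheets hC C_pos (Nat.le_ceil _)
  let L : ℝ≥0 := ⟨20 * mollifierBound * (25600 * fillingConst C), by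
    have := mollifierBound_nonneg
    have := fillingConst_ge_one C_pos
    positivity⟩
  obtain ⟨E, hE, volume_E, D, isBilipschitz, a, tendsto_D⟩ := exists_isBilipschitzDist_ultralimit
    Nat.hyperfilter_le_atTop (L := L) sheets (isCompact_closedBall _ _) hG (by simp) volume_G
  have tendsto_r : Tendsto r (hyperfilter ℕ) atTop :=
    tendsto_atTop_mono le_r (tendsto_natCast_atTop_atTop.mono_left Nat.hyperfilter_le_atTop)
  let ψ : ULift.{w} E → ℝ × ℝ := Subtype.val ∘ ULift.down
  have range_ψ : Set.range ψ = E := by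
    rw [ULift.down_surjective.range_comp, Subtype.range_val]
  refine ⟨ULift E, ψ, Subtype.val_injective.comp ULift.down_injective,
    range_ψ.symm ▸ Metric.isBounded_closedBall.subset hE, range_ψ.symm ▸ volume_E,
    fun w w' => D w.down w'.down, L, isBilipschitz.comp ULift.down, ?_⟩
  exact isFinitelyAsymptotic_of_tendsto tendsto_r (x := fun n w => π (P n (a n w.down)))
    fun w w' => tendsto_inv_mul_dist_coarse_inverse hf hπ tendsto_r (tendsto_D w.down w'.down)

theorem tree_bilip_general [MetricSpace Y] (hX : GeodesicSpace X) {f : X → Y} (hf : Isometry f)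
    (hH : Metric.hausdorffEDist (Set.range f) Set.univ ≠ ⊤) (hY : QuadIsopSpace Y)
    (h : ∀ (Z : Type w) (mZ : MetricSpace Z),
      letI := mZ
      IsAsymptoticSubset X Z →
        ∀ K : Set (ℝ × ℝ), IsCompact K →
          ∀ (φ : ℝ × ℝ → Z) (L : ℝ≥0), LipschitzOnWith L φ K →
            letI : MeasurableSpace Z := borel Z
            letI : BorelSpace Z := ⟨rfl⟩
            μH[2] (φ '' K) = 0) :
    GromovHyperbolic X := by
  by_contra hn
  obtain ⟨W, ψ, injective, isBounded, volume_ne_zero, D, L, isBilipschitz, asymptotic⟩ :=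
    exists_isBilipschitzDist_isFinitelyAsymptotic hX hn hf hH hY
  obtain ⟨Z, mZ, asymptotic_Z, S, φ, isCompact_S, lipschitz_φ, pos⟩ :=
    exists_isAsymptoticSubset_hausdorffMeasure_ne_zero isBilipschitz injective isBounded
      volume_ne_zero asymptotic
  exact pos (h Z mZ asymptotic_Z S isCompact_S φ L lipschitz_φ)

end Hyperbolicity

/-- Proposition 4.1: let `X` be a geodesic metric space admitting a
disc-thickening with a quadratic isoperimetric inequality.  If `H²(φ(K)) = 0` for
every Lipschitz map `φ : K → Z` with `K ⊂ ℝ²` compact and `Z` an asymptotic subset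
of `X`, then `X` is Gromov hyperbolic. -/
theorem tree_bilip {X : Type u} [MetricSpace X] (hX : GeodesicSpace X)
    (hadm : HasDiscThickeningQII X)
    (h : ∀ (Z : Type u) (mZ : MetricSpace Z),
      letI := mZ
      IsAsymptoticSubset X Z →
        ∀ K : Set (ℝ × ℝ), IsCompact K →
          ∀ (φ : ℝ × ℝ → Z) (L : ℝ≥0), LipschitzOnWith L φ K →
            letI : MeasurableSpace Z := borel Z
            letI : BorelSpace Z := ⟨rfl⟩
            μH[2] (φ '' K) = 0) :
    GromovHyperbolic X := by
  obtain ⟨X', _, f, -, hf, hH, hX'⟩ := hadm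
  exact tree_bilip_general hX hf hH hX' h

end SharpIsop
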